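/- Let θ ∈ [π/3, π/2] be a fixed angle. Then the maximal sphere packing densities satisfy δ_n ≤ (1+o(1))·e^{−1}·δ_n^{KL}(θ) as n → ∞; equivalently, limsup_{n→∞} δ_n / δ_n^{KL}(θ) ≤ 1/e. -/

import Mathlib

open MeasureTheory Filter Real

noncomputable section

/-- Generalized binomial coefficient `C(a, k)` for real `a`. -/
def genBinom (a : ℝ) (k : ℕ) : ℝ := (∏ i ∈ Finset.range k, (a - i)) / (Nat.factorial k : ℝ)

/-- The Jacobi polynomial `p_d^{α,β}`, via the standard explicit formula; it is the degree-`d`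
polynomial orthogonal to lower degrees for the weight `(1-t)^α (1+t)^β` on `[-1,1]`,
normalized by `p_d^{α,β}(1) = Γ(d+α+1)/(Γ(α+1)Γ(d+1))`. -/
def jacobiP (α β : ℝ) (d : ℕ) (x : ℝ) : ℝ :=
  ∑ s ∈ Finset.range (d + 1),
    genBinom ((d : ℝ) + α) (d - s) * genBinom ((d : ℝ) + β) s *
      ((x - 1) / 2) ^ s * ((x + 1) / 2) ^ (d - s)

/-- The largest root `t_{1,d}^{α,β}` of the Jacobi polynomial `p_d^{α,β}`. -/
def maxRoot (α β : ℝ) (d : ℕ) : ℝ := sSup {x : ℝ | jacobiP α β d x = 0}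

/-- The degree `d = d(n, θ')` determined by `t_{1,d-1}^{α+1,α+1} < cos θ' ≤ t_{1,d}^{α+1,α+1}`,
where `α = (n-3)/2`. -/
def levD (n : ℕ) (θ' : ℝ) : ℕ :=
  sInf {d : ℕ | 1 ≤ d ∧
    Real.cos θ' ≤ maxRoot (((n : ℝ) - 3) / 2 + 1) (((n : ℝ) - 3) / 2 + 1) d}

/-- Levenshtein's bound `M_Lev(n, θ')` on the size of `θ'`-spherical codes in `S^{n-1}`. -/
def MLev (n : ℕ) (θ' : ℝ) : ℝ :=
  if maxRoot (((n : ℝ) - 3) / 2 + 1) (((n : ℝ) - 3) / 2) (levD n θ') < Real.cos θ' then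
    2 * (Nat.choose (levD n θ' + n - 1) (n - 1) : ℝ)
  else
    (Nat.choose (levD n θ' + n - 1) (n - 1) : ℝ) + (Nat.choose (levD n θ' + n - 2) (n - 1) : ℝ)

/-- The Kabatyanskii–Levenshtein upper bound `δ_n^{KL}(θ) = sin^n(θ/2) · M_Lev(n, θ)`. -/
def deltaKL (n : ℕ) (θ : ℝ) : ℝ := Real.sin (θ / 2) ^ n * MLev n θ

/-- The density of the packing of unit balls centered at the points of `S`. -/
def packingDensity (n : ℕ) (S : Set (EuclideanSpace ℝ (Fin n))) : ℝ :=
  limsup (fun r : ℝ =>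
    (volume ((⋃ x ∈ S, Metric.ball x 1) ∩ Metric.ball 0 r)).toReal /
      (volume (Metric.ball (0 : EuclideanSpace ℝ (Fin n)) r)).toReal) atTop

/-- The maximal sphere packing density `δ_n` in `ℝ^n`. -/
def spherePackingConst (n : ℕ) : ℝ :=
  sSup {δ : ℝ | ∃ S : Set (EuclideanSpace ℝ (Fin n)),
    S.Pairwise (fun x y => 2 ≤ dist x y) ∧ δ = packingDensity n S}

namespace SPB
section Algebra
open Polynomial

/-- recurrence coefficient of the monic Gegenbauer polynomials of the sphere -/
def gam (n k : ℕ) : ℝ := ((k : ℝ) * (k + n - 3)) / ((2 * k + n - 2) * (2 * k + n - 4))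

/-- monic Gegenbauer polynomials -/
def pm (n : ℕ) : ℕ → ℝ[X]
  | 0 => 1
  | 1 => X
  | (k + 2) => X * pm n (k + 1) - C (gam n (k + 1)) * pm n k

/-- Gegenbauer polynomials with parameter `n/2` -/
def Hp (n : ℕ) : ℕ → ℝ[X]
  | 0 => 1
  | 1 => C (n : ℝ) * X
  | (k + 2) => C ((2 * k + 2 + n) / (k + 2) : ℝ) * (X * Hp n (k + 1)) -
      C ((k + n) / (k + 2) : ℝ) * Hp n k

lemma gam_zero (n : ℕ) : gam n 0 = 0 := by simp [gam]

lemma pm_succ (n k : ℕ) : X * pm n (k + 1) = pm n (k + 2) + C (gam n (k + 1)) * pm n k := by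
  rw [pm]; ring

lemma pm_monic (n : ℕ) : ∀ k, (pm n k).Monic ∧ (pm n k).natDegree = k := by
  intro k
  induction k using Nat.strong_induction_on with
  | _ k ih =>
    match k, ih with
    | 0, _ => simp [pm]
    | 1, _ => simp [pm, monic_X]
    | (k + 2), ih =>
      obtain ⟨h1, h1'⟩ := ih (k + 1) (by omega)
      obtain ⟨h0, h0'⟩ := ih k (by omega)
      have hm : (X * pm n (k + 1)).Monic := monic_X.mul h1
      have hd : (X * pm n (k + 1)).natDegree = k + 2 := by
        rw [monic_X.natDegree_mul h1, h1']; simp; omega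
      have hlt' : (C (gam n (k + 1)) * pm n k).natDegree < k + 2 := by
        have := natDegree_C_mul_le (gam n (k + 1)) (pm n k)
        omega
      have hlt : (C (gam n (k + 1)) * pm n k).degree < (X * pm n (k + 1)).degree := by
        rw [degree_eq_natDegree hm.ne_zero, hd]
        refine lt_of_le_of_lt (degree_le_natDegree) ?_
        exact_mod_cast hlt'
      rw [pm]
      exact ⟨hm.sub_of_left hlt, by
        rw [natDegree_sub_eq_left_of_natDegree_lt, hd]
        rw [hd]; exact hlt'⟩

def pmSeq (n : ℕ) : Polynomial.Sequence ℝ where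
  elems' := pm n
  degree_eq' k := by
    rw [degree_eq_natDegree (pm_monic n k).1.ne_zero, (pm_monic n k).2]

/-- the basis of monic Gegenbauer polynomials -/
def pmBasis (n : ℕ) : Module.Basis ℕ ℝ ℝ[X] :=
  (pmSeq n).basis (fun i => by
    have : (pmSeq n i).leadingCoeff = 1 := (pm_monic n i).1
    rw [this]; exact isUnit_one)

lemma pmBasis_apply (n k : ℕ) : pmBasis n k = pm n k := by
  unfold pmBasis
  rw [Polynomial.Sequence.basis_eq_self]; rfl

/-- Gegenbauer coefficients -/
def co (n : ℕ) (k : ℕ) : ℝ[X] →ₗ[ℝ] ℝ := (pmBasis n).coord k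

lemma co_pm (n j k : ℕ) : co n k (pm n j) = if j = k then 1 else 0 := by
  unfold co
  rw [← pmBasis_apply, Module.Basis.coord_apply, Module.Basis.repr_self, Finsupp.single_apply]

lemma co_C_mul (n k : ℕ) (a : ℝ) (f : ℝ[X]) : co n k (C a * f) = a * co n k f := by
  rw [← smul_eq_C_mul, map_smul, smul_eq_mul]

/-- The cone of polynomials with nonnegative Gegenbauer coefficients. -/
def Cone (n : ℕ) (f : ℝ[X]) : Prop := ∀ k, 0 ≤ co n k f

lemma Cone.add {n : ℕ} {f g : ℝ[X]} (hf : Cone n f) (hg : Cone n g) : Cone n (f + g) := by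
  intro k; rw [map_add]; exact add_nonneg (hf k) (hg k)

lemma Cone.cmul {n : ℕ} {f : ℝ[X]} {a : ℝ} (ha : 0 ≤ a) (hf : Cone n f) : Cone n (C a * f) := by
  intro k; rw [co_C_mul]; exact mul_nonneg ha (hf k)

lemma cone_pm (n k : ℕ) : Cone n (pm n k) := by
  intro j; rw [co_pm]; split_ifs <;> norm_num

lemma cone_zero (n : ℕ) : Cone n 0 := by intro j; simp

lemma cone_sum {n : ℕ} {ι : Type*} (s : Finset ι) (f : ι → ℝ[X]) (h : ∀ i ∈ s, Cone n (f i)) :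
    Cone n (∑ i ∈ s, f i) := by
  intro k; rw [map_sum]; exact Finset.sum_nonneg (fun i hi => h i hi k)

lemma gam_nonneg {n : ℕ} (hn : 5 ≤ n) (k : ℕ) : 0 ≤ gam n k := by
  have : (5 : ℝ) ≤ n := by exact_mod_cast hn
  have hk : (0 : ℝ) ≤ k := Nat.cast_nonneg k
  unfold gam
  apply div_nonneg
  · apply mul_nonneg hk; linarith
  · apply mul_nonneg <;> linarith

lemma gam_mono {n : ℕ} (hn : 5 ≤ n) {j k : ℕ} (h : j ≤ k) : gam n j ≤ gam n k := by
  have hn' : (5 : ℝ) ≤ n := by exact_mod_cast hn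
  have key : ∀ k : ℕ, gam n k = (1 - ((n : ℝ) - 2) * (n - 4) / ((2 * k + n - 2) * (2 * k + n - 4))) / 4 := by
    intro k
    have hk : (0 : ℝ) ≤ k := Nat.cast_nonneg k
    have h1 : (2 * k + n - 2 : ℝ) ≠ 0 := by linarith
    have h2 : (2 * k + n - 4 : ℝ) ≠ 0 := by linarith
    unfold gam
    have h3 : ((2 * k + n - 2) * (2 * k + n - 4) : ℝ) ≠ 0 := mul_ne_zero h1 h2
    rw [div_eq_iff h3, div_mul_eq_mul_div, eq_div_iff (by norm_num), sub_mul, div_mul_cancel₀ _ h3]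
    ring
  rw [key, key]
  have hj : (0 : ℝ) ≤ j := Nat.cast_nonneg j
  have hjk : (j : ℝ) ≤ k := by exact_mod_cast h
  have : ((n : ℝ) - 2) * (n - 4) / ((2 * k + n - 2) * (2 * k + n - 4)) ≤
      ((n : ℝ) - 2) * (n - 4) / ((2 * j + n - 2) * (2 * j + n - 4)) := by
    apply div_le_div_of_nonneg_left
    · apply mul_nonneg <;> linarith
    · apply mul_pos <;> linarith
    · apply mul_le_mul <;> linarith
  linarith

lemma cone_lin {n : ℕ} (hn : 5 ≤ n) : ∀ j k, j ≤ k → Cone n (pm n j * pm n k) ∧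
    Cone n (pm n (j + 1) * pm n k - pm n j * pm n (k + 1)) := by
  intro j
  induction j with
  | zero =>
    intro k _
    refine ⟨by simpa [pm] using cone_pm n k, ?_⟩
    match k with
    | 0 => simpa [pm] using cone_zero n
    | k + 1 =>
      have : pm n (0 + 1) * pm n (k + 1) - pm n 0 * pm n (k + 1 + 1) =
          C (gam n (k + 1)) * pm n k := by
        simp only [pm]; ring
      rw [this]
      exact (cone_pm n k).cmul (gam_nonneg hn _)
  | succ j ih =>
    have hA : ∀ k, j + 1 ≤ k → Cone n (pm n (j + 1) * pm n k) := by
      intro k hk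
      have h1 := (ih k (by omega)).2.add (ih (k + 1) (by omega)).1
      simpa using h1
    intro k hk
    refine ⟨hA k hk, ?_⟩
    obtain ⟨k, rfl⟩ : ∃ k', k = k' + 1 := ⟨k - 1, by omega⟩
    have e : pm n (j + 1 + 1) * pm n (k + 1) - pm n (j + 1) * pm n (k + 1 + 1) =
        C (gam n (k + 1) - gam n (j + 1)) * (pm n (j + 1) * pm n k) +
        C (gam n (j + 1)) * (pm n (j + 1) * pm n k - pm n j * pm n (k + 1)) := by
      rw [pm, pm, C_sub]; ring
    rw [e]
    refine Cone.add (Cone.cmul (sub_nonneg.2 (gam_mono hn hk)) ?_)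
      (Cone.cmul (gam_nonneg hn _) (ih k (by omega)).2)
    rcases Nat.lt_or_ge j k with h | h
    · exact hA k h
    · have : k = j := by omega
      subst this
      rw [mul_comm]; exact (ih (k + 1) (by omega)).1

lemma expand (n : ℕ) (f : ℝ[X]) : ∃ s : Finset ℕ, f = ∑ k ∈ s, C (co n k f) * pm n k := by
  refine ⟨((pmBasis n).repr f).support, ?_⟩
  conv_lhs => rw [← (pmBasis n).linearCombination_repr f]
  rw [Finsupp.linearCombination_apply, Finsupp.sum]
  refine Finset.sum_congr rfl (fun k _ => ?_)
  rw [pmBasis_apply, smul_eq_C_mul]; rfl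

lemma Cone.mul {n : ℕ} (hn : 5 ≤ n) {f g : ℝ[X]} (hf : Cone n f) (hg : Cone n g) :
    Cone n (f * g) := by
  obtain ⟨s, hs⟩ := expand n f
  obtain ⟨t, ht⟩ := expand n g
  rw [hs, ht, Finset.sum_mul_sum]
  refine cone_sum _ _ (fun i _ => cone_sum _ _ (fun j _ => ?_))
  have : C (co n i f) * pm n i * (C (co n j g) * pm n j) =
      C (co n i f * co n j g) * (pm n i * pm n j) := by rw [C_mul]; ring
  rw [this]
  refine Cone.cmul (mul_nonneg (hf i) (hg j)) ?_
  rcases le_total i j with h | h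
  · exact (cone_lin hn i j h).1
  · rw [mul_comm]; exact (cone_lin hn j i h).1

/-- orthogonality -/
lemma co_pm_X_pow (n : ℕ) : ∀ m k, m < k → co n 0 (pm n k * X ^ m) = 0 := by
  intro m
  induction m with
  | zero => intro k hk; simp only [pow_zero, mul_one, co_pm]; rw [if_neg (by omega)]
  | succ m ih =>
    intro k hk
    obtain ⟨k, rfl⟩ : ∃ k', k = k' + 1 := ⟨k - 1, by omega⟩
    have : pm n (k + 1) * X ^ (m + 1) = pm n (k + 2) * X ^ m +
        C (gam n (k + 1)) * (pm n k * X ^ m) := by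
      have := pm_succ n k
      linear_combination (X ^ m) * this
    rw [this, map_add, co_C_mul, ih _ (by omega), ih _ (by omega)]; simp

lemma co_pm_mul_lt (n k : ℕ) (g : ℝ[X]) (hg : g.natDegree < k) : co n 0 (pm n k * g) = 0 := by
  rw [g.as_sum_range' k hg, Finset.mul_sum, map_sum]
  refine Finset.sum_eq_zero (fun i hi => ?_)
  rw [← C_mul_X_pow_eq_monomial, mul_left_comm, co_C_mul, co_pm_X_pow n i k (Finset.mem_range.1 hi),
    mul_zero]

lemma co_pm_sq (n k : ℕ) : co n 0 (pm n (k + 1) * pm n (k + 1)) =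
    gam n (k + 1) * co n 0 (pm n k * pm n k) := by
  have h1 : co n 0 (pm n (k + 1) * (X * pm n k)) = co n 0 (pm n (k + 1) * pm n (k + 1)) := by
    match k with
    | 0 => simp [pm]
    | k + 1 =>
      rw [pm_succ n k, mul_add, map_add, mul_left_comm (pm n (k + 1 + 1)) (C _), co_C_mul,
        co_pm_mul_lt n (k + 2) (pm n k) (by rw [(pm_monic n k).2]; omega)]
      simp
  rw [← h1]
  have : pm n (k + 1) * (X * pm n k) = pm n (k + 2) * pm n k +
      C (gam n (k + 1)) * (pm n k * pm n k) := by
    have := pm_succ n k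
    linear_combination (pm n k) * this
  rw [this, map_add, co_C_mul, co_pm_mul_lt n (k + 2) (pm n k) (by rw [(pm_monic n k).2]; omega),
    zero_add]

lemma Hp_rec (n k : ℕ) (t : ℝ) : ((k : ℝ) + 2) * (Hp n (k + 2)).eval t =
    (2 * k + 2 + n) * (t * (Hp n (k + 1)).eval t) - (k + n) * (Hp n k).eval t := by
  have hk : (k : ℝ) + 2 ≠ 0 := by positivity
  rw [Hp]
  simp only [eval_sub, eval_mul, eval_C, eval_X]
  field_simp

/-- leading coefficients of zonal polynomials -/
def zet (n : ℕ) : ℕ → ℝ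
  | 0 => 1
  | (k + 1) => zet n k * ((2 * k + n) / (k + 1))

lemma zet_pos {n : ℕ} (hn : 5 ≤ n) (k : ℕ) : 0 < zet n k := by
  have hn' : (5 : ℝ) ≤ n := by exact_mod_cast hn
  induction k with
  | zero => simp [zet]
  | succ k ih => rw [zet]; positivity

/-- partial sums of the zonal polynomials -/
def Qp (n : ℕ) : ℕ → ℝ[X]
  | 0 => Hp n 0
  | (k + 1) => Hp n (k + 1) + Hp n k

lemma zonal {n : ℕ} (hn : 5 ≤ n) : ∀ k, (Hp n (k + 2) - Hp n k = C (zet n (k + 2)) * pm n (k + 2)) ∧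
    (Hp n (k + 3) - Hp n (k + 1) = C (zet n (k + 3)) * pm n (k + 3)) := by
  have hn' : (5 : ℝ) ≤ n := by exact_mod_cast hn
  have h2 : Hp n 2 - Hp n 0 = C (zet n 2) * pm n 2 := by
    refine Polynomial.funext (fun t => ?_)
    have h1 : (n : ℝ) - 2 ≠ 0 := by linarith
    simp [Hp, pm, zet, gam]
    have h3 : (2 + (n : ℝ) - 2) ≠ 0 := by linarith
    have h4 : (2 + (n : ℝ) - 4) ≠ 0 := by linarith
    field_simp
    ring
  have h3 : Hp n 3 - Hp n 1 = C (zet n 3) * pm n 3 := by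
    refine Polynomial.funext (fun t => ?_)
    have h1 : (n : ℝ) - 2 ≠ 0 := by linarith
    have h0 : (n : ℝ) ≠ 0 := by linarith
    have h2 : (n : ℝ) + 2 ≠ 0 := by linarith
    have g1 : gam n 1 = 1 / n := by
      unfold gam; push_cast
      rw [show (2 * 1 + n - 2 : ℝ) = n by ring, show (2 * 1 + n - 4 : ℝ) = n - 2 by ring,
        show (1 + n - 3 : ℝ) = n - 2 by ring]
      field_simp
    have g2 : gam n 2 = 2 * (n - 1) / ((n + 2) * n) := by
      unfold gam; push_cast
      rw [show (2 * 2 + n - 2 : ℝ) = n + 2 by ring, show (2 * 2 + n - 4 : ℝ) = n by ring,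
        show (2 + n - 3 : ℝ) = n - 1 by ring]
    simp [Hp, pm, zet, g1, g2]
    field_simp
    ring
  intro k
  induction k with
  | zero => exact ⟨h2, h3⟩
  | succ k ih =>
    refine ⟨ih.2, ?_⟩
    refine Polynomial.funext (fun t => ?_)
    obtain ⟨i1, i2⟩ := ih
    have e1 := congrArg (eval t) i1
    have e2 := congrArg (eval t) i2
    have r1 := Hp_rec n k t
    have r2 := Hp_rec n (k + 2) t
    have hp : pm n (k + 4) = X * pm n (k + 3) - C (gam n (k + 3)) * pm n (k + 2) := by rw [pm]
    have hz3 : zet n (k + 3) = zet n (k + 2) * ((2 * (k + 2 : ℕ) + n) / ((k + 2 : ℕ) + 1)) := by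
      rw [zet]
    have hz4 : zet n (k + 4) = zet n (k + 3) * ((2 * (k + 3 : ℕ) + n) / ((k + 3 : ℕ) + 1)) := by
      rw [zet]
    have hg : gam n (k + 3) = (((k + 3 : ℕ) : ℝ) * ((k + 3 : ℕ) + n - 3)) /
      ((2 * (k + 3 : ℕ) + n - 2) * (2 * (k + 3 : ℕ) + n - 4)) := rfl
    show eval t (Hp n (k + 4) - Hp n (k + 2)) = eval t (C (zet n (k + 4)) * pm n (k + 4))
    rw [hp]
    simp only [eval_sub, eval_mul, eval_C, eval_X] at e1 e2 ⊢
    push_cast at *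
    have hk : (0 : ℝ) ≤ k := Nat.cast_nonneg k
    have a1 : (k : ℝ) + 2 + 1 ≠ 0 := by positivity
    have a2 : (k : ℝ) + 3 + 1 ≠ 0 := by positivity
    have a3 : 2 * ((k : ℝ) + 3) + n - 2 ≠ 0 := by linarith
    have a4 : 2 * ((k : ℝ) + 3) + n - 4 ≠ 0 := by linarith
    have a5 : 2 * (k : ℝ) + 2 + n ≠ 0 := by linarith
    have a6 : (k : ℝ) + 4 ≠ 0 := by positivity
    have a7 : 2 * ((k : ℝ) + 2) + n ≠ 0 := by linarith
    -- express everything through Hp values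
    have hg' : zet n (k + 4) * (gam n (k + 3) * eval t (pm n (k + 2))) =
        (2 * ((k : ℝ) + 3) + n) / (k + 3 + 1) * ((k + n) / (2 * k + 2 + n)) *
          (zet n (k + 2) * eval t (pm n (k + 2))) := by
      rw [hz4, hz3, hg]
      field_simp
      ring
    have main : eval t (Hp n (k + 4)) - eval t (Hp n (k + 2)) =
        (2 * ((k : ℝ) + 3) + n) / (k + 3 + 1) * (t * (eval t (Hp n (k + 3)) - eval t (Hp n (k + 1)))) -
        (2 * ((k : ℝ) + 3) + n) / (k + 3 + 1) * ((k + n) / (2 * k + 2 + n)) *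
          (eval t (Hp n (k + 2)) - eval t (Hp n k)) := by
      have hX : t * eval t (Hp n (k + 1)) = ((k + 2) * eval t (Hp n (k + 2)) + (k + n) * eval t (Hp n k)) / (2 * k + 2 + n) := by
        rw [eq_div_iff a5]; linear_combination -r1
      have hY : eval t (Hp n (k + 4)) = ((2 * (k + 2) + 2 + n) * (t * eval t (Hp n (k + 3))) - (k + 2 + n) * eval t (Hp n (k + 2))) / (k + 2 + 2) := by
        rw [eq_div_iff (by positivity)]; linear_combination r2
      rw [hY, mul_sub, hX]
      field_simp
      ring
    rw [main, e1, e2, mul_sub, hg', hz4]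
    ring

end Algebra
end SPB

namespace SPB
section Algebra2
open Polynomial

lemma zet_one (n : ℕ) : zet n 1 = n := by simp [zet]

lemma Hp_step {n : ℕ} (hn : 5 ≤ n) (k : ℕ) : Hp n (k + 2) = Hp n k + C (zet n (k + 2)) * pm n (k + 2) := by
  rw [← (zonal hn k).1]; ring

lemma cone_Hp {n : ℕ} (hn : 5 ≤ n) : ∀ k, Cone n (Hp n k)
  | 0 => by simpa [Hp, pm] using cone_pm n 0
  | 1 => by
    have := (cone_pm n 1).cmul (Nat.cast_nonneg n : (0 : ℝ) ≤ n)
    simpa [Hp, pm] using this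
  | (k + 2) => by
    rw [Hp_step hn]
    exact (cone_Hp hn k).add ((cone_pm n _).cmul (zet_pos hn _).le)

lemma Hp_natDegree {n : ℕ} (hn : 5 ≤ n) : ∀ k, (Hp n k).natDegree ≤ k
  | 0 => by simp [Hp]
  | 1 => by
    have := natDegree_C_mul_le (n : ℝ) (X : ℝ[X])
    rw [Hp]; refine this.trans (by simp)
  | (k + 2) => by
    rw [Hp_step hn]
    have h1 := Hp_natDegree hn k
    have h2 := natDegree_C_mul_le (zet n (k + 2)) (pm n (k + 2))
    rw [(pm_monic n _).2] at h2
    exact natDegree_add_le_of_degree_le (by omega) h2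

lemma Qp_step {n : ℕ} (hn : 5 ≤ n) (k : ℕ) : Qp n (k + 1) = Qp n k + C (zet n (k + 1)) * pm n (k + 1) := by
  match k with
  | 0 => simp only [Qp, zero_add, zet_one, Hp, pm]; ring
  | k + 1 => simp only [Qp]; rw [Hp_step hn]; ring

lemma cone_Qp {n : ℕ} (hn : 5 ≤ n) : ∀ k, Cone n (Qp n k)
  | 0 => by rw [Qp]; exact cone_Hp hn 0
  | (k + 1) => by rw [Qp]; exact (cone_Hp hn _).add (cone_Hp hn _)

lemma Qp_natDegree {n : ℕ} (hn : 5 ≤ n) (k : ℕ) : (Qp n k).natDegree ≤ k := by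
  match k with
  | 0 => exact Hp_natDegree hn 0
  | k + 1 =>
    rw [Qp]
    exact natDegree_add_le_of_degree_le (Hp_natDegree hn _) ((Hp_natDegree hn _).trans (by omega))

lemma pm_one {n : ℕ} (hn : 5 ≤ n) : ∀ k, (pm n (k + 1)).eval 1 = (pm n k).eval 1 * ((k + n - 2) / (2 * k + n - 2)) := by
  have hn' : (5 : ℝ) ≤ n := by exact_mod_cast hn
  intro k
  induction k with
  | zero =>
    have : (n : ℝ) - 2 ≠ 0 := by linarith
    simp [pm, this]
  | succ k ih =>
    have hk : (0 : ℝ) ≤ k := Nat.cast_nonneg k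
    rw [pm]
    simp only [eval_sub, eval_mul, eval_C, eval_X, one_mul]
    have a1 : (k + n - 2 : ℝ) ≠ 0 := by linarith
    have a2 : (2 * k + n - 2 : ℝ) ≠ 0 := by linarith
    unfold gam
    push_cast
    rw [show (k + 1 + n - 3 : ℝ) = k + n - 2 by ring, show (2 * (k + 1) + n - 4 : ℝ) = 2 * k + n - 2 by ring,
      show (2 * ((k : ℝ) + 1) + n - 2) = 2 * k + n by ring,
      show (k + 1 + n - 2 : ℝ) = k + n - 1 by ring]
    have a3 : (2 * k + n : ℝ) ≠ 0 := by linarith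
    have e1 : (k + 1 : ℝ) * (k + n - 2) / ((2 * k + n) * (2 * k + n - 2)) * (pm n k).eval 1 =
        (k + 1) / (2 * k + n) * ((pm n k).eval 1 * ((k + n - 2) / (2 * k + n - 2))) := by
      rw [mul_div_mul_comm]; ring
    rw [e1, ← ih]
    field_simp
    ring

lemma zet_norm {n : ℕ} (hn : 5 ≤ n) : ∀ k, zet n k * co n 0 (pm n k * pm n k) = (pm n k).eval 1 := by
  have hn' : (5 : ℝ) ≤ n := by exact_mod_cast hn
  intro k
  induction k with
  | zero =>
    have := co_pm n 0 0
    simp only [pm] at this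
    simp [zet, pm, this]
  | succ k ih =>
    rw [co_pm_sq, pm_one hn, ← ih, zet]
    have hk : (0 : ℝ) ≤ k := Nat.cast_nonneg k
    unfold gam
    push_cast
    rw [show (k + 1 + n - 3 : ℝ) = k + n - 2 by ring, show (2 * (k + 1) + n - 4 : ℝ) = 2 * k + n - 2 by ring,
      show (2 * ((k : ℝ) + 1) + n - 2) = 2 * k + n by ring]
    have a2 : (2 * k + n - 2 : ℝ) ≠ 0 := by linarith
    have a3 : (2 * k + n : ℝ) ≠ 0 := by linarith
    have a4 : (k + 1 : ℝ) ≠ 0 := by linarith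
    field_simp

lemma repro {n : ℕ} (hn : 5 ≤ n) : ∀ (d : ℕ) (g : ℝ[X]), g.natDegree ≤ d →
    co n 0 (Qp n d * g) = g.eval 1 := by
  intro d
  induction d with
  | zero =>
    intro g hg
    rw [eq_C_of_natDegree_le_zero hg]
    have := co_pm n 0 0
    simp only [pm] at this
    rw [mul_comm, co_C_mul, Qp, Hp, this]; simp
  | succ d ih =>
    intro g hg
    set a := g.coeff (d + 1) with ha
    obtain ⟨g', hg'⟩ : ∃ g', g' = g - C a * pm n (d + 1) := ⟨_, rfl⟩
    have hgg : g = g' + C a * pm n (d + 1) := by rw [hg']; ring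
    have hd : g'.natDegree ≤ d := by
      rw [natDegree_le_iff_coeff_eq_zero]
      intro N hN
      rw [hg', coeff_sub, coeff_C_mul]
      rcases Nat.lt_or_ge (d + 1) N with h | h
      · rw [coeff_eq_zero_of_natDegree_lt (by omega), coeff_eq_zero_of_natDegree_lt
          (by rw [(pm_monic n _).2]; omega)]; simp
      · have : N = d + 1 := by omega
        have h1 : (pm n (d + 1)).coeff (d + 1) = 1 := by
          have := (pm_monic n (d + 1)).1.coeff_natDegree
          rwa [(pm_monic n (d + 1)).2] at this
        rw [this, h1, ha]; simp
    have e : Qp n (d + 1) * g = Qp n d * g' + C a * (pm n (d + 1) * Qp n d) +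
        C (zet n (d + 1)) * (pm n (d + 1) * g') +
        C a * (C (zet n (d + 1)) * (pm n (d + 1) * pm n (d + 1))) := by
      rw [Qp_step hn, hgg]; ring
    have hlt := co_pm_mul_lt n (d + 1) (Qp n d) (by have := Qp_natDegree hn d; omega)
    have hlt' := co_pm_mul_lt n (d + 1) g' (by omega)
    rw [e]
    simp only [map_add, co_C_mul]
    rw [ih g' hd, hlt, hlt', zet_norm hn, hgg]
    simp

lemma one_add_X_Hp {n : ℕ} (hn : 5 ≤ n) (d : ℕ) : (1 + X) * Hp n (d + 1) =
    C ((d + 2 : ℝ) / (2 * d + 2 + n)) * Qp n (d + 2) + C ((d + n : ℝ) / (2 * d + 2 + n)) * Qp n (d + 1) := by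
  refine Polynomial.funext (fun t => ?_)
  have r := Hp_rec n d t
  simp only [Qp, eval_mul, eval_add, eval_C, eval_X, eval_one]
  rw [show d + 1 + 1 = d + 2 from rfl]
  have : (2 * d + 2 + n : ℝ) ≠ 0 := by positivity
  field_simp
  linear_combination -r

lemma cd {n : ℕ} (hn : 5 ≤ n) (s : ℝ) : ∀ d : ℕ, (∀ k ≤ d, 0 < (Hp n k).eval s) →
    ∃ K : ℝ[X], Cone n K ∧ K.natDegree ≤ d ∧ 0 < K.eval s ∧
    (X - C s) * K = C ((Hp n d).eval s) * Hp n (d + 1) - C ((Hp n (d + 1)).eval s) * Hp n d := by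
  have hn' : (5 : ℝ) ≤ n := by exact_mod_cast hn
  intro d
  induction d with
  | zero =>
    intro _
    refine ⟨C n, ?_, by simp, by simp; omega, ?_⟩
    · have := (cone_pm n 0).cmul (Nat.cast_nonneg n : (0 : ℝ) ≤ n)
      simpa [pm] using this
    · simp only [Hp, eval_mul, eval_one, eval_C, eval_X, C_mul, zero_add]
      simp; ring
  | succ d ih =>
    intro hs
    obtain ⟨K, h1, h2, h3, h4⟩ := ih (fun k hk => hs k (by omega))
    have hp := hs (d + 1) le_rfl
    refine ⟨C ((2 * d + 2 + n : ℝ) / (d + 2) * (Hp n (d + 1)).eval s) * Hp n (d + 1) +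
      C ((d + n : ℝ) / (d + 2)) * K, ?_, ?_, ?_, ?_⟩
    · exact ((cone_Hp hn _).cmul (by positivity)).add (h1.cmul (by positivity))
    · refine natDegree_add_le_of_degree_le ((natDegree_C_mul_le _ _).trans (Hp_natDegree hn _))
        ((natDegree_C_mul_le _ _).trans (by omega))
    · simp only [eval_add, eval_mul, eval_C]
      have : (0 : ℝ) < (d + n) / (d + 2) := by positivity
      positivity
    · refine Polynomial.funext (fun t => ?_)
      have e4 := congrArg (eval t) h4
      have r1 := Hp_rec n d t
      have r2 := Hp_rec n d s
      simp only [eval_add, eval_mul, eval_C, eval_sub, eval_X] at e4 ⊢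
      have hd : (d + 2 : ℝ) ≠ 0 := by positivity
      apply mul_left_cancel₀ hd
      have : (d + 2 : ℝ) * ((t - s) * ((2 * d + 2 + n) / (d + 2) * eval s (Hp n (d + 1)) * eval t (Hp n (d + 1)) + (d + n) / (d + 2) * eval t K))
        = (t - s) * ((2 * d + 2 + n) * eval s (Hp n (d + 1)) * eval t (Hp n (d + 1))) + (d + n) * ((t - s) * eval t K) := by
        field_simp
      rw [this, e4]
      linear_combination (-eval s (Hp n (d + 1))) * r1 + (eval t (Hp n (d + 1))) * r2

lemma Hp_one_rec {n : ℕ} : ∀ d : ℕ, ((d : ℝ) + 1) * (Hp n (d + 1)).eval 1 = (d + n) * (Hp n d).eval 1 := by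
  intro d
  induction d with
  | zero => simp [Hp]
  | succ d ih =>
    have r := Hp_rec n d 1
    push_cast
    linear_combination r + ih

lemma Hp_one {n : ℕ} (hn : 5 ≤ n) : ∀ d : ℕ, (Hp n d).eval 1 = (Nat.choose (d + n - 1) (n - 1) : ℝ) := by
  intro d
  induction d with
  | zero => simp [Hp]
  | succ d ih =>
    have r := @Hp_one_rec n d
    have h := Nat.choose_mul_succ_eq (d + n - 1) (n - 1)
    rw [show d + n - 1 + 1 = d + n by omega, show d + n - (n - 1) = d + 1 by omega] at h
    have h' : (Nat.choose (d + n - 1) (n - 1) : ℝ) * (d + n) = Nat.choose (d + n) (n - 1) * (d + 1) := by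
      exact_mod_cast h
    rw [show d + 1 + n - 1 = d + n by omega]
    have hd : (d + 1 : ℝ) ≠ 0 := by positivity
    apply mul_left_cancel₀ hd
    rw [r, ih]; linear_combination h'

def Yp (n d e : ℕ) : ℝ[X] := Hp n d + C (1 - (e : ℝ)) * Hp n (d - 1)

/-- Levenshtein's polynomial. -/
lemma lev_poly {n : ℕ} (hn : 5 ≤ n) {d e : ℕ} (hd : 1 ≤ d) (he : e ≤ 1) (s : ℝ) (hs1 : s < 1)
    (hpos : ∀ k < d, 0 < (Hp n k).eval s) (hy : (Yp n d e).eval s = 0) :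
    ∃ f q : ℝ[X], Cone n f ∧ 0 < co n 0 f ∧ f.eval 1 = co n 0 f * ((1 + 1) ^ e * (Yp n d e).eval 1) ∧
      (X - C s) * q = Yp n d e ∧ 0 < q.eval s ∧ f = (1 + X) ^ e * Yp n d e * q := by
  obtain ⟨d, rfl⟩ : ∃ d', d = d' + 1 := ⟨d - 1, by omega⟩
  obtain ⟨K, h1, h2, h3, h4⟩ := cd hn s d (fun k hk => hpos k (by omega))
  have hp := hpos d (by omega)
  have hpn := hp.ne'
  set q : ℝ[X] := C ((Hp n d).eval s)⁻¹ * K with hq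
  have hqc : Cone n q := h1.cmul (by positivity)
  have hqd : q.natDegree ≤ d := (natDegree_C_mul_le _ _).trans h2
  have hqy : (X - C s) * q = Yp n (d + 1) e := by
    have e1 : (X - C s) * q = C ((Hp n d).eval s)⁻¹ * ((X - C s) * K) := by rw [hq]; ring
    rw [e1, h4]
    refine Polynomial.funext (fun t => ?_)
    simp only [Yp, Nat.add_sub_cancel, eval_add, eval_mul, eval_C] at hy ⊢
    simp only [eval_add, eval_mul, eval_C, eval_sub]
    have : eval s (Hp n (d + 1)) = - ((1 - (e : ℝ)) * eval s (Hp n d)) := by linarith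
    rw [this]; field_simp; ring
  have hqs : 0 < q.eval s := by
    rw [hq, eval_mul, eval_C]; positivity
  have hY1 : 0 < (Yp n (d + 1) e).eval 1 := by
    rw [Yp, eval_add, eval_mul, eval_C, Nat.add_sub_cancel, Hp_one hn, Hp_one hn]
    have : (0 : ℝ) < Nat.choose (d + 1 + n - 1) (n - 1) := by
      exact_mod_cast Nat.choose_pos (by omega)
    have he' : (e : ℝ) ≤ 1 := by exact_mod_cast he
    have : (0 : ℝ) ≤ 1 - e := by linarith
    positivity
  have hq1 : 0 < q.eval 1 := by
    have := congrArg (eval 1) hqy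
    rw [eval_mul, eval_sub, eval_X, eval_C] at this
    have h : 0 < (1 - s) * eval 1 q := by rw [this]; exact hY1
    exact pos_of_mul_pos_right h (by linarith)
  have hU : Cone n ((1 + X) ^ e * Yp n (d + 1) e) ∧ co n 0 ((1 + X) ^ e * Yp n (d + 1) e * q) = q.eval 1 := by
    interval_cases e
    · have : (1 + X) ^ 0 * Yp n (d + 1) 0 = Qp n (d + 1) := by
        simp [Yp, Qp]
      rw [this]
      exact ⟨cone_Qp hn _, repro hn _ _ (by omega)⟩
    · have : (1 + X) ^ 1 * Yp n (d + 1) 1 = C ((d + 2 : ℝ) / (2 * d + 2 + n)) * Qp n (d + 2) +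
          C ((d + n : ℝ) / (2 * d + 2 + n)) * Qp n (d + 1) := by
        rw [← one_add_X_Hp hn]; simp [Yp]
      rw [this]
      refine ⟨((cone_Qp hn _).cmul (by positivity)).add ((cone_Qp hn _).cmul (by positivity)), ?_⟩
      rw [add_mul, map_add, mul_assoc, mul_assoc, co_C_mul, co_C_mul, repro hn _ _ (by omega),
        repro hn _ _ (by omega)]
      have : (2 * d + 2 + n : ℝ) ≠ 0 := by positivity
      field_simp; ring
  refine ⟨_, q, hU.1.mul hn hqc, ?_, ?_, hqy, hqs, rfl⟩
  · rw [hU.2]; exact hq1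
  · rw [hU.2]; simp only [eval_mul, eval_pow, eval_add, eval_one, eval_X]; ring

end Algebra2
end SPB

namespace SPB
section Fischer
open MvPolynomial

variable {n : ℕ}

/-- linear form -/
def Lf (x : Fin n → ℝ) : MvPolynomial (Fin n) ℝ := ∑ i, C (x i) * X i

/-- squared norm -/
def rf (n : ℕ) : MvPolynomial (Fin n) ℝ := ∑ i, X i * X i

/-- harmonic zonal polynomials -/
def hz (x : Fin n → ℝ) : ℕ → MvPolynomial (Fin n) ℝ
  | 0 => 1
  | 1 => Lf x
  | (k + 2) => Lf x * hz x (k + 1) - C (gam n (k + 1)) * (rf n * hz x k)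

/-- directional derivative -/
def Dx (x : Fin n → ℝ) (p : MvPolynomial (Fin n) ℝ) : MvPolynomial (Fin n) ℝ :=
  ∑ i, C (x i) * pderiv i p

lemma Dx_apply (x : Fin n → ℝ) (p : MvPolynomial (Fin n) ℝ) : Dx x p = ∑ i, C (x i) * pderiv i p := rfl

lemma Dx_mul (x : Fin n → ℝ) (p q : MvPolynomial (Fin n) ℝ) : Dx x (p * q) = p * Dx x q + q * Dx x p := by
  unfold Dx
  rw [Finset.mul_sum, Finset.mul_sum, ← Finset.sum_add_distrib]
  refine Finset.sum_congr rfl (fun i _ => ?_)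
  rw [pderiv_mul]; ring

lemma Dx_C_mul (x : Fin n → ℝ) (a : ℝ) (p : MvPolynomial (Fin n) ℝ) : Dx x (C a * p) = C a * Dx x p := by
  unfold Dx
  rw [Finset.mul_sum]
  refine Finset.sum_congr rfl (fun i _ => ?_)
  rw [pderiv_C_mul]; ring

lemma Dx_sub (x : Fin n → ℝ) (p q : MvPolynomial (Fin n) ℝ) : Dx x (p - q) = Dx x p - Dx x q := by
  unfold Dx
  simp only [map_sub, mul_sub, Finset.sum_sub_distrib]

/-- Laplacian -/
def Lap (p : MvPolynomial (Fin n) ℝ) : MvPolynomial (Fin n) ℝ := ∑ i, pderiv i (pderiv i p)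

lemma pd_Lf (x : Fin n → ℝ) (i : Fin n) : pderiv i (Lf x) = C (x i) := by
  unfold Lf
  rw [map_sum, Finset.sum_eq_single i]
  · rw [pderiv_C_mul, pderiv_X_self, mul_one]
  · intro j _ hj; rw [pderiv_C_mul, pderiv_X_of_ne hj, mul_zero]
  · simp

lemma pd_rf (i : Fin n) : pderiv i (rf n) = 2 * X i := by
  unfold rf
  rw [map_sum, Finset.sum_eq_single i]
  · rw [pderiv_mul, pderiv_X_self]; ring
  · intro j _ hj; rw [pderiv_mul, pderiv_X_of_ne hj]; simp
  · simp

lemma Dx_Lf (x : Fin n → ℝ) (hx : ∑ i, x i * x i = 1) : Dx x (Lf x) = 1 := by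
  rw [Dx_apply]
  simp_rw [pd_Lf, ← C_mul]
  rw [← map_sum, hx]; simp

lemma Dx_rf (x : Fin n → ℝ) : Dx x (rf n) = 2 * Lf x := by
  rw [Dx_apply]
  simp_rw [pd_rf]
  unfold Lf; rw [Finset.mul_sum]
  exact Finset.sum_congr rfl (fun i _ => by ring)

lemma Lap_Lf (x : Fin n → ℝ) (p : MvPolynomial (Fin n) ℝ) :
    Lap (Lf x * p) = Lf x * Lap p + 2 * Dx x p := by
  unfold Lap
  rw [Dx_apply, Finset.mul_sum, Finset.mul_sum, ← Finset.sum_add_distrib]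
  refine Finset.sum_congr rfl (fun i _ => ?_)
  rw [pderiv_mul, map_add, pderiv_mul, pderiv_mul, pd_Lf, pderiv_C]; ring

lemma Lap_rf (p : MvPolynomial (Fin n) ℝ) {k : ℕ} (hp : p.IsHomogeneous k) :
    Lap (rf n * p) = rf n * Lap p + C (4 * k + 2 * n : ℝ) * p := by
  have he := hp.sum_X_mul_pderiv
  have h : ∀ i, pderiv i (pderiv i (rf n * p)) =
      rf n * pderiv i (pderiv i p) + 4 * (X i * pderiv i p) + 2 * p := by
    intro i
    have h2 : pderiv i (2 * X i : MvPolynomial (Fin n) ℝ) = 2 := by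
      have := pderiv_C_mul (a := (2 : ℝ)) (f := (X i : MvPolynomial (Fin n) ℝ)) (i := i)
      rw [pderiv_X_self, mul_one, map_ofNat] at this
      exact this
    rw [pderiv_mul, map_add, pderiv_mul, pderiv_mul, pd_rf, h2]; ring
  unfold Lap
  simp_rw [h]
  rw [Finset.sum_add_distrib, Finset.sum_add_distrib, ← Finset.mul_sum, ← Finset.mul_sum, he]
  simp only [Finset.sum_const, Finset.card_univ, Fintype.card_fin, nsmul_eq_mul]
  simp only [map_add, map_mul, map_natCast, map_ofNat]
  ring

lemma Lap_sub (p q : MvPolynomial (Fin n) ℝ) : Lap (p - q) = Lap p - Lap q := by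
  unfold Lap; simp only [map_sub, Finset.sum_sub_distrib]

lemma Lap_C_mul (a : ℝ) (p : MvPolynomial (Fin n) ℝ) : Lap (C a * p) = C a * Lap p := by
  unfold Lap; simp only [pderiv_C_mul, Finset.mul_sum]

lemma Lf_hom (x : Fin n → ℝ) : (Lf x).IsHomogeneous 1 := by
  unfold Lf
  refine IsHomogeneous.sum _ _ _ (fun i _ => ?_)
  simpa using (isHomogeneous_C (Fin n) (x i)).mul (isHomogeneous_X ℝ i)

lemma rf_hom : (rf n).IsHomogeneous 2 := by
  unfold rf
  refine IsHomogeneous.sum _ _ _ (fun i _ => ?_)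
  simpa using (isHomogeneous_X ℝ i).mul (isHomogeneous_X ℝ i)

lemma hz_hom (x : Fin n → ℝ) : ∀ k, (hz x k).IsHomogeneous k
  | 0 => by simpa [hz] using isHomogeneous_one (Fin n) ℝ
  | 1 => by simpa [hz] using Lf_hom x
  | (k + 2) => by
    rw [hz]
    refine IsHomogeneous.sub ?_ ?_
    · have := (Lf_hom x).mul (hz_hom x (k + 1))
      rwa [show 1 + (k + 1) = k + 2 by ring] at this
    · have := (isHomogeneous_C (Fin n) (gam n (k + 1))).mul ((rf_hom (n := n)).mul (hz_hom x k))
      rwa [show 0 + (2 + k) = k + 2 by ring] at this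

lemma gam_rel (hn : 5 ≤ n) (k : ℕ) :
    1 + gam n (k + 1) * (2 * k + n - 2) = gam n (k + 2) * (2 * (k + 1 : ℕ) + n) := by
  have hn' : (5 : ℝ) ≤ n := by exact_mod_cast hn
  have hk : (0 : ℝ) ≤ k := Nat.cast_nonneg k
  unfold gam
  push_cast
  rw [show (k + 1 + n - 3 : ℝ) = k + n - 2 by ring, show (2 * (k + 1) + n - 4 : ℝ) = 2 * k + n - 2 by ring,
      show (2 * ((k : ℝ) + 1) + n - 2) = 2 * k + n by ring, show (2 * ((k : ℝ) + 2) + n - 2) = 2 * k + n + 2 by ring,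
      show (2 * ((k : ℝ) + 2) + n - 4) = 2 * k + n by ring, show (2 * ((k : ℝ) + 1) + n) = 2 * k + n + 2 by ring]
  have a2 : (2 * k + n - 2 : ℝ) ≠ 0 := by linarith
  have a3 : (2 * k + n : ℝ) ≠ 0 := by linarith
  have a4 : (2 * k + n + 2 : ℝ) ≠ 0 := by linarith
  have e1 : (k + 1 : ℝ) * (k + n - 2) / ((2 * k + n) * (2 * k + n - 2)) * (2 * k + n - 2) =
    (k + 1 : ℝ) * (k + n - 2) / (2 * k + n) := by
    rw [← div_div, div_mul_cancel₀ _ a2]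
  rw [e1]
  field_simp
  ring

lemma hz_key (hn : 5 ≤ n) (x : Fin n → ℝ) (hx : ∑ i, x i * x i = 1) : ∀ k,
    Lap (hz x k) = 0 ∧ Lap (hz x (k + 1)) = 0 ∧
    Dx x (hz x (k + 1)) = C (gam n (k + 1) * (2 * k + n)) * hz x k ∧
    C (2 * k + n - 2 : ℝ) * hz x (k + 1) = C (2 * k + n - 2 : ℝ) * (Lf x * hz x k) -
          rf n * Dx x (hz x k) := by
  have hn' : (5 : ℝ) ≤ n := by exact_mod_cast hn
  have hg1 : gam n 1 * n = 1 := by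
    have := gam_rel hn 0
    have h1 : (n : ℝ) - 2 ≠ 0 := by linarith
    have h0 : (n : ℝ) ≠ 0 := by linarith
    unfold gam; push_cast
    rw [show (2 * 1 + n - 2 : ℝ) = n by ring, show (2 * 1 + n - 4 : ℝ) = n - 2 by ring,
      show (1 + n - 3 : ℝ) = n - 2 by ring]
    field_simp
  intro k
  induction k with
  | zero =>
    refine ⟨by simp [hz, Lap], by simp [hz, Lap, pd_Lf], ?_, by simp [hz, Dx]⟩
    simp only [zero_add, hz, Dx_Lf x hx, Nat.cast_zero, mul_zero, hg1, C_1, mul_one]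
  | succ k ih =>
    obtain ⟨i1, i2, i3, i4⟩ := ih
    refine ⟨i2, ?_, ?_, ?_⟩
    · rw [hz, Lap_sub, Lap_Lf, Lap_C_mul, Lap_rf _ (hz_hom x k), i1, i2, i3]
      simp only [mul_zero, zero_add]
      rw [← map_ofNat C 2, ← mul_assoc, ← mul_assoc, ← C_mul, ← C_mul,
        ← sub_mul, ← C_sub]
      have : (2 * (gam n (k + 1) * (2 * k + n)) - gam n (k + 1) * (4 * k + 2 * n) : ℝ) = 0 := by ring
      rw [this]; simp
    · have hD : Dx x (rf n * hz x k) = rf n * Dx x (hz x k) + hz x k * (2 * Lf x) := by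
        rw [Dx_mul, Dx_rf]
      rw [hz, Dx_sub, Dx_C_mul, hD, Dx_mul, Dx_Lf x hx, i3, ← gam_rel hn k]
      simp only [mul_one]
      have e : C (1 + gam n (k + 1) * (2 * k + n - 2)) * hz x (k + 1) =
          hz x (k + 1) + C (gam n (k + 1)) * (C (2 * k + n - 2 : ℝ) * hz x (k + 1)) := by
        rw [C_add, C_mul, C_1]; ring
      rw [e, i4]
      simp only [C_mul, C_add, C_sub, map_ofNat, map_natCast]
      ring
    · have : gam n (k + 1) * (2 * k + n) = gam n (k + 1) * (2 * (k + 1 : ℕ) + n - 2) := by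
        push_cast; ring
      rw [i3, this, hz, C_mul]; ring

/-- The Fischer form. -/
def Fb (n : ℕ) : MvPolynomial (Fin n) ℝ →ₗ[ℝ] (MvPolynomial (Fin n) ℝ →ₗ[ℝ] ℝ) :=
  (basisMonomials (Fin n) ℝ).constr ℝ
    (fun m => ((∏ i, (m i).factorial : ℕ) : ℝ) • lcoeff ℝ m)

lemma Fb_mon (m : Fin n →₀ ℕ) (q : MvPolynomial (Fin n) ℝ) :
    Fb n (monomial m 1) q = ((∏ i, (m i).factorial : ℕ) : ℝ) * coeff m q := by
  have := (basisMonomials (Fin n) ℝ).constr_basis ℝ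
    (fun m => ((∏ i, (m i).factorial : ℕ) : ℝ) • lcoeff ℝ m) m
  unfold Fb
  rw [coe_basisMonomials] at this
  rw [this]
  rfl

lemma Fb_mon' (m : Fin n →₀ ℕ) (a : ℝ) (q : MvPolynomial (Fin n) ℝ) :
    Fb n (monomial m a) q = a * (((∏ i, (m i).factorial : ℕ) : ℝ) * coeff m q) := by
  have : monomial m a = a • monomial m (1 : ℝ) := by rw [smul_monomial]; simp
  rw [this, map_smul, LinearMap.smul_apply, Fb_mon, smul_eq_mul]

lemma Fb_X (i : Fin n) (p q : MvPolynomial (Fin n) ℝ) : Fb n (X i * p) q = Fb n p (pderiv i q) := by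
  induction p using MvPolynomial.induction_on' with
  | add p r hp hr => rw [mul_add, map_add, map_add, LinearMap.add_apply, LinearMap.add_apply, hp, hr]
  | monomial m a =>
    rw [X, monomial_mul, one_mul, Fb_mon', Fb_mon', coeff_pderiv]
    have : ∏ j, ((Finsupp.single i 1 + m : Fin n →₀ ℕ) j).factorial = (m i + 1) * ∏ j, (m j).factorial := by
      rw [← Finset.mul_prod_erase _ _ (Finset.mem_univ i),
        ← Finset.mul_prod_erase _ (fun j => (m j).factorial) (Finset.mem_univ i)]
      have h1 : ∏ j ∈ Finset.univ.erase i, ((Finsupp.single i 1 + m : Fin n →₀ ℕ) j).factorial =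
          ∏ j ∈ Finset.univ.erase i, (m j).factorial := by
        refine Finset.prod_congr rfl (fun j hj => ?_)
        have : j ≠ i := Finset.ne_of_mem_erase hj
        rw [Finsupp.add_apply, Finsupp.single_eq_of_ne this, zero_add]
      rw [h1]
      simp only [Finsupp.add_apply, Finsupp.single_eq_same]
      rw [add_comm 1 (m i), Nat.factorial_succ]; ring
    rw [this, add_comm (Finsupp.single i 1) m]
    push_cast; ring

lemma Fb_C_mul (a : ℝ) (p q : MvPolynomial (Fin n) ℝ) : Fb n (C a * p) q = a * Fb n p q := by
  rw [C_mul', map_smul, LinearMap.smul_apply, smul_eq_mul]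

lemma Fb_C_mul' (a : ℝ) (p q : MvPolynomial (Fin n) ℝ) : Fb n p (C a * q) = a * Fb n p q := by
  rw [C_mul', map_smul, smul_eq_mul]

lemma Fb_sum_left {ι : Type*} (s : Finset ι) (g : ι → MvPolynomial (Fin n) ℝ) (q : MvPolynomial (Fin n) ℝ) :
    Fb n (∑ i ∈ s, g i) q = ∑ i ∈ s, Fb n (g i) q := by
  rw [map_sum, LinearMap.sum_apply]

lemma Fb_nonneg (p : MvPolynomial (Fin n) ℝ) : 0 ≤ Fb n p p := by
  have h : Fb n p p = ∑ m ∈ p.support, coeff m p * (((∏ i, (m i).factorial : ℕ) : ℝ) * coeff m p) := by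
    have h2 := Fb_sum_left p.support (fun m => monomial m (coeff m p)) p
    rw [← p.as_sum] at h2
    rw [h2]
    exact Finset.sum_congr rfl (fun m _ => Fb_mon' m _ _)
  rw [h]
  refine Finset.sum_nonneg (fun m _ => ?_)
  nlinarith [mul_nonneg (mul_self_nonneg (coeff m p)) (Nat.cast_nonneg (∏ i, (m i).factorial) : (0 : ℝ) ≤ _)]

lemma Fb_Lf (y : Fin n → ℝ) (p q : MvPolynomial (Fin n) ℝ) : Fb n (Lf y * p) q = Fb n p (Dx y q) := by
  unfold Lf Dx
  rw [Finset.sum_mul, map_sum, LinearMap.sum_apply, map_sum]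
  refine Finset.sum_congr rfl (fun i _ => ?_)
  rw [mul_assoc, Fb_C_mul, Fb_X, Fb_C_mul']

lemma Fb_rf (p q : MvPolynomial (Fin n) ℝ) : Fb n (rf n * p) q = Fb n p (Lap q) := by
  unfold rf Lap
  rw [Finset.sum_mul, map_sum, LinearMap.sum_apply, map_sum]
  refine Finset.sum_congr rfl (fun i _ => ?_)
  rw [mul_assoc, Fb_X, Fb_X]

lemma Fb_pow (y : Fin n → ℝ) : ∀ (k : ℕ) (q : MvPolynomial (Fin n) ℝ), q.IsHomogeneous k →
    Fb n (Lf y ^ k) q = (k.factorial : ℝ) * eval y q := by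
  intro k
  induction k with
  | zero =>
    intro q hq
    rw [← totalDegree_zero_iff_isHomogeneous, totalDegree_eq_zero_iff_eq_C] at hq
    have h := Fb_mon (0 : Fin n →₀ ℕ) q
    rw [monomial_zero', C_1] at h
    rw [pow_zero, h, hq]; simp
  | succ k ih =>
    intro q hq
    have hD : (Dx y q).IsHomogeneous k := by
      unfold Dx
      refine IsHomogeneous.sum _ _ _ (fun i _ => ?_)
      have := (isHomogeneous_C (Fin n) (y i)).mul (hq.pderiv (i := i))
      simpa using this
    have he := congrArg (eval y) hq.sum_X_mul_pderiv
    have e2 : eval y (Dx y q) = (k + 1) * eval y q := by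
      rw [map_sum] at he
      unfold Dx
      rw [map_sum]
      simp only [map_mul, eval_X, eval_C, map_nsmul, nsmul_eq_mul] at he ⊢
      rw [he, map_natCast]; push_cast; ring
    rw [pow_succ', Fb_Lf, ih _ hD, e2, Nat.factorial_succ]
    push_cast; ring

lemma hz_pow (y : Fin n → ℝ) : ∀ k, ∃ g, Lf y ^ k = hz y k + rf n * g := by
  have key : ∀ k, (∃ g, Lf y ^ k = hz y k + rf n * g) ∧ (∃ g, Lf y ^ (k + 1) = hz y (k + 1) + rf n * g) := by
    intro k
    induction k with
    | zero => exact ⟨⟨0, by simp [hz]⟩, ⟨0, by simp [hz]⟩⟩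
    | succ k ih =>
      refine ⟨ih.2, ?_⟩
      obtain ⟨g, hg⟩ := ih.2
      refine ⟨C (gam n (k + 1)) * hz y k + Lf y * g, ?_⟩
      rw [pow_succ', hg, hz]; ring
  exact fun k => (key k).1

lemma hz_eval (x y : Fin n → ℝ) (hy : ∑ i, y i * y i = 1) (k : ℕ) :
    eval y (hz x k) = (pm n k).eval (∑ i, x i * y i) := by
  have hL : eval y (Lf x) = ∑ i, x i * y i := by unfold Lf; simp
  have hr : eval y (rf n) = 1 := by unfold rf; simp [hy]
  induction k using Nat.strong_induction_on with
  | _ k ih =>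
    match k, ih with
    | 0, _ => simp [hz, pm]
    | 1, _ => simp [hz, pm, hL]
    | (k + 2), ih =>
      rw [hz, pm]
      simp only [map_sub, map_mul, eval_C, hL, hr, ih k (by omega), ih (k + 1) (by omega),
        Polynomial.eval_sub, Polynomial.eval_mul, Polynomial.eval_C, Polynomial.eval_X]
      ring

lemma Fb_hz (hn : 5 ≤ n) (x y : Fin n → ℝ) (hx : ∑ i, x i * x i = 1) (hy : ∑ i, y i * y i = 1) (k : ℕ) :
    Fb n (hz y k) (hz x k) = (k.factorial : ℝ) * (pm n k).eval (∑ i, x i * y i) := by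
  obtain ⟨g, hg⟩ := hz_pow y k
  have h := Fb_pow y k (hz x k) (hz_hom x k)
  rw [hg, map_add, LinearMap.add_apply, Fb_rf, (hz_key hn x hx k).1, map_zero, add_zero, hz_eval x y hy] at h
  exact h

/-- Schoenberg's positive definiteness. -/
lemma pm_pd (hn : 5 ≤ n) {ι : Type*} (s : Finset ι) (w : ι → ℝ) (x : ι → Fin n → ℝ)
    (hx : ∀ i ∈ s, ∑ j, x i j * x i j = 1) (k : ℕ) :
    0 ≤ ∑ i ∈ s, ∑ j ∈ s, w i * w j * (pm n k).eval (∑ l, x i l * x j l) := by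
  have h := Fb_nonneg (∑ i ∈ s, C (w i) * hz (x i) k)
  have e : Fb n (∑ i ∈ s, C (w i) * hz (x i) k) (∑ i ∈ s, C (w i) * hz (x i) k) =
      (k.factorial : ℝ) * ∑ i ∈ s, ∑ j ∈ s, w i * w j * (pm n k).eval (∑ l, x i l * x j l) := by
    rw [Fb_sum_left, Finset.mul_sum]
    refine Finset.sum_congr rfl (fun i hi => ?_)
    rw [map_sum, Finset.mul_sum]
    refine Finset.sum_congr rfl (fun j hj => ?_)
    rw [Fb_C_mul, Fb_C_mul', Fb_hz hn _ _ (hx j hj) (hx i hi)]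
    have : ∑ l, x j l * x i l = ∑ l, x i l * x j l := Finset.sum_congr rfl (fun l _ => mul_comm _ _)
    rw [this]; ring
  rw [e] at h
  have hk : (0 : ℝ) < k.factorial := by exact_mod_cast Nat.factorial_pos k
  exact nonneg_of_mul_nonneg_right h hk

lemma cone_pd (hn : 5 ≤ n) {f : Polynomial ℝ} (hf : Cone n f) {ι : Type*} (s : Finset ι) (w : ι → ℝ)
    (x : ι → Fin n → ℝ) (hx : ∀ i ∈ s, ∑ j, x i j * x i j = 1) :
    co n 0 f * (∑ i ∈ s, w i) ^ 2 ≤ ∑ i ∈ s, ∑ j ∈ s, w i * w j * f.eval (∑ l, x i l * x j l) := by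
  obtain ⟨t, ht⟩ := expand n f
  have ht' : f = ∑ k ∈ insert 0 t, Polynomial.C (co n k f) * pm n k := by
    by_cases h0 : 0 ∈ t
    · rw [Finset.insert_eq_of_mem h0]; exact ht
    · have h2 : co n 0 f = 0 := by
        rw [ht, map_sum]
        refine Finset.sum_eq_zero (fun k hk => ?_)
        rw [co_C_mul, co_pm, if_neg (by rintro rfl; exact h0 hk), mul_zero]
      rw [Finset.sum_insert h0, h2]; simpa using ht
  have e : ∑ i ∈ s, ∑ j ∈ s, w i * w j * f.eval (∑ l, x i l * x j l) =
      ∑ k ∈ insert 0 t, co n k f * ∑ i ∈ s, ∑ j ∈ s, w i * w j * (pm n k).eval (∑ l, x i l * x j l) := by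
    have : ∀ u, f.eval u = ∑ k ∈ insert 0 t, co n k f * (pm n k).eval u := by
      intro u
      conv_lhs => rw [ht']
      rw [Polynomial.eval_finsetSum]; simp
    simp_rw [this, Finset.mul_sum]
    rw [Finset.sum_comm (s := insert 0 t)]
    refine Finset.sum_congr rfl (fun i _ => ?_)
    rw [Finset.sum_comm (s := insert 0 t)]
    refine Finset.sum_congr rfl (fun j _ => Finset.sum_congr rfl (fun k _ => by ring))
  rw [e, ← Finset.add_sum_erase _ _ (Finset.mem_insert_self 0 t)]
  have h0 : ∑ i ∈ s, ∑ j ∈ s, w i * w j * (pm n 0).eval (∑ l, x i l * x j l) = (∑ i ∈ s, w i) ^ 2 := by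
    simp only [pm, Polynomial.eval_one, mul_one]
    rw [sq, Finset.sum_mul_sum]
  rw [h0]
  have : 0 ≤ ∑ k ∈ (insert 0 t).erase 0, co n k f * ∑ i ∈ s, ∑ j ∈ s, w i * w j * (pm n k).eval (∑ l, x i l * x j l) :=
    Finset.sum_nonneg (fun k _ => mul_nonneg (hf k) (pm_pd hn s w x hx k))
  linarith

end Fischer
end SPB

namespace SPB
section Jacobi
open PowerSeries

lemma genBinom_succ (a : ℝ) (k : ℕ) : ((k : ℝ) + 1) * genBinom a (k + 1) = a * genBinom (a - 1) k := by
  unfold genBinom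
  rw [Finset.prod_range_succ']
  have h : ∏ i ∈ Finset.range k, (a - ((i + 1 : ℕ) : ℝ)) = ∏ i ∈ Finset.range k, (a - 1 - (i : ℝ)) :=
    Finset.prod_congr rfl (fun i _ => by push_cast; ring)
  rw [h, Nat.factorial_succ]
  have : (k.factorial : ℝ) ≠ 0 := by positivity
  push_cast
  field_simp
  simp; ring

lemma genBinom_succ' (a : ℝ) (k : ℕ) : ((k : ℝ) + 1) * genBinom a (k + 1) = (a - k) * genBinom a k := by
  unfold genBinom
  rw [Finset.prod_range_succ, Nat.factorial_succ]
  have : (k.factorial : ℝ) ≠ 0 := by positivity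
  push_cast
  field_simp

lemma genBinom_zero (a : ℝ) : genBinom a 0 = 1 := by simp [genBinom]

lemma genBinom_pascal (a : ℝ) (k : ℕ) : genBinom a (k + 1) = genBinom (a - 1) (k + 1) + genBinom (a - 1) k := by
  have h1 := genBinom_succ a k
  have h2 := genBinom_succ' (a - 1) k
  have : (k : ℝ) + 1 ≠ 0 := by positivity
  apply mul_left_cancel₀ this
  linear_combination h1 - h2

/-- binomial series -/
def bs (A y : ℝ) : ℝ⟦X⟧ := PowerSeries.mk (fun k => genBinom A k * y ^ k)

lemma bs_step (A y : ℝ) : bs A y = (1 + C y * X) * bs (A - 1) y := by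
  ext k
  rw [add_mul, one_mul, map_add, mul_assoc, coeff_C_mul]
  match k with
  | 0 => simp [bs, genBinom_zero]
  | k + 1 =>
    rw [coeff_succ_X_mul]
    simp only [bs, coeff_mk]
    rw [genBinom_pascal]; ring

lemma bs_deriv (A y : ℝ) : d⁄dX ℝ (bs A y) = C (A * y) * bs (A - 1) y := by
  ext k
  rw [coeff_derivative, coeff_C_mul]
  simp only [bs, coeff_mk]
  have := genBinom_succ A k
  linear_combination y ^ (k + 1) * this

lemma coeff_bs_mul (A B y x : ℝ) (d : ℕ) : coeff d (bs A y * bs B x) =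
    ∑ s ∈ Finset.range (d + 1), genBinom A (d - s) * genBinom B s * x ^ s * y ^ (d - s) := by
  rw [mul_comm, coeff_mul, Finset.Nat.sum_antidiagonal_eq_sum_range_succ_mk]
  refine Finset.sum_congr rfl (fun s _ => ?_)
  simp only [bs, coeff_mk]; ring

/-- the generating function -/
def Gs (A x : ℝ) : ℝ⟦X⟧ := bs A ((x + 1) / 2) * bs A ((x - 1) / 2)

lemma jac_eq (α β : ℝ) (d : ℕ) (x : ℝ) : jacobiP α β d x =
    coeff d (bs (d + α) ((x + 1) / 2) * bs (d + β) ((x - 1) / 2)) := by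
  rw [coeff_bs_mul]; rfl

/-- value of shifted coefficient -/
def sc (A x : ℝ) (j : ℕ) : ℝ := coeff j (X * Gs A x)

lemma Gs_one (A x : ℝ) (j : ℕ) : ((j : ℝ) + 1) * coeff (j + 1) (Gs A x) =
    A * (x * coeff j (Gs (A - 1) x) + 2 * ((x ^ 2 - 1) / 4) * sc (A - 1) x j) := by
  have h : d⁄dX ℝ (Gs A x) = C A * (C x * Gs (A - 1) x + C (2 * ((x ^ 2 - 1) / 4)) * (X * Gs (A - 1) x)) := by
    unfold Gs
    rw [Derivation.leibniz, bs_deriv, bs_deriv]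
    conv_lhs => rw [bs_step A, bs_step A ((x - 1) / 2)]
    have hx : x = (x + 1) / 2 + (x - 1) / 2 := by ring
    have hp : 2 * ((x ^ 2 - 1) / 4) = 2 * ((x + 1) / 2 * ((x - 1) / 2)) := by ring
    generalize (x + 1) / 2 = y at *
    generalize (x - 1) / 2 = w at *
    rw [hp, hx]
    simp only [map_mul, map_add, smul_eq_mul, map_ofNat]
    ring
  have := congrArg (coeff j) h
  rw [coeff_derivative, coeff_C_mul, map_add, coeff_C_mul, coeff_C_mul] at this
  rw [sc]; linarith

lemma Gs_two (A x : ℝ) (j : ℕ) : (2 * A - j) * coeff j (Gs A x) =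
    A * (2 * coeff j (Gs (A - 1) x) + x * sc (A - 1) x j) := by
  have hG : Gs A x = Gs (A - 1) x + C x * (X * Gs (A - 1) x) + C ((x ^ 2 - 1) / 4) * (X * (X * Gs (A - 1) x)) := by
    unfold Gs
    conv_lhs => rw [bs_step A, bs_step A ((x - 1) / 2)]
    have hx : x = (x + 1) / 2 + (x - 1) / 2 := by ring
    have hp : ((x ^ 2 - 1) / 4) = ((x + 1) / 2 * ((x - 1) / 2)) := by ring
    generalize (x + 1) / 2 = y at *
    generalize (x - 1) / 2 = w at *
    rw [hp, hx]
    simp only [map_mul, map_add]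
    ring
  match j with
  | 0 =>
    have h0 := congrArg (coeff 0) hG
    simp [sc] at h0 ⊢
    rw [h0]; ring
  | j + 1 =>
    have h1 := Gs_one A x j
    have h2 := congrArg (coeff (j + 1)) hG
    simp only [map_add, coeff_C_mul, coeff_succ_X_mul] at h2
    simp only [sc, coeff_succ_X_mul] at h1 ⊢
    push_cast
    linear_combination 2 * A * h2 - h1

lemma jac_rec (A x : ℝ) (j : ℕ) : (2 * A - j) * ((j + 2) * coeff (j + 2) (Gs (A + 1) x)) =
    (A + 1) * ((2 * A + 1) * (x * coeff (j + 1) (Gs A x)) - A * coeff j (Gs (A - 1) x)) := by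
  have h1 := Gs_one (A + 1) x (j + 1)
  have h2 := Gs_two A x j
  have h3 := Gs_one A x j
  simp only [sc, coeff_succ_X_mul, add_sub_cancel_right] at h1 h2 h3
  push_cast at h1
  have h4 : (2 * A - j) * (((j : ℝ) + 2) * coeff (j + 2) (Gs (A + 1) x)) = (2 * A - j) * ((A + 1) * (x * coeff (j + 1) (Gs A x) + 2 * ((x ^ 2 - 1) / 4) * coeff j (Gs A x))) := by
    rw [show j + 2 = j + 1 + 1 from rfl, ← h1]; ring
  rw [h4]
  linear_combination (A + 1) * (x ^ 2 - 1) / 2 * h2 - (A + 1) * x * h3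

/-- normalization constant -/
def cj (n : ℕ) : ℕ → ℝ
  | 0 => 1
  | (d + 1) => cj n d * ((d + 1 + ((n : ℝ) - 1) / 2) / (d + n))

lemma cj_pos {n : ℕ} (hn : 5 ≤ n) (d : ℕ) : 0 < cj n d := by
  have hn' : (5 : ℝ) ≤ n := by exact_mod_cast hn
  induction d with
  | zero => simp [cj]
  | succ d ih =>
    rw [cj]
    have : (0 : ℝ) < d + 1 + ((n : ℝ) - 1) / 2 := by
      have : (0 : ℝ) ≤ d := Nat.cast_nonneg d
      linarith
    positivity

lemma jac_H {n : ℕ} (hn : 5 ≤ n) (x : ℝ) : ∀ d : ℕ,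
    coeff d (Gs (d + ((n : ℝ) - 1) / 2) x) = cj n d * (Hp n d).eval x ∧
    coeff (d + 1) (Gs ((d + 1 : ℕ) + ((n : ℝ) - 1) / 2) x) = cj n (d + 1) * (Hp n (d + 1)).eval x := by
  have hn' : (5 : ℝ) ≤ n := by exact_mod_cast hn
  have hc0 : ∀ A, coeff 0 (Gs A x) = 1 := by
    intro A; simp [Gs, bs, genBinom_zero]
  intro d
  induction d with
  | zero =>
    refine ⟨by rw [hc0]; simp [cj, Hp], ?_⟩
    have h := Gs_one ((0 + 1 : ℕ) + ((n : ℝ) - 1) / 2) x 0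
    rw [hc0] at h
    simp only [sc, coeff_zero_X_mul] at h
    simp only [cj, Hp, Polynomial.eval_mul, Polynomial.eval_C, Polynomial.eval_X]
    push_cast at h ⊢
    have : (0 + (n : ℝ)) ≠ 0 := by linarith
    generalize (coeff 1) (Gs (1 + ((n : ℝ) - 1) / 2) x) = u at *
    field_simp
    linear_combination 2 * (n : ℝ) * h
  | succ d ih =>
    refine ⟨ih.2, ?_⟩
    have hd : (0 : ℝ) ≤ d := Nat.cast_nonneg d
    have h := jac_rec ((d + 1 : ℕ) + ((n : ℝ) - 1) / 2) x d
    have r := Hp_rec n d x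
    obtain ⟨i1, i2⟩ := ih
    rw [show (((d + 1 : ℕ) : ℝ) + ((n : ℝ) - 1) / 2 - 1) = d + ((n : ℝ) - 1) / 2 by push_cast; ring,
      show (((d + 1 : ℕ) : ℝ) + ((n : ℝ) - 1) / 2 + 1) = (d + 1 + 1 : ℕ) + ((n : ℝ) - 1) / 2 by push_cast; ring,
      i1, i2] at h
    rw [show d + 1 + 1 = d + 2 from rfl] at h ⊢
    have c1 : cj n (d + 2) * (d + 1 + n) = cj n (d + 1) * (d + 2 + ((n : ℝ) - 1) / 2) := by
      rw [show d + 2 = d + 1 + 1 from rfl, cj]; push_cast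
      have : (d + 1 + n : ℝ) ≠ 0 := by positivity
      field_simp; ring
    have c0 : cj n (d + 1) * (d + n) = cj n d * (d + 1 + ((n : ℝ) - 1) / 2) := by
      rw [cj]
      have : (d + n : ℝ) ≠ 0 := by positivity
      field_simp
    have : ((d + 1 + n : ℝ) * (d + 2)) ≠ 0 := by positivity
    apply mul_left_cancel₀ this
    push_cast at h ⊢
    have e1 : (d + 1 + n : ℝ) * (d + 2) * (cj n (d + 2) * Polynomial.eval x (Hp n (d + 2))) =
      (cj n (d + 1) * (d + 2 + ((n : ℝ) - 1) / 2)) * ((d + 2) * Polynomial.eval x (Hp n (d + 2))) := by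
      rw [← c1]; ring
    rw [e1, r]
    linear_combination h + (d + 2 + ((n : ℝ) - 1) / 2) * Polynomial.eval x (Hp n d) * c0

lemma jacobi_H {n : ℕ} (hn : 5 ≤ n) (d : ℕ) (x : ℝ) :
    jacobiP (((n : ℝ) - 3) / 2 + 1) (((n : ℝ) - 3) / 2 + 1) d x = cj n d * (Hp n d).eval x := by
  rw [jac_eq, show ((n : ℝ) - 3) / 2 + 1 = ((n : ℝ) - 1) / 2 by ring]
  exact (jac_H hn x d).1

lemma jacobi_Q {n : ℕ} (hn : 5 ≤ n) (d : ℕ) (x : ℝ) :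
    jacobiP (((n : ℝ) - 3) / 2 + 1) (((n : ℝ) - 3) / 2) (d + 1) x =
      cj n d / 2 * ((Hp n (d + 1)).eval x + (Hp n d).eval x) := by
  have hn' : (5 : ℝ) ≤ n := by exact_mod_cast hn
  have hd : (0 : ℝ) ≤ d := Nat.cast_nonneg d
  rw [jac_eq]
  obtain ⟨i1, i2⟩ := jac_H hn x d
  obtain ⟨A, hA⟩ : ∃ A : ℝ, A = (d + 1 : ℕ) + ((n : ℝ) - 1) / 2 := ⟨_, rfl⟩
  rw [show ((d + 1 : ℕ) : ℝ) + (((n : ℝ) - 3) / 2 + 1) = A by rw [hA]; ring,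
    show ((d + 1 : ℕ) : ℝ) + (((n : ℝ) - 3) / 2) = A - 1 by rw [hA]; ring]
  rw [← hA] at i2
  rw [show (d : ℝ) + ((n : ℝ) - 1) / 2 = A - 1 by rw [hA]; push_cast; ring] at i1
  have h1 := Gs_one A x d
  have e : bs A ((x + 1) / 2) * bs (A - 1) ((x - 1) / 2) = Gs (A - 1) x + C ((x + 1) / 2) * (X * Gs (A - 1) x) := by
    conv_lhs => rw [bs_step A]
    unfold Gs; ring
  have hG : Gs A x = Gs (A - 1) x + C x * (X * Gs (A - 1) x) + C ((x ^ 2 - 1) / 4) * (X * (X * Gs (A - 1) x)) := by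
    unfold Gs
    conv_lhs => rw [bs_step A, bs_step A ((x - 1) / 2)]
    have hx : x = (x + 1) / 2 + (x - 1) / 2 := by ring
    have hp : ((x ^ 2 - 1) / 4) = ((x + 1) / 2 * ((x - 1) / 2)) := by ring
    generalize (x + 1) / 2 = y at *
    generalize (x - 1) / 2 = w at *
    rw [hp, hx]
    simp only [map_mul, map_add]
    ring
  have hA0 : 0 < A := by rw [hA]; push_cast; linarith
  have h2 := congrArg (coeff (d + 1)) hG
  rw [e]
  simp only [map_add, coeff_C_mul, coeff_succ_X_mul] at h2 ⊢
  rw [i1, i2] at *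
  rw [sc] at h1
  have c0 : cj n (d + 1) * (d + n) = cj n d * A := by
    rw [cj, hA]
    have : (d + n : ℝ) ≠ 0 := by positivity
    push_cast
    field_simp
  have c1 : (d : ℝ) + n = 2 * A - (d + 1) := by rw [hA]; push_cast; ring
  rw [c1] at c0
  apply mul_left_cancel₀ hA0.ne'
  linear_combination -A * h2 + h1 / 2 + Polynomial.eval x (Hp n (d + 1)) / 2 * c0

end Jacobi
end SPB

namespace SPB
section Roots
open Polynomial

lemma Hp_pos_of_one_le {n : ℕ} (hn : 5 ≤ n) (z : ℝ) (hz : 1 ≤ z) : ∀ k,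
    0 < (Hp n k).eval z ∧ (Hp n k).eval z ≤ (Hp n (k + 1)).eval z := by
  have hn' : (5 : ℝ) ≤ n := by exact_mod_cast hn
  intro k
  induction k with
  | zero =>
    simp [Hp]
    nlinarith
  | succ k ih =>
    obtain ⟨h1, h2⟩ := ih
    have hp : 0 < (Hp n (k + 1)).eval z := by linarith
    refine ⟨hp, ?_⟩
    have r := Hp_rec n k z
    have hk : (0 : ℝ) ≤ k := Nat.cast_nonneg k
    have a1 : (Hp n (k + 1)).eval z ≤ z * (Hp n (k + 1)).eval z := by nlinarith
    have a2 : (2 * k + 2 + n : ℝ) * (Hp n (k + 1)).eval z ≤ (2 * k + 2 + n : ℝ) * (z * (Hp n (k + 1)).eval z) :=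
      mul_le_mul_of_nonneg_left a1 (by positivity)
    have a3 : (k + n : ℝ) * (Hp n k).eval z ≤ (k + n : ℝ) * (Hp n (k + 1)).eval z :=
      mul_le_mul_of_nonneg_left h2 (by positivity)
    have a4 : (k + 2 : ℝ) * (Hp n (k + 1)).eval z ≤ (k + 2 : ℝ) * (Hp n (k + 2)).eval z := by
      rw [r]; linarith
    exact le_of_mul_le_mul_left a4 (by positivity)

lemma top_zero (p : ℝ → ℝ) (hp : Continuous p) (a : ℝ) (ha : p a ≤ 0) (h1 : ∀ z, 1 ≤ z → 0 < p z) :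
    ∃ r, a ≤ r ∧ r < 1 ∧ p r = 0 ∧ ∀ z, r < z → 0 < p z := by
  have ha1 : a < 1 := by
    by_contra h; push Not at h; linarith [h1 a h]
  set Z : Set ℝ := Set.Icc a 1 ∩ {z | p z ≤ 0} with hZ
  have hc : IsCompact Z := isCompact_Icc.inter_right (isClosed_le hp continuous_const)
  have hne : Z.Nonempty := ⟨a, ⟨le_rfl, ha1.le⟩, ha⟩
  obtain ⟨r, hr, hmax⟩ := hc.exists_isGreatest hne
  have hr1 : r < 1 := by
    rcases lt_or_eq_of_le hr.1.2 with h | h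
    · exact h
    · have h2 : p r ≤ 0 := hr.2
      rw [h] at h2; linarith [h1 1 le_rfl]
  have hgt : ∀ z, r < z → 0 < p z := by
    intro z hz
    by_contra h; push Not at h
    rcases le_or_gt 1 z with h' | h'
    · linarith [h1 z h']
    · have : z ∈ Z := ⟨⟨hr.1.1.trans hz.le, h'.le⟩, h⟩
      linarith [hmax this]
  refine ⟨r, hr.1.1, hr1, ?_, hgt⟩
  refine le_antisymm hr.2 ?_
  have : Tendsto p (nhdsWithin r (Set.Ioi r)) (nhds (p r)) := hp.continuousAt.continuousWithinAt
  refine ge_of_tendsto this ?_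
  filter_upwards [self_mem_nhdsWithin] with z hz using (hgt z hz).le

lemma H_root {n : ℕ} (hn : 5 ≤ n) : ∀ d : ℕ, ∃ r, 0 ≤ r ∧ r < 1 ∧ (Hp n (d + 1)).eval r = 0 ∧
    (∀ z, r < z → 0 < (Hp n (d + 1)).eval z) ∧ ∀ k ≤ d, ∀ z, r ≤ z → 0 < (Hp n k).eval z := by
  intro d
  induction d with
  | zero =>
    refine ⟨0, le_rfl, one_pos, by simp [Hp], ?_, ?_⟩
    · intro z hz; simp [Hp]; exact mul_pos (by exact_mod_cast (by omega : 0 < n)) hz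
    · intro k hk z _
      obtain rfl : k = 0 := by omega
      simp [Hp]
  | succ d ih =>
    obtain ⟨a, ha0, ha1, hroot, hgt, hk⟩ := ih
    have hrec := Hp_rec n d a
    rw [hroot] at hrec
    have hneg : (Hp n (d + 2)).eval a < 0 := by
      have h1 := hk d le_rfl a le_rfl
      have h2 : (0 : ℝ) < d + n := by
        have : (5 : ℝ) ≤ n := by exact_mod_cast hn
        positivity
      have h3 : ((d : ℝ) + 2) * (Hp n (d + 2)).eval a < 0 := by
        rw [hrec]; nlinarith
      by_contra h; push Not at h
      have : 0 ≤ ((d : ℝ) + 2) * (Hp n (d + 2)).eval a := by positivity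
      linarith
    obtain ⟨r, h1, h2, h3, h4⟩ := top_zero (fun z => (Hp n (d + 2)).eval z) (Hp n (d + 2)).continuous a hneg.le
      (fun z hz => (Hp_pos_of_one_le hn z hz _).1)
    have har : a < r := by
      rcases lt_or_eq_of_le h1 with h | h
      · exact h
      · rw [← h] at h3; exact absurd h3 hneg.ne
    refine ⟨r, ha0.trans h1, h2, h3, h4, ?_⟩
    intro k hk' z hz
    rcases Nat.lt_or_ge d k with h | h
    · obtain rfl : k = d + 1 := by omega
      exact hgt z (by linarith)
    · exact hk k h z (by linarith)

lemma Q_root {n : ℕ} (hn : 5 ≤ n) (d : ℕ) : ∃ r, r < 1 ∧ (Hp n (d + 1)).eval r + (Hp n d).eval r = 0 ∧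
    (∀ z, r < z → 0 < (Hp n (d + 1)).eval z + (Hp n d).eval z) ∧ ∀ k ≤ d, ∀ z, r ≤ z → 0 < (Hp n k).eval z := by
  have hn' : (5 : ℝ) ≤ n := by exact_mod_cast hn
  have hone : ∀ z, 1 ≤ z → 0 < (Hp n (d + 1)).eval z + (Hp n d).eval z := fun z hz =>
    add_pos (Hp_pos_of_one_le hn z hz _).1 (Hp_pos_of_one_le hn z hz _).1
  have hc : Continuous (fun z => (Hp n (d + 1)).eval z + (Hp n d).eval z) :=
    (Hp n (d + 1)).continuous.add (Hp n d).continuous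
  match d, hone, hc with
  | 0, hone, hc =>
    obtain ⟨r, h1, h2, h3, h4⟩ := top_zero _ hc (-1) (by simp [Hp]; linarith) hone
    refine ⟨r, h2, h3, h4, ?_⟩
    intro k hk z _
    obtain rfl : k = 0 := by omega
    simp [Hp]
  | d + 1, hone, hc =>
    obtain ⟨a, ha0, ha1, hroot, hgt, hk⟩ := H_root hn d
    have hrec := Hp_rec n d a
    rw [hroot] at hrec
    have hneg : (Hp n (d + 2)).eval a < 0 := by
      have h1 := hk d le_rfl a le_rfl
      have h2 : (0 : ℝ) < d + n := by positivity
      have h3 : ((d : ℝ) + 2) * (Hp n (d + 2)).eval a < 0 := by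
        rw [hrec]; nlinarith
      by_contra h; push Not at h
      have : 0 ≤ ((d : ℝ) + 2) * (Hp n (d + 2)).eval a := by positivity
      linarith
    obtain ⟨r, h1, h2, h3, h4⟩ := top_zero _ hc a (by rw [hroot]; linarith [hneg]) hone
    have har : a < r := by
      rcases lt_or_eq_of_le h1 with h | h
      · exact h
      · rw [← h, hroot] at h3; linarith [hneg]
    refine ⟨r, h2, h3, h4, ?_⟩
    intro k hk' z hz
    rcases Nat.lt_or_ge d k with h | h
    · obtain rfl : k = d + 1 := by omega
      exact hgt z (by linarith)
    · exact hk k h z (by linarith)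

lemma maxRoot_H {n : ℕ} (hn : 5 ≤ n) (d : ℕ) : ∃ r, 0 ≤ r ∧ r < 1 ∧
    maxRoot (((n : ℝ) - 3) / 2 + 1) (((n : ℝ) - 3) / 2 + 1) (d + 1) = r ∧
    (Hp n (d + 1)).eval r = 0 ∧ ∀ k ≤ d, 0 < (Hp n k).eval r := by
  obtain ⟨r, h0, h1, h2, h3, h4⟩ := H_root hn d
  refine ⟨r, h0, h1, ?_, h2, fun k hk => h4 k hk r le_rfl⟩
  unfold maxRoot
  refine IsGreatest.csSup_eq ⟨?_, ?_⟩
  · show jacobiP _ _ _ _ = 0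
    rw [jacobi_H hn, h2, mul_zero]
  · intro x hx
    have hx' : jacobiP (((n : ℝ) - 3) / 2 + 1) (((n : ℝ) - 3) / 2 + 1) (d + 1) x = 0 := hx
    rw [jacobi_H hn] at hx'
    by_contra h; push Not at h
    exact absurd hx' (mul_pos (cj_pos hn _) (h3 x h)).ne'

lemma maxRoot_Q {n : ℕ} (hn : 5 ≤ n) (d : ℕ) : ∃ r, r < 1 ∧
    maxRoot (((n : ℝ) - 3) / 2 + 1) (((n : ℝ) - 3) / 2) (d + 1) = r ∧
    (Hp n (d + 1)).eval r + (Hp n d).eval r = 0 ∧ ∀ k ≤ d, 0 < (Hp n k).eval r := by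
  obtain ⟨r, h1, h2, h3, h4⟩ := Q_root hn d
  refine ⟨r, h1, ?_, h2, fun k hk => h4 k hk r le_rfl⟩
  unfold maxRoot
  refine IsGreatest.csSup_eq ⟨?_, ?_⟩
  · show jacobiP _ _ _ _ = 0
    rw [jacobi_Q hn, h2, mul_zero]
  · intro x hx
    have hx' : jacobiP (((n : ℝ) - 3) / 2 + 1) (((n : ℝ) - 3) / 2) (d + 1) x = 0 := hx
    rw [jacobi_Q hn] at hx'
    by_contra h; push Not at h
    exact absurd hx' (mul_pos (half_pos (cj_pos hn _)) (h3 x h)).ne'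

def gg (n k : ℕ) : ℝ := (k : ℝ) * (k + n - 1) / ((2 * k + n) * (2 * k + n - 2))

lemma gg_eq {n : ℕ} (hn : 5 ≤ n) (k : ℕ) : 4 * gg n k = 1 - (n : ℝ) * (n - 2) / ((2 * k + n) * (2 * k + n - 2)) := by
  have hn' : (5 : ℝ) ≤ n := by exact_mod_cast hn
  have hk : (0 : ℝ) ≤ k := Nat.cast_nonneg k
  unfold gg
  have h3 : ((2 * k + n) * (2 * k + n - 2) : ℝ) ≠ 0 := by
    apply mul_ne_zero <;> linarith
  rw [eq_sub_iff_add_eq, ← mul_div_assoc, ← add_div, div_eq_iff h3]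
  ring

lemma gg_mono {n : ℕ} (hn : 5 ≤ n) {j k : ℕ} (h : j ≤ k) : gg n j ≤ gg n k := by
  have hn' : (5 : ℝ) ≤ n := by exact_mod_cast hn
  have e1 := gg_eq hn j
  have e2 := gg_eq hn k
  have hj : (0 : ℝ) ≤ j := Nat.cast_nonneg j
  have hjk : (j : ℝ) ≤ k := by exact_mod_cast h
  have : ((n : ℝ)) * (n - 2) / ((2 * k + n) * (2 * k + n - 2)) ≤
      ((n : ℝ)) * (n - 2) / ((2 * j + n) * (2 * j + n - 2)) := by
    apply div_le_div_of_nonneg_left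
    · apply mul_nonneg <;> linarith
    · apply mul_pos <;> linarith
    · apply mul_le_mul <;> linarith
  linarith

/-- ratios -/
def rho (n : ℕ) (s : ℝ) (k : ℕ) : ℝ := ((k : ℝ) + 1) / (2 * k + n) * ((Hp n (k + 1)).eval s / (Hp n k).eval s)

lemma rho_zero {n : ℕ} (hn : 5 ≤ n) (s : ℝ) : rho n s 0 = s := by
  have hn' : (n : ℝ) ≠ 0 := by positivity
  simp [rho, Hp]; field_simp

lemma rho_succ {n : ℕ} (hn : 5 ≤ n) (s : ℝ) (k : ℕ) (h0 : 0 < (Hp n k).eval s) (h1 : 0 < (Hp n (k + 1)).eval s) :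
    rho n s (k + 1) = s - gg n (k + 1) / rho n s k := by
  have hn' : (5 : ℝ) ≤ n := by exact_mod_cast hn
  have hk : (0 : ℝ) ≤ k := Nat.cast_nonneg k
  have r := Hp_rec n k s
  unfold rho gg
  rw [show k + 1 + 1 = k + 2 from rfl]
  push_cast
  rw [show (2 * (k + 1) + n - 2 : ℝ) = 2 * k + n by ring, show (k + 1 + n - 1 : ℝ) = k + n by ring]
  have a1 : (2 * k + n : ℝ) ≠ 0 := by positivity
  have a2 : (2 * (k + 1) + n : ℝ) ≠ 0 := by positivity
  have a3 := h0.ne'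
  have a4 := h1.ne'
  field_simp
  linear_combination r

lemma rho_pos {n : ℕ} (hn : 5 ≤ n) (s : ℝ) (k : ℕ) (h0 : 0 < (Hp n k).eval s) (h1 : 0 < (Hp n (k + 1)).eval s) :
    0 < rho n s k := by
  unfold rho; positivity

lemma gg_nonneg {n : ℕ} (hn : 5 ≤ n) (k : ℕ) : 0 ≤ gg n k := by
  have := gg_mono hn (Nat.zero_le k)
  simpa [gg] using this

lemma root_lower_aux {n : ℕ} (hn : 5 ≤ n) {s : ℝ} (hs1 : s ≤ 1) (j m : ℕ) (hm : 1 ≤ m)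
    (hpos : ∀ k ≤ j + m + 1, 0 < (Hp n k).eval s) : 4 * gg n (j + 1) - 4 / m ≤ s ^ 2 := by
  by_contra hcon
  push Not at hcon
  have hm' : (0 : ℝ) < m := by exact_mod_cast hm
  set δ := gg n (j + 1) - s ^ 2 / 4 with hδ
  have hδm : 1 < m * δ := by
    have : 4 / (m : ℝ) < 4 * δ := by rw [hδ]; linarith
    rw [div_lt_iff₀ hm'] at this; linarith
  have hδ0 : 0 < δ := by
    by_contra h; push Not at h; nlinarith
  have hle : ∀ k ≤ j + m, rho n s k ≤ s := by
    intro k hk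
    match k with
    | 0 => rw [rho_zero hn]
    | k + 1 =>
      rw [rho_succ hn s k (hpos k (by omega)) (hpos (k + 1) (by omega))]
      have := div_nonneg (gg_nonneg hn (k + 1)) (rho_pos hn s k (hpos k (by omega)) (hpos (k + 1) (by omega))).le
      linarith
  have hdec : ∀ i ≤ m, rho n s (j + i) ≤ 1 - i * δ := by
    intro i
    induction i with
    | zero => intro _; simpa using (hle j (by omega)).trans hs1
    | succ i ih =>
      intro hi
      have h1 := ih (by omega)
      have hp := rho_pos hn s (j + i) (hpos _ (by omega)) (hpos _ (by omega))
      have h2 := rho_succ hn s (j + i) (hpos _ (by omega)) (hpos _ (by omega))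
      have h3 := hle (j + i) (by omega)
      have hg : gg n (j + 1) ≤ gg n (j + i + 1) := gg_mono hn (by omega)
      have : rho n s (j + i + 1) ≤ rho n s (j + i) - δ := by
        rw [h2, sub_le_iff_le_add, ← sub_le_iff_le_add', le_div_iff₀ hp]
        set u := rho n s (j + i)
        have : 0 ≤ δ * (1 - u) := mul_nonneg hδ0.le (by linarith)
        nlinarith [sq_nonneg (u - s / 2)]
      rw [← add_assoc]; push_cast; linarith
  have h1 := hdec m le_rfl
  have h2 := rho_pos hn s (j + m) (hpos _ (by omega)) (hpos _ (by omega))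
  linarith

/-- limit value of squared root -/
def Gam (n d : ℕ) : ℝ := 1 - (n : ℝ) ^ 2 / (2 * d + n) ^ 2

lemma root_lower {n : ℕ} (hn : 5 ≤ n) {s : ℝ} (hs1 : s ≤ 1) (d m : ℕ) (hm : 1 ≤ m)
    (hpos : ∀ k < d, 0 < (Hp n k).eval s) : Gam n d - 4 * (m + 1) / n - 4 / m ≤ s ^ 2 := by
  have hn' : (5 : ℝ) ≤ n := by exact_mod_cast hn
  have hm' : (0 : ℝ) < m := by exact_mod_cast hm
  rcases Nat.lt_or_ge d (m + 2) with h | h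
  · have hd : (d : ℝ) ≤ m + 1 := by exact_mod_cast (by omega : d ≤ m + 1)
    have hd0 : (0 : ℝ) ≤ d := Nat.cast_nonneg d
    have h1 : Gam n d ≤ 4 * (m + 1) / n := by
      unfold Gam
      have : 4 * (d : ℝ) / n ≤ 4 * (m + 1) / n := by gcongr
      refine le_trans ?_ this
      rw [sub_le_iff_le_add, div_add_div _ _ (by positivity) (by positivity), le_div_iff₀ (by positivity)]
      nlinarith [mul_nonneg hd0 hd0, mul_nonneg (mul_nonneg hd0 hd0) hd0, mul_nonneg (mul_nonneg hd0 hd0) (by linarith : (0:ℝ) ≤ n), mul_nonneg hd0 (mul_nonneg (by linarith : (0:ℝ) ≤ n) (by linarith : (0:ℝ) ≤ n)) ]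
    have h2 : 0 ≤ 4 / (m : ℝ) := by positivity
    nlinarith [sq_nonneg s]
  · obtain ⟨j, rfl⟩ : ∃ j, d = j + m + 2 := ⟨d - m - 2, by omega⟩
    have h1 := root_lower_aux hn hs1 j m hm (fun k hk => hpos k (by omega))
    have h2 := gg_eq hn (j + 1)
    have hj : (0 : ℝ) ≤ j := Nat.cast_nonneg j
    suffices hh : Gam n (j + m + 2) ≤ 4 * gg n (j + 1) + 4 * (m + 1) / n by linarith
    rw [h2]
    unfold Gam
    push_cast
    obtain ⟨N, hN⟩ : ∃ N : ℝ, N = 2 * (j + 1) + n := ⟨_, rfl⟩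
    rw [show (2 * (j + m + 2) + n : ℝ) = N + 2 * (m + 1) by rw [hN]; ring, ← hN]
    have hNn : (n : ℝ) ≤ N := by rw [hN]; linarith
    have hN0 : 0 < N := by linarith
    have e1 : (n : ℝ) * (n - 2) / (N * (N - 2)) ≤ n ^ 2 / N ^ 2 := by
      rw [div_le_div_iff₀ (by apply mul_pos <;> linarith) (by positivity)]
      have : 0 ≤ (n : ℝ) * N * (N - n) := by
        apply mul_nonneg; positivity
        linarith
      nlinarith
    have e2 : (n : ℝ) ^ 2 / N ^ 2 - n ^ 2 / (N + 2 * (m + 1)) ^ 2 ≤ 4 * (m + 1) / n := by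
      have hN0 : 0 < N := by linarith
      rw [div_sub_div _ _ (by positivity) (by positivity), div_le_div_iff₀ (by positivity) (by positivity)]
      have a1 : (n : ℝ) ^ 3 ≤ N ^ 2 * (N + 2 * (m + 1)) := by
        have : (n : ℝ) ^ 3 ≤ N ^ 3 := by gcongr
        nlinarith [mul_nonneg (sq_nonneg N) hm'.le, sq_nonneg N]
      have a2 : (0 : ℝ) ≤ 4 * (m + 1) * (N + 2 * (m + 1)) := by positivity
      have a3 := mul_le_mul_of_nonneg_left a1 a2
      have a4 : (n : ℝ) ^ 3 * (2 * (m + 1)) * (2 * N + 2 * (m + 1)) ≤ 4 * (m + 1) * (N + 2 * (m + 1)) * n ^ 3 := by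
        have : (0 : ℝ) ≤ n ^ 3 * (m + 1) ^ 2 := by positivity
        nlinarith
      calc _ = (n : ℝ) ^ 3 * (2 * (m + 1)) * (2 * N + 2 * (m + 1)) := by ring
        _ ≤ _ := a4
        _ ≤ _ := a3
        _ = _ := by ring
    linarith

lemma root_upper {n : ℕ} (hn : 5 ≤ n) {s : ℝ} (hs0 : 0 ≤ s) (d : ℕ) (hd : 1 ≤ d)
    (hpos : ∀ k < d, 0 < (Hp n k).eval s) (hneg : (Hp n d).eval s ≤ 0) : s ^ 2 ≤ Gam n d + 2 / n := by
  have hn' : (5 : ℝ) ≤ n := by exact_mod_cast hn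
  have hd0 : (1 : ℝ) ≤ d := by exact_mod_cast hd
  have hG : (4 : ℝ) * gg n (d - 1) ≤ Gam n d + 2 / n := by
    rw [gg_eq hn]; unfold Gam
    rw [Nat.cast_sub hd]; push_cast
    rw [show (2 * ((d : ℝ) - 1) + n) = 2 * d + n - 2 by ring]
    obtain ⟨N, hN⟩ : ∃ N : ℝ, N = 2 * d + n := ⟨_, rfl⟩
    rw [← hN]
    have hNn : (n : ℝ) + 2 ≤ N := by rw [hN]; linarith
    have hN0 : 0 < N := by linarith
    have e1 : (n : ℝ) * (n - 2) / N ^ 2 ≤ n * (n - 2) / ((N - 2) * (N - 2 - 2)) := by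
      apply div_le_div_of_nonneg_left
      · apply mul_nonneg <;> linarith
      · apply mul_pos <;> linarith
      · nlinarith
    have e2 : (n : ℝ) * (n - 2) / N ^ 2 = n ^ 2 / N ^ 2 - 2 * n / N ^ 2 := by ring
    have e3 : 2 * n / N ^ 2 ≤ 2 / (n : ℝ) := by
      rw [div_le_div_iff₀ (by positivity) (by positivity)]; nlinarith
    linarith
  refine le_trans ?_ hG
  by_contra hcon
  push Not at hcon
  have hs : 0 < s := by
    rcases lt_or_eq_of_le hs0 with h | h
    · exact h
    · rw [← h] at hcon; have := gg_nonneg hn (d - 1); norm_num at hcon; linarith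
  have key : ∀ k < d, s / 2 ≤ rho n s k := by
    intro k
    induction k with
    | zero => intro _; rw [rho_zero hn]; linarith
    | succ k ih =>
      intro hk
      have h1 := ih (by omega)
      rw [rho_succ hn s k (hpos k (by omega)) (hpos (k + 1) hk)]
      have hg : gg n (k + 1) ≤ gg n (d - 1) := gg_mono hn (by omega)
      have : gg n (k + 1) / rho n s k ≤ s / 2 := by
        rw [div_le_iff₀ (by linarith)]
        nlinarith
      linarith
  have h1 := key (d - 1) (by omega)
  have h2 : rho n s (d - 1) ≤ 0 := by
    unfold rho
    rw [Nat.sub_add_cancel hd]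
    apply mul_nonpos_of_nonneg_of_nonpos (by positivity)
    exact div_nonpos_of_nonpos_of_nonneg hneg (hpos (d - 1) (by omega)).le
  linarith

/-- The data of Levenshtein's bound. -/
lemma lev_data {n : ℕ} (hn : 1000 ≤ n) (θ : ℝ) (hC : Real.cos θ ≤ 1 / 2) :
    ∃ (d e : ℕ) (s : ℝ), 1 ≤ d ∧ e ≤ 1 ∧ Real.cos θ ≤ s ∧ s < 1 ∧ (Yp n d e).eval s = 0 ∧
      (∀ k < d, 0 < (Hp n k).eval s) ∧ MLev n θ = (1 + 1) ^ e * (Yp n d e).eval 1 := by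
  have hn5 : 5 ≤ n := by omega
  have hne : {d : ℕ | 1 ≤ d ∧ Real.cos θ ≤ maxRoot (((n : ℝ) - 3) / 2 + 1) (((n : ℝ) - 3) / 2 + 1) d}.Nonempty := by
    refine ⟨n, by omega, ?_⟩
    obtain ⟨m, hm⟩ : ∃ m, n = m + 1 := ⟨n - 1, by omega⟩
    obtain ⟨r, h0, h1, h2, h3, h4⟩ := maxRoot_H hn5 m
    rw [← hm] at h2
    rw [h2]
    have h5 := root_lower hn5 h1.le n 20 (by norm_num) (fun k hk => h4 k (by omega))
    have hn' : (1000 : ℝ) ≤ n := by exact_mod_cast hn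
    have e1 : Gam n n = 8 / 9 := by
      unfold Gam
      have : (n : ℝ) ≠ 0 := by linarith
      rw [show (2 * (n : ℝ) + n) = 3 * n by ring]
      field_simp; norm_num
    have e2 : 4 * (((20 : ℕ) : ℝ) + 1) / n ≤ 84 / 1000 := by
      push_cast
      rw [div_le_div_iff₀ (by linarith) (by norm_num)]; linarith
    rw [e1] at h5
    push_cast at h5 e2
    by_contra h; push Not at h
    have : r ^ 2 < 1 / 4 := by nlinarith
    linarith
  have hmem := Nat.sInf_mem hne
  have hL : sInf {d : ℕ | 1 ≤ d ∧ Real.cos θ ≤ maxRoot (((n : ℝ) - 3) / 2 + 1) (((n : ℝ) - 3) / 2 + 1) d} = levD n θ := rfl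
  rw [hL] at hmem
  obtain ⟨hd1, hd2⟩ := hmem
  unfold MLev
  generalize levD n θ = D at *
  obtain ⟨d, rfl⟩ : ∃ d, D = d + 1 := ⟨D - 1, by omega⟩
  split_ifs with hif
  · obtain ⟨r, h0, h1, h2, h3, h4⟩ := maxRoot_H hn5 d
    rw [h2] at hd2
    refine ⟨d + 1, 1, r, by omega, le_rfl, hd2, h1, ?_, fun k hk => h4 k (by omega), ?_⟩
    · simp [Yp, h3]
    · rw [Yp]
      simp [Hp_one hn5]; norm_num
  · obtain ⟨r, h1, h2, h3, h4⟩ := maxRoot_Q hn5 d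
    rw [h2] at hif
    push Not at hif
    refine ⟨d + 1, 0, r, by omega, by omega, hif, h1, ?_, fun k hk => h4 k (by omega), ?_⟩
    · simp [Yp, h3]
    · rw [Yp]
      simp only [pow_zero, one_mul, CharP.cast_eq_zero, sub_zero, map_one, Nat.add_sub_cancel, eval_add, Hp_one hn5]
      rw [show d + 1 + n - 2 = d + n - 1 by omega]
end Roots
end SPB

namespace SPB
open Polynomial

lemma Hp_zero_eval (n : ℕ) (t : ℝ) : (Hp n 0).eval t = 1 := by simp [Hp]
lemma Hp_one_eval (n : ℕ) (t : ℝ) : (Hp n 1).eval t = n * t := by simp [Hp]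

lemma Hp_rec' (n k : ℕ) (t : ℝ) : ((k : ℝ) + 2) * (derivative (Hp n (k + 2))).eval t =
    (2 * k + 2 + n) * ((Hp n (k + 1)).eval t + t * (derivative (Hp n (k + 1))).eval t)
      - (k + n) * (derivative (Hp n k)).eval t := by
  have h : C ((k : ℝ) + 2) * Hp n (k + 2) = C (2 * k + 2 + n : ℝ) * (X * Hp n (k + 1)) - C (k + n : ℝ) * Hp n k := by
    apply Polynomial.funext; intro x
    simpa using Hp_rec n k x
  have h2 := congrArg (fun p => (derivative p).eval t) h
  simpa [derivative_mul] using h2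

lemma Hp_der (n : ℕ) (t : ℝ) : ∀ k : ℕ, (1 - t ^ 2) * (derivative (Hp n k)).eval t =
    (k + n) * t * (Hp n k).eval t - (k + 1) * (Hp n (k + 1)).eval t
  | 0 => by simp [Hp]
  | 1 => by
      have h := Hp_rec n 0 t
      have h' := Hp_rec' n 0 t
      have e : derivative (Hp n 1) = C (n : ℝ) := by simp [Hp]
      rw [e]
      simp only [Nat.cast_zero, zero_add, Hp_zero_eval, Hp_one_eval, eval_C] at *
      push_cast
      linear_combination h
  | (k + 2) => by
      have h1 := Hp_der n t k
      have h2 := Hp_der n t (k + 1)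
      have r0 := Hp_rec' n k t
      have r1 := Hp_rec n k t
      have r2 := Hp_rec n (k + 1) t
      push_cast at *
      have hk : (k : ℝ) + 2 ≠ 0 := by positivity
      apply mul_left_cancel₀ hk
      simp only [show k + 1 + 1 = k + 2 from rfl, show k + 1 + 2 = k + 2 + 1 from rfl] at *
      linear_combination (1 - t ^ 2) * r0 + (2 * k + 2 + n : ℝ) * t * h2 - (k + n : ℝ) * h1 - (k + n : ℝ) * t * r1 + (k + 2 : ℝ) * r2

lemma Hp_der' (n : ℕ) (t : ℝ) (k : ℕ) : (1 - t ^ 2) * (derivative (Hp n (k + 1))).eval t =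
    - (k + 1) * t * (Hp n (k + 1)).eval t + (k + n) * (Hp n k).eval t := by
  have h1 := Hp_der n t (k + 1)
  have r1 := Hp_rec n k t
  push_cast at *
  linear_combination h1 - r1

lemma Hp_ode (n : ℕ) (t : ℝ) (ht : 1 - t ^ 2 ≠ 0) (k : ℕ) :
    (1 - t ^ 2) * (derivative (derivative (Hp n (k + 1)))).eval t =
    (n + 1) * t * (derivative (Hp n (k + 1))).eval t - (k + 1) * (k + 1 + n) * (Hp n (k + 1)).eval t := by
  have h : (1 - X ^ 2) * derivative (Hp n (k + 1)) =
      C (-((k : ℝ) + 1)) * (X * Hp n (k + 1)) + C (k + n : ℝ) * Hp n k := by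
    apply Polynomial.funext; intro x
    have := Hp_der' n x k
    simp only [eval_mul, eval_sub, eval_one, eval_pow, eval_X, eval_add, eval_C]
    linear_combination this
  have h2 := congrArg (fun p => (derivative p).eval t) h
  simp only [derivative_mul, derivative_sub, derivative_one, derivative_X_pow, derivative_X, derivative_C, derivative_add,
    eval_mul, eval_sub, eval_one, eval_pow, eval_X, eval_add, eval_C, eval_zero] at h2
  have a := Hp_der' n t k
  have b := Hp_der n t k
  apply mul_left_cancel₀ ht
  push_cast at h2
  linear_combination (1 - t ^ 2) * h2 + (k + n : ℝ) * b - (k + n : ℝ) * t * a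

lemma Yp_ode (n d e : ℕ) (hd : 1 ≤ d) (he : e ≤ 1) (t : ℝ) (ht : 1 - t ^ 2 ≠ 0) :
    (1 - t ^ 2) * (derivative (derivative (Yp n d e))).eval t =
    ((n + e) * t + (1 - e)) * (derivative (Yp n d e)).eval t - d * (d + n - (1 - e)) * (Yp n d e).eval t := by
  obtain ⟨k, rfl⟩ : ∃ k, d = k + 1 := ⟨d - 1, by omega⟩
  have h1 := Hp_ode n t ht k
  unfold Yp
  simp only [Nat.add_sub_cancel, derivative_add, derivative_mul, derivative_C, eval_add, eval_mul, eval_C, eval_zero, zero_mul, zero_add]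
  interval_cases e
  · have h2 : (1 - t ^ 2) * (derivative (derivative (Hp n k))).eval t =
      (n + 1) * t * (derivative (Hp n k)).eval t - k * (k + n) * (Hp n k).eval t := by
      rcases k with _ | k
      · simp [Hp]
      · have := Hp_ode n t ht k
        push_cast; linear_combination this
    have a := Hp_der' n t k
    have b := Hp_der n t k
    have hp : 1 + t ≠ 0 := by
      intro h; apply ht; linear_combination (1 - t) * h
    apply mul_left_cancel₀ hp
    push_cast
    linear_combination (1 + t) * h1 + (1 + t) * h2 - a - b
  · push_cast
    linear_combination h1
end SPB

namespace SPB
open Polynomial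

lemma taylor_aux {f f' f'' : ℝ → ℝ} {s r V ε : ℝ} (hr : 0 ≤ r) (hV : 0 ≤ V)
    (h1 : ∀ t ∈ Set.Icc (s - r) (s + r), HasDerivAt f (f' t) t)
    (h2 : ∀ t ∈ Set.Icc (s - r) (s + r), HasDerivAt f' (f'' t) t)
    (hb : ∀ t ∈ Set.Icc (s - r) (s + r), |f'' t| ≤ V * |f t|)
    (h0 : f s = 0) (hε : V * r ^ 2 ≤ ε) (hε2 : ε ≤ 1 / 2) :
    ∀ t ∈ Set.Icc (s - r) (s + r), |f t - f' s * (t - s)| ≤ 2 * ε * |f' s| * |t - s| := by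
  have hs : s ∈ Set.Icc (s - r) (s + r) := ⟨by linarith, by linarith⟩
  have hcont : ContinuousOn (fun t => |f' t|) (Set.Icc (s - r) (s + r)) := fun t ht =>
    ((h2 t ht).continuousAt.continuousWithinAt).abs
  obtain ⟨t0, ht0, hmax⟩ := isCompact_Icc.exists_isMaxOn ⟨s, hs⟩ hcont
  set K := |f' t0| with hK
  have hK0 : 0 ≤ K := abs_nonneg _
  have hle : ∀ t ∈ Set.Icc (s - r) (s + r), |f' t| ≤ K := fun t ht => hmax ht
  have hd : ∀ t ∈ Set.Icc (s - r) (s + r), |t - s| ≤ r := fun t ht => abs_le.2 ⟨by linarith [ht.1], by linarith [ht.2]⟩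
  have c1 : ∀ t ∈ Set.Icc (s - r) (s + r), |f t| ≤ K * r := by
    intro t ht
    have := (convex_Icc (s - r) (s + r)).norm_image_sub_le_of_norm_hasDerivWithin_le
      (fun x hx => (h1 x hx).hasDerivWithinAt) (C := K) (fun x hx => hle x hx) hs ht
    rw [h0, sub_zero, Real.norm_eq_abs, Real.norm_eq_abs] at this
    exact this.trans (mul_le_mul_of_nonneg_left (hd t ht) hK0)
  have c2 : ∀ t ∈ Set.Icc (s - r) (s + r), |f' t - f' s| ≤ ε * K := by
    intro t ht
    have := (convex_Icc (s - r) (s + r)).norm_image_sub_le_of_norm_hasDerivWithin_le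
      (fun x hx => (h2 x hx).hasDerivWithinAt) (C := V * (K * r))
      (fun x hx => (hb x hx).trans (mul_le_mul_of_nonneg_left (c1 x hx) hV)) hs ht
    rw [Real.norm_eq_abs, Real.norm_eq_abs] at this
    refine this.trans ((mul_le_mul_of_nonneg_left (hd t ht) (by positivity)).trans ?_)
    calc V * (K * r) * r = V * r ^ 2 * K := by ring
      _ ≤ _ := mul_le_mul_of_nonneg_right hε hK0
  have c3 : K ≤ 2 * |f' s| := by
    have := c2 t0 ht0
    have h3 := abs_sub_abs_le_abs_sub (f' t0) (f' s)
    have : ε * K ≤ 1 / 2 * K := mul_le_mul_of_nonneg_right hε2 hK0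
    linarith
  have hε0 : 0 ≤ ε := le_trans (by positivity) hε
  intro t ht
  have := (convex_Icc (s - r) (s + r)).norm_image_sub_le_of_norm_hasDerivWithin_le
      (f := fun t => f t - f' s * (t - s)) (f' := fun t => f' t - f' s * 1)
      (fun x hx => ((h1 x hx).sub (((hasDerivAt_id x).sub_const s).const_mul (f' s))).hasDerivWithinAt) (C := ε * K)
      (fun x hx => by rw [mul_one]; exact c2 x hx) hs ht
  simp only [h0, sub_self, mul_zero, sub_zero, Real.norm_eq_abs] at this
  refine this.trans (mul_le_mul_of_nonneg_right ?_ (abs_nonneg _))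
  nlinarith

/-- Liouville factor -/
def EE (n e : ℕ) (t : ℝ) : ℝ := exp (((n : ℝ) + 1) / 4 * log (1 - t) + ((n : ℝ) - 1 + 2 * e) / 4 * log (1 + t))
def mm (n e : ℕ) (t : ℝ) : ℝ := -(((n : ℝ) + e) * t + (1 - e)) / (2 * (1 - t ^ 2))
def VV (n d e : ℕ) (t : ℝ) : ℝ :=
  (-2 * (((n : ℝ) + e) * (1 - t ^ 2) + 2 * t * (((n : ℝ) + e) * t + (1 - e))) + (((n : ℝ) + e) * t + (1 - e)) ^ 2
    - 4 * (d * (d + n - (1 - e))) * (1 - t ^ 2)) / (4 * (1 - t ^ 2) ^ 2)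

lemma EE_der (n e : ℕ) (t : ℝ) (h1 : -1 < t) (h2 : t < 1) : HasDerivAt (EE n e) (mm n e t * EE n e t) t := by
  unfold EE
  have a1 : HasDerivAt (fun t : ℝ => log (1 - t)) (-1 / (1 - t)) t := by
    have := ((hasDerivAt_id t).const_sub 1).log (by simp; linarith)
    simpa using this
  have a2 : HasDerivAt (fun t : ℝ => log (1 + t)) (1 / (1 + t)) t := by
    have := ((hasDerivAt_id t).const_add 1).log (by simp; linarith)
    simpa using this
  have := ((a1.const_mul (((n : ℝ) + 1) / 4)).add (a2.const_mul (((n : ℝ) - 1 + 2 * e) / 4))).exp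
  refine this.congr_deriv ?_
  rw [mul_comm]
  congr 1
  unfold mm
  have b1 : 1 - t ≠ 0 := by linarith
  have b2 : 1 + t ≠ 0 := by linarith
  rw [show 1 - t ^ 2 = (1 - t) * (1 + t) by ring]
  field_simp
  ring

lemma mm_der (n e : ℕ) (t : ℝ) (h : 1 - t ^ 2 ≠ 0) : HasDerivAt (mm n e)
    (-(((n : ℝ) + e) * (1 - t ^ 2) + 2 * t * (((n : ℝ) + e) * t + (1 - e))) / (2 * (1 - t ^ 2) ^ 2)) t := by
  unfold mm
  have a1 : HasDerivAt (fun t : ℝ => -(((n : ℝ) + e) * t + (1 - e))) (-((n : ℝ) + e)) t := by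
    have := (((hasDerivAt_id t).const_mul ((n : ℝ) + e)).add_const ((1 : ℝ) - e)).neg
    rw [mul_one] at this
    exact this
  have a2 : HasDerivAt (fun t : ℝ => 2 * (1 - t ^ 2)) (2 * (- (2 * t))) t := by
    have := ((hasDerivAt_pow 2 t).const_sub 1).const_mul 2
    simpa using this
  refine (a1.div a2 (by simpa using h)).congr_deriv ?_
  field_simp
  ring

lemma phi_der (n d e : ℕ) (hd : 1 ≤ d) (he : e ≤ 1) (t : ℝ) (h1 : -1 < t) (h2 : t < 1) :
    HasDerivAt (fun t => (Yp n d e).eval t * EE n e t)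
      (((derivative (Yp n d e)).eval t + mm n e t * (Yp n d e).eval t) * EE n e t) t ∧
    HasDerivAt (fun t => ((derivative (Yp n d e)).eval t + mm n e t * (Yp n d e).eval t) * EE n e t)
      (VV n d e t * ((Yp n d e).eval t * EE n e t)) t := by
  have ht : 1 - t ^ 2 ≠ 0 := by nlinarith
  have y1 := (Yp n d e).hasDerivAt t
  have y2 := (derivative (Yp n d e)).hasDerivAt t
  have hE := EE_der n e t h1 h2
  have hm := mm_der n e t ht
  have ode := Yp_ode n d e hd he t ht
  constructor
  · exact (y1.mul hE).congr_deriv (by ring)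
  · refine ((y2.add (hm.mul y1)).mul hE).congr_deriv ?_
    rw [mul_comm, ← eq_div_iff ht] at ode
    rw [ode]
    simp only [Pi.add_apply, Pi.mul_apply]
    unfold VV mm
    field_simp
    ring
end SPB

namespace SPB
open Polynomial

lemma VV_aux {n d e t κ : ℝ} (hn : 1000 ≤ n) (hd0 : 0 ≤ d) (hdn : d ≤ n / 4) (he0 : 0 ≤ e) (he1 : e ≤ 1)
    (htt : t ^ 2 ≤ 9 / 16) (ht : |t| ≤ 3 / 4) (hκ1 : |κ| ≤ 1) :
    |2 * n * (t * κ) + κ ^ 2 + 4 * d * ((1 - e) * (1 - t ^ 2)) - 2 * (n + e) * (1 - t ^ 2) - 4 * (n * t ^ 2 + t * κ)| ≤ 20 * n := by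
  have k1 : |t * κ| ≤ 1 := by
    rw [abs_mul]
    exact mul_le_one₀ (by linarith) (abs_nonneg _) hκ1
  have k2 : κ ^ 2 ≤ 1 := (sq_le_one_iff_abs_le_one κ).2 hκ1
  have kt := sq_nonneg t
  have k3 : 0 ≤ (1 - e) * (1 - t ^ 2) := mul_nonneg (by linarith) (by linarith)
  have k4 : (1 - e) * (1 - t ^ 2) ≤ 1 := mul_le_one₀ (by linarith) (by linarith) (by linarith)
  have k5 : 0 ≤ (n + e) * (1 - t ^ 2) := mul_nonneg (by linarith) (by linarith)
  have k6 : (n + e) * (1 - t ^ 2) ≤ (n + 1) * 1 := mul_le_mul (by linarith) (by linarith) (by linarith) (by linarith)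
  have k7 : 0 ≤ n * t ^ 2 := mul_nonneg (by linarith) kt
  have k8 : n * t ^ 2 ≤ n * 1 := mul_le_mul_of_nonneg_left (by linarith) (by linarith)
  have k9 : d * ((1 - e) * (1 - t ^ 2)) ≤ d * 1 := mul_le_mul_of_nonneg_left k4 hd0
  have k10 : 0 ≤ d * ((1 - e) * (1 - t ^ 2)) := mul_nonneg hd0 k3
  have k11 : n * (t * κ) ≤ n * 1 := mul_le_mul_of_nonneg_left (abs_le.1 k1).2 (by linarith)
  have k12 : n * (-1) ≤ n * (t * κ) := mul_le_mul_of_nonneg_left (abs_le.1 k1).1 (by linarith)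
  have k13 := (abs_le.1 k1).1
  have k15 := (abs_le.1 k1).2
  have k14 := sq_nonneg κ
  rw [mul_assoc 2 n, mul_assoc 4 d, mul_assoc 2 (n + e)]
  rw [abs_le]; constructor <;> linarith

set_option maxHeartbeats 800000 in
lemma VV_bound1 {n d e : ℕ} (hn : 1000 ≤ n) (he : e ≤ 1) {t g : ℝ} (ht : |t| ≤ 3 / 4)
    (hd : (2 * (d : ℝ) + n) ^ 2 ≤ 2 * n ^ 2) (hg : |t ^ 2 - Gam n d| ≤ g) :
    |VV n d e t| ≤ 4 / 3 * (2 * n ^ 2 * g + 20 * n) := by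
  have hn' : (1000 : ℝ) ≤ n := by exact_mod_cast hn
  have hd0 : (0 : ℝ) ≤ d := Nat.cast_nonneg d
  have hdn : (d : ℝ) ≤ n / 4 := by nlinarith
  have t1 := (abs_le.1 ht).1
  have t2 := (abs_le.1 ht).2
  have hη0 : (0 : ℝ) ≤ e := Nat.cast_nonneg e
  have hη1 : (e : ℝ) ≤ 1 := by exact_mod_cast he
  have htt : t ^ 2 ≤ 9 / 16 := by nlinarith
  have hpos : 3 / 4 ≤ 4 * (1 - t ^ 2) ^ 2 := by nlinarith
  unfold VV
  rw [abs_div, abs_of_pos (by linarith : 0 < 4 * (1 - t ^ 2) ^ 2), div_le_iff₀ (by linarith)]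
  have hg0 : 0 ≤ g := (abs_nonneg _).trans hg
  have hmain : n ^ 2 * t ^ 2 - 4 * d * (d + n) * (1 - t ^ 2) = (2 * (d : ℝ) + n) ^ 2 * (t ^ 2 - Gam n d) := by
    unfold Gam
    have : (2 * (d : ℝ) + n) ≠ 0 := by positivity
    field_simp
    ring
  have hm2 : |(2 * (d : ℝ) + n) ^ 2 * (t ^ 2 - Gam n d)| ≤ 2 * n ^ 2 * g := by
    rw [abs_mul, abs_of_nonneg (sq_nonneg _)]
    exact mul_le_mul hd hg (abs_nonneg _) (by positivity)
  rw [← hmain] at hm2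
  have key : |(-2 * (((n : ℝ) + e) * (1 - t ^ 2) + 2 * t * (((n : ℝ) + e) * t + (1 - e))) + (((n : ℝ) + e) * t + (1 - e)) ^ 2
    - 4 * (d * (d + n - (1 - e))) * (1 - t ^ 2))| ≤ 2 * n ^ 2 * g + 20 * n := by
    obtain ⟨κ, hκ⟩ : ∃ κ : ℝ, κ = e * t + (1 - e) := ⟨_, rfl⟩
    have hκ1 : |κ| ≤ 1 := by
      rw [abs_le, hκ]; constructor <;> nlinarith
    have id : (-2 * (((n : ℝ) + e) * (1 - t ^ 2) + 2 * t * (((n : ℝ) + e) * t + (1 - e))) + (((n : ℝ) + e) * t + (1 - e)) ^ 2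
      - 4 * (d * (d + n - (1 - e))) * (1 - t ^ 2)) = (n ^ 2 * t ^ 2 - 4 * d * (d + n) * (1 - t ^ 2)) +
        (2 * n * (t * κ) + κ ^ 2 + 4 * d * ((1 - e) * (1 - t ^ 2)) - 2 * (n + e) * (1 - t ^ 2) - 4 * (n * t ^ 2 + t * κ)) := by
      rw [hκ]; ring
    rw [id]
    refine (abs_add_le _ _).trans (add_le_add hm2 ?_)
    exact VV_aux (by linarith) hd0 hdn hη0 hη1 htt ht hκ1
  refine key.trans ?_
  have : 0 ≤ (2 * n ^ 2 * g + 20 * (n:ℝ)) := by positivity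
  nlinarith

set_option maxHeartbeats 1000000 in
lemma VV_bound (ε B : ℝ) (hε : 0 < ε) (hB : 0 < B) : ∃ n0 : ℕ, 1000 ≤ n0 ∧ ∀ n : ℕ, n0 ≤ n → ∀ (d e : ℕ) (C s : ℝ),
    1 ≤ d → e ≤ 1 → 0 ≤ C → C ≤ 1 / 2 → C ≤ s → s ≤ C + 2 / n → (∀ k < d, 0 < (Hp n k).eval s) →
    (Yp n d e).eval s = 0 → ∀ t, |t - s| ≤ B / n → |t| ≤ 3 / 4 ∧ |VV n d e t| ≤ ε * n ^ 2 := by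
  obtain ⟨g, hg0, hg1, hg2⟩ : ∃ g : ℝ, 0 < g ∧ g ≤ ε / 8 ∧ g ≤ 1 / 16 :=
    ⟨min (ε / 8) (1 / 16), by positivity, min_le_left _ _, min_le_right _ _⟩
  obtain ⟨m, hm⟩ := exists_nat_ge (16 / g + 1)
  have hm1 : (1 : ℝ) ≤ m := by have : 0 < 16 / g := by positivity
                               linarith
  have hm0 : 1 ≤ m := by exact_mod_cast hm1
  obtain ⟨n1, hn1⟩ := exists_nat_ge ((16 * (m + 2) + 8 * B) / g + 100 / ε + 8 * B + 1000 + 16)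
  refine ⟨max n1 1000, le_max_right _ _, fun n hn d e C s hd he hC0 hC hCs hsC hpos hy t ht => ?_⟩
  have hn1000 : 1000 ≤ n := (le_max_right _ _).trans hn
  have hnn : (n1 : ℝ) ≤ n := by exact_mod_cast (le_max_left _ _).trans hn
  have hN : (16 * (m + 2) + 8 * B) / g + 100 / ε + 8 * B + 1000 + 16 ≤ n := hn1.trans hnn
  have p1 : 0 < (16 * (m + 2) + 8 * B) / g := by positivity
  have p2 : 0 < 100 / ε := by positivity
  have hnpos : (0 : ℝ) < n := by linarith
  have q1 : (16 * (m + 2) + 8 * B) / n ≤ g := by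
    rw [div_le_iff₀ hnpos]
    have : (16 * (m + 2) + 8 * B) / g ≤ n := by linarith
    rw [div_le_iff₀ hg0] at this; linarith
  have q2 : 100 ≤ ε * n := by
    have : 100 / ε ≤ n := by linarith
    rw [div_le_iff₀ hε] at this; linarith
  have q3 : B / n ≤ 1 / 8 := by rw [div_le_iff₀ hnpos]; linarith
  have q4 : 2 / (n : ℝ) ≤ 1 / 100 := by rw [div_le_iff₀ hnpos]; linarith
  have hs0 : 0 ≤ s := hC0.trans hCs
  have hs2 : s ≤ 51 / 100 := by linarith
  have ht' := abs_le.1 ht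
  have htb : |t| ≤ 3 / 4 := abs_le.2 ⟨by linarith, by linarith⟩
  refine ⟨htb, ?_⟩
  have r1 := root_lower (by omega : 5 ≤ n) (by linarith : s ≤ 1) d m hm0 hpos
  have hneg : (Hp n d).eval s ≤ 0 := by
    have h0 := hpos (d - 1) (by omega)
    unfold Yp at hy
    simp only [eval_add, eval_mul, eval_C] at hy
    have he1 : (e : ℝ) ≤ 1 := by exact_mod_cast he
    have := mul_nonneg (by linarith : (0:ℝ) ≤ 1 - e) h0.le
    linarith
  have r2 := root_upper (by omega : 5 ≤ n) hs0 d hd hpos hneg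
  have hBn : 0 ≤ B / n := by positivity
  have e1 : |t ^ 2 - s ^ 2| ≤ 2 * (B / n) := by
    rw [show t ^ 2 - s ^ 2 = (t - s) * (t + s) by ring, abs_mul]
    have : |t + s| ≤ 2 := abs_le.2 ⟨by linarith [(abs_le.1 htb).1], by linarith [(abs_le.1 htb).2]⟩
    rw [mul_comm 2]
    exact mul_le_mul ht this (abs_nonneg _) hBn
  have e2 : 4 / (m : ℝ) ≤ g / 4 := by
    rw [div_le_iff₀ (by linarith)]
    have : 16 / g ≤ m := by linarith
    rw [div_le_iff₀ hg0] at this; linarith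
  have e3 : (16 * ((m : ℝ) + 2) + 8 * B) / n = 4 * (4 * (m + 1) / n) + 8 * (2 / n) + 8 * (B / n) := by ring
  have p4 : 0 ≤ 4 * ((m : ℝ) + 1) / n := by positivity
  have p5 : 0 ≤ 2 / (n : ℝ) := by positivity
  have p6 : 0 ≤ 4 / (m : ℝ) := by positivity
  have hG : |t ^ 2 - Gam n d| ≤ g := by
    have := abs_le.1 e1
    rw [abs_le]; constructor <;> linarith
  have hd2 : (2 * (d : ℝ) + n) ^ 2 ≤ 2 * n ^ 2 := by
    have h0 : s ^ 2 ≤ (51 / 100) ^ 2 := by gcongr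
    have h1 : Gam n d ≤ 1 / 2 := by norm_num at h0; linarith
    unfold Gam at h1
    have h2 : 1 / 2 ≤ (n : ℝ) ^ 2 / (2 * d + n) ^ 2 := by linarith
    rw [le_div_iff₀ (by positivity)] at h2
    linarith
  refine (VV_bound1 hn1000 he htb hd2 hG).trans ?_
  have : (n : ℝ) ^ 2 * g ≤ n ^ 2 * (ε / 8) := by gcongr
  have : 100 * (n : ℝ) ≤ ε * n * n := by gcongr
  nlinarith
end SPB

namespace SPB
open Polynomial

def lW (t : ℝ) : ℝ := -(1 / 2) * log (1 - t) + 1 / 2 * log (1 + t)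

lemma lW_lip {s t : ℝ} (hs : |s| ≤ 3 / 4) (ht : |t| ≤ 3 / 4) : |lW t - lW s| ≤ 3 * |t - s| := by
  have hd : ∀ x ∈ Set.Icc (-(3 / 4) : ℝ) (3 / 4), HasDerivAt lW (1 / (1 - x ^ 2)) x := by
    intro x hx
    have h1 : 1 - x ≠ 0 := by linarith [hx.2]
    have h2 : 1 + x ≠ 0 := by linarith [hx.1]
    have a1 : HasDerivAt (fun t : ℝ => log (1 - t)) (-1 / (1 - x)) x := by
      have := ((hasDerivAt_id x).const_sub 1).log h1
      simpa using this
    have a2 : HasDerivAt (fun t : ℝ => log (1 + t)) (1 / (1 + x)) x := by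
      have := ((hasDerivAt_id x).const_add 1).log h2
      simpa using this
    refine ((a1.const_mul (-(1 / 2))).add (a2.const_mul (1 / 2))).congr_deriv ?_
    rw [show 1 - x ^ 2 = (1 - x) * (1 + x) by ring]
    field_simp; ring
  have := (convex_Icc (-(3 / 4) : ℝ) (3 / 4)).norm_image_sub_le_of_norm_hasDerivWithin_le
      (fun x hx => (hd x hx).hasDerivWithinAt) (C := 3) (fun x hx => ?_) (abs_le.1 hs) (abs_le.1 ht)
  · simpa using this
  · have : x ^ 2 ≤ 9 / 16 := by nlinarith [hx.1, hx.2]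
    rw [Real.norm_eq_abs, abs_of_pos (by apply div_pos <;> linarith), div_le_iff₀ (by linarith)]
    linarith

lemma weight_eq (n e : ℕ) {t : ℝ} (ht : |t| ≤ 3 / 4) :
    (1 + t) ^ e * √(1 - t ^ 2) ^ n = EE n e t ^ 2 * exp (lW t) := by
  have h1 : 0 < 1 - t := by linarith [(abs_le.1 ht).2]
  have h2 : 0 < 1 + t := by linarith [(abs_le.1 ht).1]
  have h3 : √(1 - t ^ 2) = exp (1 / 2 * (log (1 - t) + log (1 + t))) := by
    rw [← Real.log_mul h1.ne' h2.ne', show (1 - t) * (1 + t) = 1 - t ^ 2 by ring, Real.sqrt_eq_rpow,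
      Real.rpow_def_of_pos (by nlinarith), mul_comm]
  have h4 : (1 + t) ^ e = exp (e * log (1 + t)) := by
    rw [Real.exp_nat_mul, Real.exp_log h2]
  rw [h3, h4, EE, lW, ← Real.exp_nat_mul, ← Real.exp_nat_mul, ← Real.exp_add, ← Real.exp_add]
  congr 1; push_cast; ring

set_option maxHeartbeats 1000000 in
lemma local_f (ε B : ℝ) (hε : 0 < ε) (hB : 0 < B) : ∃ n0 : ℕ, 1000 ≤ n0 ∧ ∀ n : ℕ, n0 ≤ n → ∀ (d e : ℕ) (c s : ℝ),
    1 ≤ d → e ≤ 1 → 0 ≤ c → c ≤ 1 / 2 → c ≤ s → s ≤ c + 2 / n → (∀ k < d, 0 < (Hp n k).eval s) →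
    (Yp n d e).eval s = 0 → ∀ f q : ℝ[X], (X - C s) * q = Yp n d e → 0 < q.eval s → f = (1 + X) ^ e * Yp n d e * q →
    ∃ K > 0, ∀ t, |t - s| ≤ B / n → |f.eval t * √(1 - t ^ 2) ^ n - K * (t - s)| ≤ ε * (K * |t - s|) := by
  obtain ⟨ε1, h0, h1, h2⟩ : ∃ g : ℝ, 0 < g ∧ g ≤ ε / 7 ∧ g ≤ 1 / 2 :=
    ⟨min (ε / 7) (1 / 2), by positivity, min_le_left _ _, min_le_right _ _⟩
  obtain ⟨n1, hn1, hV⟩ := VV_bound (ε1 / 2 / B ^ 2) B (by positivity) hB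
  obtain ⟨n2, hn2⟩ := exists_nat_ge (6 * B / ε1)
  refine ⟨max n1 n2, hn1.trans (le_max_left _ _), ?_⟩
  intro n hn d e c s hd he hc0 hc hcs hsc hpos hy f q hq hqs hf
  have hV' := hV n ((le_max_left _ _).trans hn) d e c s hd he hc0 hc hcs hsc hpos hy
  have hnn : (n2 : ℝ) ≤ n := by exact_mod_cast (le_max_right _ _).trans hn
  have hn0 : (0 : ℝ) < n := by
    have : 1000 ≤ n := hn1.trans ((le_max_left _ _).trans hn)
    exact_mod_cast (by omega : 0 < n)
  have hB6 : 6 * (B / n) ≤ ε1 := by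
    have : 6 * B / ε1 ≤ n := hn2.trans hnn
    rw [div_le_iff₀ h0] at this
    rw [← mul_div_assoc, div_le_iff₀ hn0]; linarith
  have hBn : 0 ≤ B / n := by positivity
  have hmem : ∀ t, t ∈ Set.Icc (s - B / n) (s + B / n) ↔ |t - s| ≤ B / n := by
    intro t; rw [abs_le, Set.mem_Icc]; constructor <;> rintro ⟨a, b⟩ <;> constructor <;> linarith
  have hs34 : |s| ≤ 3 / 4 := (hV' s (by simpa using hBn)).1
  have hder := fun t (ht : t ∈ Set.Icc (s - B / n) (s + B / n)) =>
    phi_der n d e hd he t (by linarith [(abs_le.1 (hV' t ((hmem t).1 ht)).1).1]) (by linarith [(abs_le.1 (hV' t ((hmem t).1 ht)).1).2])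
  have hT := taylor_aux (s := s) (r := B / n) (V := ε1 / 2 / B ^ 2 * n ^ 2) (ε := ε1 / 2) hBn (by positivity)
    (fun t ht => (hder t ht).1) (fun t ht => (hder t ht).2) (fun t ht => by
      rw [abs_mul]
      exact mul_le_mul_of_nonneg_right (hV' t ((hmem t).1 ht)).2 (abs_nonneg _)) (by simp [hy])
      (by apply le_of_eq; field_simp) (by linarith)
  have hys : (derivative (Yp n d e)).eval s = q.eval s := by
    rw [← hq]; simp [derivative_mul]
  simp only [hy, hys, mul_zero, add_zero] at hT
  have hEpos : ∀ t, 0 < EE n e t := fun t => exp_pos _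
  set p := q.eval s * EE n e s with hp
  have hp0 : 0 < p := mul_pos hqs (hEpos s)
  refine ⟨p ^ 2 * exp (lW s), by positivity, fun t ht => ?_⟩
  have htT := hT t ((hmem t).2 ht)
  have ht34 := (hV' t ht).1
  have hft : (t - s) * (f.eval t * √(1 - t ^ 2) ^ n) = ((Yp n d e).eval t * EE n e t) ^ 2 * exp (lW t) := by
    have e1 : (t - s) * q.eval t = (Yp n d e).eval t := by rw [← hq]; simp
    have e2 : f.eval t = (1 + t) ^ e * (Yp n d e).eval t * q.eval t := by rw [hf]; simp
    rw [e2]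
    calc _ = ((1 + t) ^ e * √(1 - t ^ 2) ^ n) * (Yp n d e).eval t * ((t - s) * q.eval t) := by ring
      _ = _ := by rw [weight_eq n e ht34, e1]; ring
  rcases eq_or_ne t s with rfl | hts
  · have : f.eval t = 0 := by rw [hf]; simp [hy]
    simp [this]
  have hΔ : t - s ≠ 0 := sub_ne_zero.2 hts
  obtain ⟨α, hα⟩ : ∃ α, (Yp n d e).eval t * EE n e t = p * (t - s) * (1 + α) :=
    ⟨((Yp n d e).eval t * EE n e t) / (p * (t - s)) - 1, by field_simp; ring⟩
  have hα1 : |α| ≤ ε1 := by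
    rw [hα, show p * (t - s) * (1 + α) - p * (t - s) = α * (p * (t - s)) by ring, abs_mul, abs_mul] at htT
    have : 0 < |p| * |t - s| := mul_pos (abs_pos.2 hp0.ne') (abs_pos.2 hΔ)
    refine le_of_mul_le_mul_right ?_ this
    linarith
  obtain ⟨β, hβ⟩ : ∃ β, exp (lW t) = exp (lW s) * (1 + β) :=
    ⟨exp (lW t - lW s) - 1, by rw [Real.exp_sub]; field_simp; ring⟩
  have hβ1 : |β| ≤ ε1 := by
    have e1 : β = exp (lW t - lW s) - 1 := by
      rw [Real.exp_sub, hβ]; field_simp; ring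
    have e2 := lW_lip hs34 ht34
    rw [e1]
    have e3 : |lW t - lW s| ≤ 3 * (B / n) := e2.trans (by linarith)
    refine (Real.abs_exp_sub_one_le (by linarith)).trans ?_
    linarith
  have hF : f.eval t * √(1 - t ^ 2) ^ n = p ^ 2 * exp (lW s) * (t - s) * ((1 + α) ^ 2 * (1 + β)) := by
    apply mul_left_cancel₀ hΔ
    rw [hft, hα, hβ]; ring
  rw [hF, show p ^ 2 * exp (lW s) * (t - s) * ((1 + α) ^ 2 * (1 + β)) - p ^ 2 * exp (lW s) * (t - s) =
    ((1 + α) ^ 2 * (1 + β) - 1) * (p ^ 2 * exp (lW s) * (t - s)) by ring, abs_mul, abs_mul (p ^ 2 * exp (lW s)),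
    abs_of_pos (by positivity : 0 < p ^ 2 * exp (lW s))]
  refine mul_le_mul_of_nonneg_right ?_ (by positivity)
  have a1 := abs_le.1 hα1
  have a2 := abs_le.1 hβ1
  have a3 : |α ^ 2| ≤ ε1 := by rw [abs_of_nonneg (sq_nonneg _), ← sq_abs]; nlinarith [abs_nonneg α]
  have a4 : |α * β| ≤ ε1 := by rw [abs_mul]; nlinarith [abs_nonneg α, abs_nonneg β]
  have a5 : |α ^ 2 * β| ≤ ε1 := by rw [abs_mul]; nlinarith [abs_nonneg (α ^ 2), abs_nonneg β]
  have b3 := abs_le.1 a3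
  have b4 := abs_le.1 a4
  have b5 := abs_le.1 a5
  rw [show (1 + α) ^ 2 * (1 + β) - 1 = 2 * α + β + α ^ 2 + 2 * (α * β) + α ^ 2 * β by ring, abs_le]
  constructor <;> linarith [b3.1, b3.2, b4.1, b4.2, b5.1, b5.2, a1.1, a1.2, a2.1, a2.2]
end SPB

namespace SPB

section Split
variable {E : Type*} [NormedAddCommGroup E] [InnerProductSpace ℝ E] [FiniteDimensional ℝ E]
  [MeasurableSpace E] [BorelSpace E]

def splitEquiv (u : E) (hu : ‖u‖ = 1) : (ℝ × (Submodule.span ℝ {u})ᗮ) ≃ᵐ E :=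
  ((LinearIsometryEquiv.toSpanUnitSingleton (𝕜 := ℝ) u hu).toMeasurableEquiv.prodCongr (MeasurableEquiv.refl _)).trans
    ((MeasurableEquiv.toLp 2 _).trans (Submodule.span ℝ {u}).orthogonalDecomposition.symm.toMeasurableEquiv)

lemma splitEquiv_apply (u : E) (hu : ‖u‖ = 1) (p : ℝ × (Submodule.span ℝ {u})ᗮ) :
    splitEquiv u hu p = p.1 • u + (p.2 : E) := by
  have h : splitEquiv u hu p = (Submodule.span ℝ {u}).orthogonalDecomposition.symm
      (WithLp.toLp 2 (LinearIsometryEquiv.toSpanUnitSingleton (𝕜 := ℝ) u hu p.1, p.2)) := rfl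
  rw [h]; simp

lemma splitEquiv_mp (u : E) (hu : ‖u‖ = 1) : MeasurePreserving (splitEquiv u hu) := by
  unfold splitEquiv
  have h1 : MeasurePreserving ((LinearIsometryEquiv.toSpanUnitSingleton (𝕜 := ℝ) u hu).toMeasurableEquiv.prodCongr
      (MeasurableEquiv.refl (Submodule.span ℝ {u})ᗮ)) volume volume :=
    (LinearIsometryEquiv.measurePreserving (LinearIsometryEquiv.toSpanUnitSingleton (𝕜 := ℝ) u hu)).prod
      (MeasurePreserving.id (volume : Measure (Submodule.span ℝ {u})ᗮ))
  have h2 : MeasurePreserving (MeasurableEquiv.toLp 2 ((Submodule.span ℝ {u}) × (Submodule.span ℝ {u})ᗮ)) volume volume :=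
    WithLp.volume_preserving_toLp _ _
  have h3 : MeasurePreserving (Submodule.span ℝ {u}).orthogonalDecomposition.symm.toMeasurableEquiv volume volume :=
    LinearIsometryEquiv.measurePreserving (Submodule.span ℝ {u}).orthogonalDecomposition.symm
  exact h1.trans (h2.trans h3)

lemma sq_sub_int (g : ℝ → ℝ) (k : ℕ) (hk : 2 ≤ k) (c : ℝ) :
    ∫ y in Set.Ioi (0 : ℝ), y ^ (k + 1) * g (y ^ 2 + c) = 1 / 2 * ∫ q, √(q - c) ^ k * g q := by
  have h1 := integral_comp_rpow_Ioi_of_pos (g := fun m : ℝ => √m ^ k * g (m + c)) (p := 2) (by norm_num)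
  have h2 : ∫ y in Set.Ioi (0 : ℝ), y ^ (k + 1) * g (y ^ 2 + c) = 1 / 2 * ∫ y in Set.Ioi (0 : ℝ), √y ^ k * g (y + c) := by
    rw [← h1, ← integral_const_mul]
    refine setIntegral_congr_fun measurableSet_Ioi fun y hy => ?_
    have hy' : 0 ≤ y := le_of_lt hy
    simp only [smul_eq_mul]
    rw [show (2 - 1 : ℝ) = 1 by norm_num, Real.rpow_one, Real.rpow_two, Real.sqrt_sq hy']
    ring
  rw [h2]
  congr 1
  have h3 : ∫ y in Set.Ioi (0 : ℝ), √y ^ k * g (y + c) = ∫ y, √y ^ k * g (y + c) := by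
    apply setIntegral_eq_integral_of_forall_compl_eq_zero
    intro x hx
    rw [Real.sqrt_eq_zero_of_nonpos (by simpa using hx), zero_pow (by omega), zero_mul]
  rw [h3, ← integral_sub_right_eq_self (fun y => √y ^ k * g (y + c)) c]
  simp

lemma split_integral (k : ℕ) (hk : 2 ≤ k) (hdim : Module.finrank ℝ E = k + 3) (Φ : ℝ → ℝ → ℝ) (w : E) (τ : ℝ) (hτ : 0 < τ)
    (hw : ‖w‖ = 2 * τ) (hIntg : Integrable (fun z : E => Φ (‖z‖ ^ 2) (‖z - w‖ ^ 2))) :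
    ∃ κ : ℝ, 0 ≤ κ ∧ ∫ z : E, Φ (‖z‖ ^ 2) (‖z - w‖ ^ 2) =
      κ * ∫ ξ : ℝ, ∫ q : ℝ, √(q - (τ ^ 2 + ξ ^ 2)) ^ k * Φ (q + 2 * τ * ξ) (q - 2 * τ * ξ) := by
  obtain ⟨u, hu, hwu⟩ : ∃ u : E, ‖u‖ = 1 ∧ w = (2 * τ) • u := by
    refine ⟨(2 * τ)⁻¹ • w, ?_, ?_⟩
    · rw [norm_smul, hw, norm_inv, Real.norm_of_nonneg (by positivity)]; field_simp
    · rw [smul_smul, mul_inv_cancel₀ (by positivity), one_smul]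
  have hmp := splitEquiv_mp u hu
  have hu0 : u ≠ 0 := by intro h; simp [h] at hu
  have hf : Module.finrank ℝ (Submodule.span ℝ {u})ᗮ = k + 2 := by
    have := (Submodule.span ℝ {u}).finrank_add_finrank_orthogonal
    rw [finrank_span_singleton hu0, hdim] at this
    omega
  have : Nontrivial (Submodule.span ℝ {u})ᗮ := Module.nontrivial_of_finrank_pos (R := ℝ) (by omega)
  have nrm : ∀ (x : ℝ) (v : (Submodule.span ℝ {u})ᗮ), ‖x • u + (v : E)‖ ^ 2 = x ^ 2 + ‖v‖ ^ 2 := by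
    intro x v
    have hin : inner ℝ (x • u) (v : E) = 0 := by
      rw [inner_smul_left, (Submodule.mem_orthogonal_singleton_iff_inner_right).1 v.2]; simp
    rw [norm_add_sq_real, hin, norm_smul, hu]
    simp
  have hint2 := (hmp.integrable_comp_emb (splitEquiv u hu).measurableEmbedding).2 hIntg
  set κ := ((k + 2 : ℕ) : ℝ) * ((volume : Measure (Submodule.span ℝ {u})ᗮ).real (Metric.ball 0 1)) * (1 / 2) with hκ
  refine ⟨κ, by positivity, ?_⟩
  have hcomp : ∀ p : ℝ × (Submodule.span ℝ {u})ᗮ, Φ (‖splitEquiv u hu p‖ ^ 2) (‖splitEquiv u hu p - w‖ ^ 2) =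
      Φ (p.1 ^ 2 + ‖p.2‖ ^ 2) ((p.1 - 2 * τ) ^ 2 + ‖p.2‖ ^ 2) := by
    intro p
    rw [splitEquiv_apply, nrm, hwu, show p.1 • u + (p.2 : E) - (2 * τ) • u = (p.1 - 2 * τ) • u + (p.2 : E) by rw [sub_smul]; abel, nrm]
  rw [← hmp.integral_comp (splitEquiv u hu).measurableEmbedding]
  have hint3 : Integrable (fun p : ℝ × (Submodule.span ℝ {u})ᗮ => Φ (p.1 ^ 2 + ‖p.2‖ ^ 2) ((p.1 - 2 * τ) ^ 2 + ‖p.2‖ ^ 2)) := by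
    refine hint2.congr (Filter.Eventually.of_forall fun p => hcomp p)
  simp_rw [hcomp]
  rw [Measure.volume_eq_prod] at hint3 ⊢
  rw [integral_prod _ hint3]
  rw [← integral_add_right_eq_self _ τ, ← integral_const_mul]
  refine integral_congr_ae (Filter.Eventually.of_forall fun ξ => ?_)
  simp only
  rw [integral_fun_norm_addHaar volume (fun r => Φ ((ξ + τ) ^ 2 + r ^ 2) ((ξ + τ - 2 * τ) ^ 2 + r ^ 2)), hf]
  have := sq_sub_int (fun q => Φ (q + 2 * τ * ξ) (q - 2 * τ * ξ)) k hk (τ ^ 2 + ξ ^ 2)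
  simp only [nsmul_eq_mul, smul_eq_mul]
  rw [hκ, mul_assoc _ (1 / 2 : ℝ), ← this, mul_assoc]
  congr 2
  refine setIntegral_congr_fun measurableSet_Ioi fun y hy => ?_
  simp only [Nat.add_succ_sub_one]
  congr 2 <;> ring
end Split
end SPB

namespace SPB
section LP

local notation "𝔼" n => EuclideanSpace ℝ (Fin n)

/-- spherical shell -/
def Shl (n : ℕ) (ρ P : ℝ) : Set (EuclideanSpace ℝ (Fin n)) := {z | ρ ≤ ‖z‖ ∧ ‖z‖ ≤ P}

open Classical in
/-- pair kernel -/
def kk {n : ℕ} (f : Polynomial ℝ) (ρ P : ℝ) (a b : EuclideanSpace ℝ (Fin n)) : ℝ :=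
  if a ∈ Shl n ρ P ∧ b ∈ Shl n ρ P then f.eval (inner ℝ a b / (‖a‖ * ‖b‖)) else 0

lemma Shl_closed (n : ℕ) (ρ P : ℝ) : IsClosed (Shl n ρ P) := by
  unfold Shl
  exact (isClosed_le continuous_const continuous_norm).inter (isClosed_le continuous_norm continuous_const)

lemma Shl_sub (n : ℕ) (ρ P : ℝ) : Shl n ρ P ⊆ Metric.closedBall 0 P := fun z hz => by simpa using hz.2

lemma kk_bdd (f : Polynomial ℝ) : ∃ B, 0 ≤ B ∧ ∀ (n : ℕ) (ρ P : ℝ) (a b : EuclideanSpace ℝ (Fin n)), |kk f ρ P a b| ≤ B := by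
  obtain ⟨B, hB⟩ := (isCompact_Icc (a := (-1 : ℝ)) (b := 1)).exists_bound_of_continuousOn f.continuous.continuousOn
  refine ⟨B, (norm_nonneg _).trans (hB 0 (by norm_num)), fun n ρ P a b => ?_⟩
  unfold kk
  split_ifs
  · have := abs_real_inner_div_norm_mul_norm_le_one a b
    exact hB _ (abs_le.1 this)
  · simpa using (norm_nonneg _).trans (hB 0 (by norm_num))

lemma kk_meas_set {n : ℕ} (ρ P : ℝ) (w : 𝔼 n) : MeasurableSet {z : 𝔼 n | z ∈ Shl n ρ P ∧ z - w ∈ Shl n ρ P} := by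
  have h2 : IsClosed ((fun z : 𝔼 n => z - w) ⁻¹' Shl n ρ P) :=
    (Shl_closed n ρ P).preimage (continuous_id.sub continuous_const)
  exact (Shl_closed n ρ P).measurableSet.inter h2.measurableSet

lemma kk_fun_meas {n : ℕ} (f : Polynomial ℝ) (w : 𝔼 n) :
    Measurable (fun z : 𝔼 n => f.eval (inner ℝ z (z - w) / (‖z‖ * ‖z - w‖))) := by
  have h1 : Measurable (fun z : 𝔼 n => inner ℝ z (z - w) / (‖z‖ * ‖z - w‖)) := by
    apply Measurable.div
    · exact (continuous_id.inner (continuous_id.sub continuous_const)).measurable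
    · exact (continuous_norm.mul (continuous_id.sub continuous_const).norm).measurable
  exact f.continuous.measurable.comp h1

lemma kk_meas {n : ℕ} (f : Polynomial ℝ) (ρ P : ℝ) (w : 𝔼 n) : Measurable (fun z : 𝔼 n => kk f ρ P z (z - w)) := by
  have h3 : (fun z : 𝔼 n => kk f ρ P z (z - w)) = {z : 𝔼 n | z ∈ Shl n ρ P ∧ z - w ∈ Shl n ρ P}.indicator
      (fun z : 𝔼 n => f.eval (inner ℝ z (z - w) / (‖z‖ * ‖z - w‖))) := by
    ext z
    by_cases hz : z ∈ Shl n ρ P ∧ z - w ∈ Shl n ρ P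
    · rw [kk, if_pos hz, Set.indicator_of_mem (by exact hz)]
    · rw [kk, if_neg hz, Set.indicator_of_notMem (by exact hz)]
  rw [h3]
  exact (kk_fun_meas f w).indicator (kk_meas_set ρ P w)

lemma kk_integrable {n : ℕ} (f : Polynomial ℝ) (ρ P : ℝ) (w : 𝔼 n) :
    Integrable (fun z : 𝔼 n => kk f ρ P z (z - w)) := by
  obtain ⟨B, hB0, hB⟩ := kk_bdd f
  have hB' : ∀ᵐ z : 𝔼 n ∂(volume.restrict (Metric.closedBall (0 : 𝔼 n) P)), ‖kk f ρ P z (z - w)‖ ≤ B :=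
    Filter.Eventually.of_forall fun z => hB n ρ P z (z - w)
  have h1 : IntegrableOn (fun z : 𝔼 n => kk f ρ P z (z - w)) (Metric.closedBall 0 P) :=
    Measure.integrableOn_of_bounded (M := B) measure_closedBall_lt_top.ne (kk_meas f ρ P w).aestronglyMeasurable hB'
  refine (integrableOn_iff_integrable_of_support_subset ?_).1 h1
  intro z hz
  by_contra hc
  apply hz
  have h0 : ¬ (z ∈ Shl n ρ P ∧ z - w ∈ Shl n ρ P) := fun h => hc (Shl_sub n ρ P h.1)
  show kk f ρ P z (z - w) = 0
  rw [kk, if_neg h0]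

lemma kk_pd {n : ℕ} (hn : 5 ≤ n) {f : Polynomial ℝ} (hf : Cone n f) (ρ P : ℝ) (hρ : 0 < ρ) (T : Finset (𝔼 n)) (z : 𝔼 n) :
    co n 0 f * (∑ x ∈ T, (Shl n ρ P).indicator (fun _ => (1 : ℝ)) (x - z)) ^ 2 ≤
      ∑ x ∈ T, ∑ y ∈ T, kk f ρ P (x - z) (y - z) := by
  classical
  have h := cone_pd hn hf (T.filter (fun x => x - z ∈ Shl n ρ P)) (fun _ => 1)
    (fun x l => (‖x - z‖⁻¹ • (x - z)) l) (by
      intro x hx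
      have hx0 : ‖x - z‖ ≠ 0 := by
        have := (Finset.mem_filter.1 hx).2.1
        linarith
      have := real_inner_self_eq_norm_sq (‖x - z‖⁻¹ • (x - z))
      rw [norm_smul, norm_inv, norm_norm, inv_mul_cancel₀ hx0, PiLp.inner_apply] at this
      rw [one_pow] at this
      rw [← this]
      refine Finset.sum_congr rfl fun l _ => ?_
      rfl)
  refine le_trans (le_of_eq ?_) (h.trans (le_of_eq ?_))
  · congr 2
    rw [Finset.sum_filter]
    refine Finset.sum_congr rfl fun x _ => ?_
    by_cases hx : x - z ∈ Shl n ρ P <;> simp [hx]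
  · rw [Finset.sum_filter]
    refine Finset.sum_congr rfl fun x _ => ?_
    by_cases hx : x - z ∈ Shl n ρ P
    · rw [if_pos hx, Finset.sum_filter]
      refine Finset.sum_congr rfl fun y _ => ?_
      by_cases hy : y - z ∈ Shl n ρ P
      · rw [if_pos hy, kk, if_pos ⟨hx, hy⟩, one_mul, one_mul]
        congr 1
        have : inner ℝ (x - z) (y - z) / (‖x - z‖ * ‖y - z‖) = inner ℝ (‖x - z‖⁻¹ • (x - z)) (‖y - z‖⁻¹ • (y - z)) := by
          rw [real_inner_smul_left, real_inner_smul_right, div_eq_mul_inv, mul_inv]; ring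
        rw [this, PiLp.inner_apply]
        refine Finset.sum_congr rfl fun l _ => ?_
        simp [mul_comm]
      · rw [if_neg hy, kk, if_neg (fun h => hy h.2)]
    · rw [if_neg hx]
      symm
      apply Finset.sum_eq_zero
      intro y _
      rw [kk, if_neg (fun h => hx h.1)]

lemma lp_finite {n : ℕ} (hn : 5 ≤ n) {f : Polynomial ℝ} (hf : Cone n f) (h0 : 0 < co n 0 f) (h1 : 0 < f.eval 1) (ρ P : ℝ) (hρ : 0 < ρ)
    (hρP : ρ < P) (hneg : ∀ w : 𝔼 n, 2 ≤ ‖w‖ → ∫ z, kk f ρ P z (z - w) ≤ 0) (T : Finset (𝔼 n))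
    (hT : ∀ x ∈ T, ∀ y ∈ T, x ≠ y → 2 ≤ dist x y) (L : ℝ) (hL0 : 0 ≤ L) (hL : ∀ x ∈ T, ‖x‖ ≤ L) :
    T.card * volume.real (Shl n ρ P) * co n 0 f ≤ volume.real (Metric.closedBall (0 : 𝔼 n) (L + P)) * f.eval 1 := by
  classical
  have hP : 0 < P := hρ.trans hρP
  set v := volume.real (Shl n ρ P) with hv
  set V := volume.real (Metric.closedBall (0 : 𝔼 n) (L + P)) with hV
  have hV0 : 0 < V := by
    rw [hV, Measure.real]
    exact ENNReal.toReal_pos (Metric.measure_closedBall_pos _ _ (by positivity)).ne' measure_closedBall_lt_top.ne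
  have hShm : MeasurableSet (Shl n ρ P) := (Shl_closed n ρ P).measurableSet
  have hShfin : volume (Shl n ρ P) ≠ ⊤ := ((measure_mono (Shl_sub n ρ P)).trans_lt measure_closedBall_lt_top).ne
  set I : (𝔼 n) → (𝔼 n) → ℝ := fun x z => (Shl n ρ P).indicator (fun _ => (1 : ℝ)) (x - z) with hI
  have hIint : ∀ x, Integrable (I x) := by
    intro x
    exact ((integrable_indicator_iff hShm).2 (integrableOn_const hShfin)).comp_sub_left x
  have hIval : ∀ x, ∫ z, I x z = v := by
    intro x
    rw [hI]
    simp only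
    rw [integral_sub_left_eq_self (fun z => (Shl n ρ P).indicator (fun _ => (1 : ℝ)) z) volume x, integral_indicator hShm]
    simp [hv]
  have hkint : ∀ x y : 𝔼 n, Integrable (fun z => kk f ρ P (x - z) (y - z)) := by
    intro x y
    have := (kk_integrable f ρ P (x - y)).comp_sub_left x
    refine this.congr (Filter.Eventually.of_forall fun z => ?_)
    simp only
    congr 1; abel
  have hkval : ∀ x y : 𝔼 n, ∫ z, kk f ρ P (x - z) (y - z) = ∫ z, kk f ρ P z (z - (x - y)) := by
    intro x y
    rw [← integral_sub_left_eq_self (fun z => kk f ρ P z (z - (x - y))) volume x]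
    congr 1; ext z
    congr 1; abel
  have hkdiag : ∫ z : 𝔼 n, kk f ρ P z (z - 0) = f.eval 1 * v := by
    have : (fun z : 𝔼 n => kk f ρ P z (z - 0)) = (Shl n ρ P).indicator (fun _ => f.eval 1) := by
      ext z
      by_cases hz : z ∈ Shl n ρ P
      · rw [kk, sub_zero, if_pos ⟨hz, hz⟩, Set.indicator_of_mem hz, real_inner_self_eq_norm_mul_norm, div_self]
        have := hz.1
        have : 0 < ‖z‖ := by linarith
        positivity
      · rw [kk, sub_zero, if_neg (fun h => hz h.1), Set.indicator_of_notMem hz]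
    rw [this, integral_indicator hShm]
    simp [hv, mul_comm]
  set N : (𝔼 n) → ℝ := fun z => ∑ x ∈ T, I x z with hN
  set lam := T.card * v / V with hlam
  -- bound
  set Bl : (𝔼 n) → ℝ := (Metric.closedBall (0 : 𝔼 n) (L + P)).indicator (fun _ => (1 : ℝ)) with hBl
  have hBint : Integrable Bl := (integrable_indicator_iff measurableSet_closedBall).2 (integrableOn_const measure_closedBall_lt_top.ne)
  have hBval : ∫ z, Bl z = V := by
    rw [hBl, integral_indicator measurableSet_closedBall]; simp [hV]
  have hNint : Integrable N := integrable_finsetSum _ fun x _ => hIint x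
  have hNval : ∫ z, N z = T.card * v := by
    rw [hN, integral_finsetSum _ fun x _ => hIint x]
    simp [hIval]
  have hpt : ∀ z, co n 0 f * (2 * lam * N z - lam ^ 2 * Bl z) ≤ ∑ x ∈ T, ∑ y ∈ T, kk f ρ P (x - z) (y - z) := by
    intro z
    refine le_trans (mul_le_mul_of_nonneg_left ?_ h0.le) (kk_pd hn hf ρ P hρ T z)
    change 2 * lam * N z - lam ^ 2 * Bl z ≤ (N z) ^ 2
    by_cases hz : z ∈ Metric.closedBall (0 : 𝔼 n) (L + P)
    · rw [hBl, Set.indicator_of_mem hz]; nlinarith [sq_nonneg (N z - lam)]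
    · have : N z = 0 := by
        apply Finset.sum_eq_zero
        intro x hx
        rw [hI]; simp only
        apply Set.indicator_of_notMem
        intro h
        apply hz
        have h2 := h.2
        have h3 := hL x hx
        have h4 : ‖z‖ ≤ ‖x‖ + ‖x - z‖ := by
          have := norm_sub_le x (x - z); simpa using this
        simp; linarith
      rw [this, hBl, Set.indicator_of_notMem hz]; simp
  have hineq := integral_mono (((hNint.const_mul (2 * lam)).sub (hBint.const_mul (lam ^ 2))).const_mul (co n 0 f))
    (integrable_finsetSum _ fun x _ => integrable_finsetSum _ fun y _ => hkint x y) hpt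
  have hsub : ∫ a, ((fun x => 2 * lam * N x) - fun x => lam ^ 2 * Bl x) a = 2 * lam * (T.card * v) - lam ^ 2 * V := by
    simp only [Pi.sub_apply]
    rw [integral_sub (hNint.const_mul (2 * lam)) (hBint.const_mul (lam ^ 2)), integral_const_mul, integral_const_mul, hNval, hBval]
  rw [integral_const_mul, hsub, integral_finsetSum _ fun x _ => integrable_finsetSum _ fun y _ => hkint x y] at hineq
  have hup : ∑ x ∈ T, ∫ z, ∑ y ∈ T, kk f ρ P (x - z) (y - z) ≤ ∑ x ∈ T, f.eval 1 * v := by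
    refine Finset.sum_le_sum fun x hx => ?_
    rw [integral_finsetSum _ fun y _ => hkint x y, ← Finset.add_sum_erase _ _ hx]
    have e1 : ∫ z, kk f ρ P (x - z) (x - z) = f.eval 1 * v := by rw [hkval, sub_self, hkdiag]
    have e2 : ∑ y ∈ T.erase x, ∫ z, kk f ρ P (x - z) (y - z) ≤ 0 := by
      apply Finset.sum_nonpos
      intro y hy
      rw [hkval]
      apply hneg
      rw [← dist_eq_norm]
      exact hT x hx y (Finset.mem_of_mem_erase hy) (Finset.ne_of_mem_erase hy).symm
    linarith
  have h5 := hineq.trans hup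
  rw [Finset.sum_const, nsmul_eq_mul] at h5
  have h6 : lam * V = T.card * v := by rw [hlam]; field_simp
  have h7 : co n 0 f * (lam * (T.card * v)) ≤ T.card * (f.eval 1 * v) := by
    have : 2 * lam * (T.card * v) - lam ^ 2 * V = lam * (T.card * v) := by rw [← h6]; ring
    rw [this] at h5; exact h5
  have hv0 : 0 ≤ T.card * v := by positivity
  rcases hv0.eq_or_lt with h | h
  · rw [← h, zero_mul]; positivity
  · have h8 : (T.card * v) * (co n 0 f * lam) ≤ (T.card * v) * f.eval 1 := by linarith
    have h9 := le_of_mul_le_mul_left h8 h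
    calc T.card * v * co n 0 f = V * (co n 0 f * lam) := by rw [← h6]; ring
      _ ≤ _ := mul_le_mul_of_nonneg_left h9 hV0.le
end LP
end SPB

namespace SPB
section LP2

local notation "𝔼" n => EuclideanSpace ℝ (Fin n)

lemma vol_cb {n : ℕ} (r : ℝ) (hr : 0 ≤ r) (x : 𝔼 n) :
    volume.real (Metric.closedBall x r) = r ^ n * volume.real (Metric.ball (0 : 𝔼 n) 1) := by
  rw [Measure.addHaar_real_closedBall volume x hr, finrank_euclideanSpace_fin]

lemma vol_b {n : ℕ} (hn : 5 ≤ n) (r : ℝ) (hr : 0 ≤ r) (x : 𝔼 n) :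
    volume.real (Metric.ball x r) = r ^ n * volume.real (Metric.ball (0 : 𝔼 n) 1) := by
  haveI : Nontrivial (𝔼 n) := by
    apply Module.nontrivial_of_finrank_pos (R := ℝ); rw [finrank_euclideanSpace_fin]; omega
  rw [← Measure.addHaar_real_closedBall_eq_addHaar_real_ball, vol_cb r hr]

lemma vol_Shl {n : ℕ} (hn : 5 ≤ n) (ρ P : ℝ) (hρ : 0 < ρ) (hρP : ρ < P) :
    volume.real (Shl n ρ P) = (P ^ n - ρ ^ n) * volume.real (Metric.ball (0 : 𝔼 n) 1) := by
  have h1 : Shl n ρ P = Metric.closedBall 0 P \ Metric.ball 0 ρ := by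
    ext z; simp [Shl, and_comm]
  have h2 : Metric.ball (0 : 𝔼 n) ρ ⊆ Metric.closedBall 0 P :=
    Metric.ball_subset_closedBall.trans (Metric.closedBall_subset_closedBall hρP.le)
  rw [h1, measureReal_diff h2 measurableSet_ball measure_closedBall_lt_top.ne, vol_cb P (hρ.trans hρP).le, vol_b hn ρ hρ.le]
  ring

lemma vol_b_pos (n : ℕ) : 0 < volume.real (Metric.ball (0 : 𝔼 n) 1) :=
  ENNReal.toReal_pos (Metric.measure_ball_pos _ _ one_pos).ne' measure_ball_lt_top.ne

lemma density_bound {n : ℕ} (hn : 5 ≤ n) {f : Polynomial ℝ} (hf : Cone n f) (h0 : 0 < co n 0 f) (h1 : 0 < f.eval 1) (ρ P : ℝ) (hρ : 0 < ρ)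
    (hρP : ρ < P) (hneg : ∀ w : 𝔼 n, 2 ≤ ‖w‖ → ∫ z, kk f ρ P z (z - w) ≤ 0) (M : ℝ) (hM : f.eval 1 = co n 0 f * M) :
    0 ≤ spherePackingConst n ∧ spherePackingConst n ≤ M / (P ^ n - ρ ^ n) := by
  classical
  have hP : 0 < P := hρ.trans hρP
  set b := volume.real (Metric.ball (0 : 𝔼 n) 1) with hb
  have hb0 : 0 < b := vol_b_pos n
  have hd0 : 0 < P ^ n - ρ ^ n := sub_pos.2 (pow_lt_pow_left₀ hρP hρ.le (by omega))
  have hM0 : 0 < M := by rw [hM] at h1; exact pos_of_mul_pos_right h1 h0.le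
  have key : ∀ S : Set (𝔼 n), S.Pairwise (fun x y => 2 ≤ dist x y) → ∀ L : ℝ, 0 ≤ L → ∀ T : Finset (𝔼 n),
      (↑T ⊆ S ∩ Metric.closedBall 0 L) → (T.card : ℝ) * (P ^ n - ρ ^ n) ≤ (L + P) ^ n * M := by
    intro S hS L hL T hT
    have h := lp_finite hn hf h0 h1 ρ P hρ hρP hneg T
      (fun x hx y hy hxy => hS (hT hx).1 (hT hy).1 hxy) L hL (fun x hx => by simpa using (hT hx).2)
    rw [vol_Shl hn ρ P hρ hρP, vol_cb (L + P) (by positivity), hM, ← hb] at h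
    have hc : 0 < co n 0 f * b := by positivity
    refine le_of_mul_le_mul_right ?_ hc
    linarith
  have dens : ∀ S : Set (𝔼 n), S.Pairwise (fun x y => 2 ≤ dist x y) →
      0 ≤ packingDensity n S ∧ packingDensity n S ≤ M / (P ^ n - ρ ^ n) := by
    intro S hS
    set g : ℝ → ℝ := fun r => (volume ((⋃ x ∈ S, Metric.ball x 1) ∩ Metric.ball 0 r)).toReal /
      (volume (Metric.ball (0 : 𝔼 n) r)).toReal with hg
    set G : ℝ → ℝ := fun r => (1 + (1 + P) * r⁻¹) ^ n * (M / (P ^ n - ρ ^ n)) with hG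
    have hg0 : ∀ r, 0 ≤ g r := fun r => by positivity
    have hgG : ∀ᶠ r in atTop, g r ≤ G r := by
      filter_upwards [eventually_gt_atTop 0] with r hr
      have hfin : (S ∩ Metric.closedBall 0 (r + 1)).Finite := by
        by_contra hinf
        obtain ⟨m, hm⟩ := exists_nat_gt (((r + 1) + P) ^ n * M / (P ^ n - ρ ^ n))
        obtain ⟨T, hT, hTc⟩ := Set.Infinite.exists_subset_card_eq hinf m
        have := key S hS (r + 1) (by positivity) T hT
        rw [hTc, ← le_div_iff₀ hd0] at this
        linarith
      set T := hfin.toFinset with hTdef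
      have hT := key S hS (r + 1) (by positivity) T (by simp [hTdef])
      have hsub : (⋃ x ∈ S, Metric.ball x 1) ∩ Metric.ball 0 r ⊆ ⋃ x ∈ T, Metric.ball x 1 := by
        rintro z ⟨hz, hz2⟩
        simp only [Set.mem_iUnion] at hz ⊢
        obtain ⟨x, hx, hxz⟩ := hz
        refine ⟨x, ?_, hxz⟩
        rw [hTdef, Set.Finite.mem_toFinset]
        refine ⟨hx, ?_⟩
        rw [Metric.mem_closedBall]
        rw [Metric.mem_ball] at hxz hz2
        have := dist_triangle_left x 0 z
        linarith
      have hmeas : volume.real ((⋃ x ∈ S, Metric.ball x 1) ∩ Metric.ball 0 r) ≤ T.card * b := by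
        refine (measureReal_mono hsub ?_).trans ((measureReal_biUnion_finset_le T _).trans ?_)
        · exact (measure_biUnion_lt_top T.finite_toSet (fun x _ => measure_ball_lt_top)).ne
        · rw [Finset.sum_congr rfl (fun x _ => vol_b hn 1 zero_le_one x), Finset.sum_const]
          simp [hb]
      have hball : volume.real (Metric.ball (0 : 𝔼 n) r) = r ^ n * b := vol_b hn r hr.le 0
      show volume.real ((⋃ x ∈ S, Metric.ball x 1) ∩ Metric.ball 0 r) / volume.real (Metric.ball (0 : 𝔼 n) r) ≤ G r
      rw [hball, div_le_iff₀ (by positivity)]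
      refine hmeas.trans ?_
      have e1 : G r * (r ^ n * b) = ((r + 1 + P) ^ n * M / (P ^ n - ρ ^ n)) * b := by
        have : (r + 1 + P) ^ n = (1 + (1 + P) * r⁻¹) ^ n * r ^ n := by
          rw [← mul_pow]; congr 1; field_simp; ring
        rw [this, hG]; ring
      rw [e1]
      refine mul_le_mul_of_nonneg_right ?_ hb0.le
      rw [le_div_iff₀ hd0]; exact hT
    have hlim : Tendsto G atTop (nhds (M / (P ^ n - ρ ^ n))) := by
      have h := ((((tendsto_inv_atTop_zero (𝕜 := ℝ)).const_mul (1 + P)).const_add 1).pow n).mul_const (M / (P ^ n - ρ ^ n))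
      simpa using h
    have hcob : IsCoboundedUnder (· ≤ ·) atTop g := isCoboundedUnder_le_of_le atTop hg0
    have hbdd : IsBoundedUnder (· ≤ ·) atTop g := hlim.isBoundedUnder_le.mono_le hgG
    constructor
    · exact le_limsup_of_frequently_le (Eventually.frequently (Eventually.of_forall hg0)) hbdd
    · have := limsup_le_limsup hgG hcob hlim.isBoundedUnder_le
      rw [hlim.limsup_eq] at this
      exact this
  constructor
  · apply Real.sSup_nonneg
    rintro δ ⟨S, hS, rfl⟩
    exact (dens S hS).1
  · apply Real.sSup_le
    · rintro δ ⟨S, hS, rfl⟩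
      exact (dens S hS).2
    · positivity
end LP2
end SPB

namespace SPB
section Est

lemma est_g {δ X Q a q u : ℝ} (hδ : 0 < δ) (hX : 12 ≤ X) (hs : 1000 * X ^ 4 * δ ≤ 1) (hQ2 : 2 ≤ Q) (hQ5 : Q ≤ 5)
    (ha0 : 0 ≤ a) (haX : a ≤ X) (hq : q = Q * (1 - a * δ)) (hu : |u| ≤ Q * a * δ) :
    1 ≤ q ∧ q ≤ 5 ∧ u ^ 2 ≤ 25 * X ^ 2 * δ ^ 2 ∧ √(q ^ 2 - u ^ 2) ≤ q ∧ q - 25 * X ^ 2 * δ ^ 2 ≤ √(q ^ 2 - u ^ 2) ∧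
      1 / 2 ≤ √(q ^ 2 - u ^ 2) ∧ X * δ ≤ 1 / 1000 ∧ X ^ 2 * δ ≤ 1 / 1000 ∧ 0 < q ^ 2 - u ^ 2 := by
  have hX0 : (0:ℝ) < X := by linarith
  have hXd : X ^ 2 * δ ≤ 1 / 1000 := by
    have : X ^ 2 * 1 ≤ X ^ 2 * X ^ 2 := mul_le_mul_of_nonneg_left (by nlinarith) (by positivity)
    have h2 : X ^ 2 * δ ≤ X ^ 4 * δ := mul_le_mul_of_nonneg_right (by linarith [this, (by ring : X ^ 2 * X ^ 2 = X ^ 4)]) hδ.le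
    linarith
  have hXd1 : X * δ ≤ 1 / 1000 := by
    have : X * δ ≤ X ^ 2 * δ := mul_le_mul_of_nonneg_right (by nlinarith) hδ.le
    linarith
  have had : a * δ ≤ X * δ := mul_le_mul_of_nonneg_right haX hδ.le
  have had0 : 0 ≤ a * δ := by positivity
  have hQ0 : 0 < Q := by linarith
  have hq1 : 1 ≤ q := by
    rw [hq]
    calc (1:ℝ) ≤ 2 * (1 - a * δ) := by linarith
      _ ≤ _ := mul_le_mul_of_nonneg_right hQ2 (by linarith)
  have hq5 : q ≤ 5 := by
    rw [hq]
    calc Q * (1 - a * δ) ≤ Q * 1 := mul_le_mul_of_nonneg_left (by linarith) hQ0.le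
      _ ≤ 5 := by linarith
  have hu1 : |u| ≤ 5 * (X * δ) := by
    calc |u| ≤ Q * (a * δ) := by linarith
      _ ≤ 5 * (X * δ) := mul_le_mul hQ5 had had0 (by norm_num)
  have hu2 : u ^ 2 ≤ 25 * X ^ 2 * δ ^ 2 := by
    rw [← sq_abs]
    calc |u| ^ 2 ≤ (5 * (X * δ)) ^ 2 := pow_le_pow_left₀ (abs_nonneg u) hu1 2
      _ = _ := by ring
  have hsm : 25 * X ^ 2 * δ ^ 2 ≤ 1 / 4 := by
    have : 25 * X ^ 2 * δ ^ 2 = 25 * (X * δ) ^ 2 := by ring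
    rw [this]
    have : (X * δ) ^ 2 ≤ (1 / 1000) ^ 2 := pow_le_pow_left₀ (by positivity) hXd1 2
    linarith
  have hq0 : 0 ≤ q := by linarith
  have hg1 : √(q ^ 2 - u ^ 2) ≤ q := by
    calc √(q ^ 2 - u ^ 2) ≤ √(q ^ 2) := Real.sqrt_le_sqrt (by nlinarith [sq_nonneg u])
      _ = q := Real.sqrt_sq hq0
  have hg2 : q - 25 * X ^ 2 * δ ^ 2 ≤ √(q ^ 2 - u ^ 2) := by
    apply Real.le_sqrt_of_sq_le
    set m := 25 * X ^ 2 * δ ^ 2 with hm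
    have hm0 : 0 ≤ m := by positivity
    nlinarith
  refine ⟨hq1, hq5, hu2, hg1, hg2, by linarith, hXd1, hXd, ?_⟩
  nlinarith

lemma est_T {c δ X Q C τ a q u : ℝ} (hδ : 0 < δ) (hX : 12 ≤ X) (hs : 1000 * X ^ 4 * δ ≤ 1) (hc0 : 0 < c) (hc1 : c < 1)
    (hC0 : 0 ≤ C) (hC1 : C ≤ 1 / 2) (hQ2 : 2 ≤ Q) (hQ5 : Q ≤ 5) (hQ : Q * (1 - C) = 2 * (1 + c * δ) ^ 2)
    (hτ1 : 1 ≤ τ) (hτ2 : τ ≤ 1 + c * δ)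
    (ha0 : 0 ≤ a) (haX : a ≤ X) (hq : q = Q * (1 - a * δ)) (hu : |u| ≤ Q * a * δ) :
    (q - 2 * τ ^ 2) / √(q ^ 2 - u ^ 2) - C ≤ ((1 - C) * (2 * c - a) + 300 * X ^ 2 * δ) * δ ∧
    |(q - 2 * τ ^ 2) / √(q ^ 2 - u ^ 2) - C| ≤ 5 * X * δ := by
  obtain ⟨hq1, hq5, hu2, hg1, hg2, hg3, hXd1, hXd, -⟩ := est_g hδ hX hs hQ2 hQ5 ha0 haX hq hu
  set g := √(q ^ 2 - u ^ 2) with hg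
  have hq0 : 0 < q := by linarith
  have hg0 : 0 < g := by linarith
  have had : a * δ ≤ X * δ := mul_le_mul_of_nonneg_right haX hδ.le
  have had0 : 0 ≤ a * δ := by positivity
  have hcd0 : 0 < c * δ := by positivity
  have hcd1 : c * δ ≤ δ := mul_le_of_le_one_left hδ.le hc1.le
  have hd1 : δ ≤ 1 / 1000 := by nlinarith only [hX, hXd1, hδ]
  have hX0 : (0:ℝ) < X := by linarith
  -- replace g by q
  have hrep : ∀ m : ℝ, |m| ≤ 5 → |m / g - m / q| ≤ 250 * X ^ 2 * δ ^ 2 := by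
    intro m hm
    have e : m / g - m / q = m * ((q - g) / (g * q)) := by field_simp
    have hnn : 0 ≤ (q - g) / (g * q) := div_nonneg (sub_nonneg.2 hg1) (mul_pos hg0 hq0).le
    rw [e, abs_mul, abs_of_nonneg hnn]
    have : (q - g) / (g * q) ≤ 50 * X ^ 2 * δ ^ 2 := by
      rw [div_le_iff₀ (by positivity)]
      have h2 : (1:ℝ) / 2 * 1 ≤ g * q := mul_le_mul hg3 hq1 zero_le_one hg0.le
      have h3 := mul_le_mul_of_nonneg_left h2 (by positivity : 0 ≤ 50 * X ^ 2 * δ ^ 2)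
      linarith
    calc |m| * ((q - g) / (g * q)) ≤ 5 * (50 * X ^ 2 * δ ^ 2) :=
          mul_le_mul hm this hnn (by norm_num)
      _ = _ := by ring
  have h1C : 0 < 1 - C := by linarith
  -- 1/q identities
  have h2q : 2 * (1 + c * δ) ^ 2 / q = (1 - C) / (1 - a * δ) := by
    rw [hq, ← hQ]
    have : 1 - a * δ ≠ 0 := by linarith
    have : Q ≠ 0 := by linarith
    field_simp
  have hlow : (1 - C) * (1 + (a - 2 * c) * δ - 2 * c * a * δ ^ 2) ≤ 2 / q := by
    have e : 2 / q = (1 - C) / (1 - a * δ) / (1 + c * δ) ^ 2 := by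
      rw [← h2q]; field_simp
    rw [e, le_div_iff₀ (by positivity), le_div_iff₀ (by linarith)]
    have : (1 + (a - 2 * c) * δ - 2 * c * a * δ ^ 2) * (1 + c * δ) ^ 2 * (1 - a * δ) ≤ 1 := by
      have e2 : (1 + (a - 2 * c) * δ - 2 * c * a * δ ^ 2) * (1 + c * δ) ^ 2 * (1 - a * δ) =
        ((1 - 2 * (c * δ)) * (1 + c * δ) ^ 2) * (1 - (a * δ) ^ 2) := by ring
      rw [e2]
      have f1 : (1 - 2 * (c * δ)) * (1 + c * δ) ^ 2 ≤ 1 := by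
        have : (1 - 2 * (c * δ)) * (1 + c * δ) ^ 2 = 1 - 3 * (c * δ) ^ 2 - 2 * (c * δ) ^ 3 := by ring
        have h3 := pow_pos hcd0 3
        have h2 := pow_pos hcd0 2
        linarith
      have f2 : 0 ≤ (1 - 2 * (c * δ)) * (1 + c * δ) ^ 2 := mul_nonneg (by linarith) (by positivity)
      have f3 : 1 - (a * δ) ^ 2 ≤ 1 := by linarith [sq_nonneg (a * δ)]
      calc _ ≤ (1 - 2 * (c * δ)) * (1 + c * δ) ^ 2 * 1 := mul_le_mul_of_nonneg_left f3 f2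
        _ ≤ 1 := by linarith
    calc _ = (1 - C) * ((1 + (a - 2 * c) * δ - 2 * c * a * δ ^ 2) * (1 + c * δ) ^ 2 * (1 - a * δ)) := by ring
      _ ≤ (1 - C) * 1 := mul_le_mul_of_nonneg_left this h1C.le
      _ = _ := by ring
  have hτsq : 1 ≤ τ ^ 2 := one_le_pow₀ hτ1
  have hτsq2 : τ ^ 2 ≤ (1 + c * δ) ^ 2 := pow_le_pow_left₀ (by linarith) hτ2 2
  have hτ3 : τ ^ 2 ≤ 2 := by
    have h1 : τ ^ 2 ≤ (1 + 1 / 1000) ^ 2 := pow_le_pow_left₀ (by linarith) (by linarith) 2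
    linarith
  have hup : (q - 2 * τ ^ 2) / g - C ≤ ((1 - C) * (2 * c - a) + 300 * X ^ 2 * δ) * δ := by
    have s1 : (q - 2 * τ ^ 2) / g ≤ (q - 2) / g := div_le_div_of_nonneg_right (by linarith) hg0.le
    have s2 := (abs_le.1 (hrep (q - 2) (abs_le.2 ⟨by linarith, by linarith⟩))).2
    have s3 : (q - 2) / q = 1 - 2 / q := by field_simp
    have s4 : (1 - C) * (2 * c * a * δ ^ 2) ≤ 50 * X ^ 2 * δ ^ 2 := by
      have : c * a ≤ 1 * X := mul_le_mul hc1.le haX ha0 zero_le_one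
      have h3 : (1 - C) * (2 * (c * a)) ≤ 50 * X ^ 2 := by
        calc (1 - C) * (2 * (c * a)) ≤ 1 * (2 * (1 * X)) := mul_le_mul (by linarith) (by linarith) (by positivity) zero_le_one
          _ ≤ _ := by nlinarith
      calc _ = (1 - C) * (2 * (c * a)) * δ ^ 2 := by ring
        _ ≤ _ := mul_le_mul_of_nonneg_right h3 (by positivity)
    linarith
  have hlo : -(5 * X * δ) ≤ (q - 2 * τ ^ 2) / g - C := by
    have s2 := (abs_le.1 (hrep (q - 2 * τ ^ 2) (abs_le.2 ⟨by linarith, by linarith⟩))).1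
    have s3 : (q - 2 * τ ^ 2) / q = 1 - 2 * τ ^ 2 / q := by field_simp
    have s4 : 2 * τ ^ 2 / q ≤ (1 - C) / (1 - a * δ) := by
      rw [← h2q]; exact div_le_div_of_nonneg_right (by linarith) hq0.le
    have s5 : (1 - C) / (1 - a * δ) ≤ (1 - C) + 2 * (X * δ) := by
      rw [div_le_iff₀ (by linarith)]
      have h6 : (1 - C) * (a * δ) ≤ 1 * (X * δ) := mul_le_mul (by linarith) had had0 zero_le_one
      have h7 : 2 * (X * δ) * (a * δ) ≤ 2 * (X * δ) * (1 / 2) := mul_le_mul_of_nonneg_left (by linarith) (by positivity)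
      linarith
    have s6 : 250 * X ^ 2 * δ ^ 2 ≤ X * δ := by
      have : 250 * X ^ 2 * δ ^ 2 = (250 * (X * δ)) * (X * δ) := by ring
      rw [this]
      have : 250 * (X * δ) * (X * δ) ≤ 1 * (X * δ) := mul_le_mul_of_nonneg_right (by linarith) (by positivity)
      linarith
    linarith
  refine ⟨hup, abs_le.2 ⟨hlo, hup.trans ?_⟩⟩
  refine mul_le_mul_of_nonneg_right ?_ hδ.le
  have h8 : (1 - C) * (2 * c - a) ≤ 2 := by
    have := mul_nonneg h1C.le ha0
    have h9 : (1 - C) * (2 * c) ≤ 1 * 2 := mul_le_mul (by linarith) (by linarith) (by linarith) zero_le_one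
    linarith
  have h10 : 300 * X ^ 2 * δ ≤ 1 := by linarith
  linarith

lemma est_E {n : ℕ} {δ X Q a q u : ℝ} (hδ : 0 < δ) (hnδ : n * δ = 1) (hX : 12 ≤ X) (hs : 1000 * X ^ 4 * δ ≤ 1) (hQ2 : 2 ≤ Q) (hQ5 : Q ≤ 5)
    (ha0 : 0 ≤ a) (haX : a ≤ X) (hq : q = Q * (1 - a * δ)) (hu : |u| ≤ Q * a * δ) :
    |(√(q ^ 2 - u ^ 2) / Q) ^ n - exp (-a)| ≤ 1000 * X ^ 4 * δ ∧ (√(q ^ 2 - u ^ 2) / Q) ^ n ≤ 1 := by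
  obtain ⟨hq1, hq5, hu2, hg1, hg2, hg3, hXd1, hXd, -⟩ := est_g hδ hX hs hQ2 hQ5 ha0 haX hq hu
  set g := √(q ^ 2 - u ^ 2) with hg
  have hQ0 : 0 < Q := by linarith
  have hX0 : (0:ℝ) < X := by linarith
  have had : a * δ ≤ X * δ := mul_le_mul_of_nonneg_right haX hδ.le
  have had0 : 0 ≤ a * δ := by positivity
  have hd1 : δ ≤ 1 / 1000 := by nlinarith only [hX, hXd1, hδ]
  have hg0 : 0 ≤ g / Q := div_nonneg (by linarith) hQ0.le
  have hup1 : g / Q ≤ 1 - a * δ := by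
    rw [div_le_iff₀ hQ0]; linarith
  have hup : (g / Q) ^ n ≤ exp (-a) := by
    have : g / Q ≤ exp (-(a * δ)) := hup1.trans (by linarith [Real.add_one_le_exp (-(a * δ))])
    calc (g / Q) ^ n ≤ (exp (-(a * δ))) ^ n := pow_le_pow_left₀ hg0 this n
      _ = exp (-a) := by rw [← Real.exp_nat_mul]; congr 1; linear_combination (-a) * hnδ
  have hE1 : exp (-a) ≤ 1 := Real.exp_le_one_iff.2 (by linarith)
  refine ⟨?_, hup.trans hE1⟩
  set t := a * δ + 13 * X ^ 2 * δ ^ 2 with ht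
  have ht0 : 0 ≤ t := by positivity
  have htX : t ≤ 2 * X * δ := by
    have : 13 * X ^ 2 * δ ^ 2 = (13 * (X * δ)) * (X * δ) := by ring
    have h2 : (13 * (X * δ)) * (X * δ) ≤ 1 * (X * δ) := mul_le_mul_of_nonneg_right (by linarith) (by positivity)
    linarith
  have hlow1 : 1 - t ≤ g / Q := by
    rw [le_div_iff₀ hQ0]
    have h1 : 25 * X ^ 2 * δ ^ 2 ≤ 13 * X ^ 2 * δ ^ 2 * Q := by
      have : 0 ≤ X ^ 2 * δ ^ 2 := by positivity
      nlinarith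
    have : (1 - t) * Q = q - 13 * X ^ 2 * δ ^ 2 * Q := by rw [ht, hq]; ring
    linarith
  have hexp : exp (-(t + 2 * t ^ 2)) ≤ 1 - t := by
    have h1 : 0 < 1 - t := by linarith
    rw [Real.exp_neg, inv_le_comm₀ (exp_pos _) h1]
    have h2 : (1 - t)⁻¹ ≤ (t + 2 * t ^ 2) + 1 := by
      rw [inv_le_iff_one_le_mul₀ h1]
      have : t ≤ 1 / 2 := by linarith
      nlinarith [sq_nonneg t, mul_nonneg ht0 ht0, mul_nonneg (sq_nonneg t) (by linarith : 0 ≤ 1 - 2 * t)]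
    exact h2.trans (Real.add_one_le_exp _)
  have hlow : exp (-a) - 1000 * X ^ 4 * δ ≤ (g / Q) ^ n := by
    have h1 : exp (-(n * (t + 2 * t ^ 2))) ≤ (g / Q) ^ n := by
      calc exp (-(n * (t + 2 * t ^ 2))) = (exp (-(t + 2 * t ^ 2))) ^ n := by rw [← Real.exp_nat_mul]; congr 1; ring
        _ ≤ _ := pow_le_pow_left₀ (exp_pos _).le (hexp.trans hlow1) n
    have h2 : n * (t + 2 * t ^ 2) ≤ a + 21 * X ^ 2 * δ := by
      have e1 : n * t = a + 13 * X ^ 2 * δ := by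
        rw [ht]; linear_combination (a + 13 * X ^ 2 * δ) * hnδ
      have e2 : n * t ^ 2 ≤ 4 * X ^ 2 * δ := by
        have : t ^ 2 ≤ (2 * X * δ) ^ 2 := pow_le_pow_left₀ ht0 htX 2
        have h3 : n * t ^ 2 ≤ n * (2 * X * δ) ^ 2 := mul_le_mul_of_nonneg_left this (by positivity)
        have h4 : n * (2 * X * δ) ^ 2 = 4 * X ^ 2 * δ := by linear_combination (4 * X ^ 2 * δ) * hnδ
        linarith
      linarith
    have h3 : exp (-a) * (1 - 21 * X ^ 2 * δ) ≤ exp (-(n * (t + 2 * t ^ 2))) := by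
      calc exp (-a) * (1 - 21 * X ^ 2 * δ) ≤ exp (-a) * exp (-(21 * X ^ 2 * δ)) :=
            mul_le_mul_of_nonneg_left (by linarith [Real.add_one_le_exp (-(21 * X ^ 2 * δ))]) (exp_pos _).le
        _ = exp (-a + -(21 * X ^ 2 * δ)) := (Real.exp_add _ _).symm
        _ ≤ _ := Real.exp_le_exp.2 (by linarith)
    have h4 : exp (-a) * (21 * X ^ 2 * δ) ≤ 1000 * X ^ 4 * δ := by
      have : X ^ 2 ≤ X ^ 4 := pow_le_pow_right₀ (by linarith) (by norm_num)
      have h5 : 21 * X ^ 2 * δ ≤ 1000 * X ^ 4 * δ := mul_le_mul_of_nonneg_right (by nlinarith [sq_nonneg X]) hδ.le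
      calc exp (-a) * (21 * X ^ 2 * δ) ≤ 1 * (21 * X ^ 2 * δ) := mul_le_mul_of_nonneg_right hE1 (by positivity)
        _ ≤ _ := by linarith
    linarith
  have : 0 ≤ 1000 * X ^ 4 * δ := by positivity
  exact abs_le.2 ⟨by linarith, by linarith⟩

lemma est_y {c δ X Q τ a q u : ℝ} (hδ : 0 < δ) (hX : 12 ≤ X) (hs : 1000 * X ^ 4 * δ ≤ 1) (hc0 : 0 < c) (hc1 : c < 1)
    (hQ2 : 2 ≤ Q) (hQ5 : Q ≤ 5) (hτ1 : 1 ≤ τ) (hτ2 : τ ≤ 1 + c * δ)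
    (ha0 : 0 ≤ a) (haX : a ≤ X) (hq : q = Q * (1 - a * δ)) (hu : |u| ≤ Q * a * δ) :
    1 / 2 ≤ q - τ ^ 2 - u ^ 2 / (4 * τ ^ 2) ∧
    |(√(Q - 1) / √(q - τ ^ 2 - u ^ 2 / (4 * τ ^ 2))) ^ 3 - 1| ≤ 200 * X * δ := by
  obtain ⟨hq1, hq5, hu2, hg1, hg2, hg3, hXd1, hXd, -⟩ := est_g hδ hX hs hQ2 hQ5 ha0 haX hq hu
  have hX0 : (0:ℝ) < X := by linarith
  have hXδ : 0 < X * δ := by positivity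
  have had : a * δ ≤ X * δ := mul_le_mul_of_nonneg_right haX hδ.le
  have had0 : 0 ≤ a * δ := by positivity
  have hd1 : δ ≤ 1 / 1000 := by nlinarith only [hX, hXd1, hδ]
  have hcd1 : c * δ ≤ δ := mul_le_of_le_one_left hδ.le hc1.le
  set m := q - τ ^ 2 - u ^ 2 / (4 * τ ^ 2) with hm
  have hτsq : 1 ≤ τ ^ 2 := one_le_pow₀ hτ1
  have hτ3 : τ ^ 2 ≤ 1 + X * δ := by
    have h1 : τ ^ 2 ≤ (1 + δ) ^ 2 := pow_le_pow_left₀ (by linarith) (by linarith) 2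
    have h2 : 12 * δ ≤ X * δ := mul_le_mul_of_nonneg_right hX hδ.le
    nlinarith only [h1, h2, hδ, hd1]
  have hw0 : 0 ≤ u ^ 2 / (4 * τ ^ 2) := by positivity
  have hw1 : u ^ 2 / (4 * τ ^ 2) ≤ X * δ := by
    rw [div_le_iff₀ (by positivity)]
    have : 25 * X ^ 2 * δ ^ 2 = (25 * (X * δ)) * (X * δ) := by ring
    have h2 : (25 * (X * δ)) * (X * δ) ≤ 1 * (X * δ) := mul_le_mul_of_nonneg_right (by linarith) (by positivity)
    have h3 : X * δ * 1 ≤ X * δ * (4 * τ ^ 2) := mul_le_mul_of_nonneg_left (by linarith) hXδ.le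
    linarith
  have hqQ : q ≤ Q := by rw [hq]; nlinarith only [had0, hQ2]
  have hqQ2 : Q - 5 * (X * δ) ≤ q := by
    have : Q * (a * δ) ≤ 5 * (X * δ) := mul_le_mul hQ5 had had0 (by norm_num)
    rw [hq]; linarith
  have hm1 : m ≤ Q - 1 := by linarith
  have hm2 : Q - 1 - 7 * (X * δ) ≤ m := by linarith
  have hm3 : 1 / 2 ≤ m := by linarith
  refine ⟨hm3, ?_⟩
  set p := √(Q - 1) / √m with hp
  have hp0 : 0 ≤ p := by positivity
  have hp2 : p ^ 2 = (Q - 1) / m := by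
    rw [hp, div_pow, Real.sq_sqrt (by linarith), Real.sq_sqrt (by linarith)]
  have hp3 : 1 ≤ p ^ 2 := by rw [hp2, le_div_iff₀ (by linarith)]; linarith
  have hp4 : p ^ 2 ≤ 1 + 14 * (X * δ) := by rw [hp2, div_le_iff₀ (by linarith)]; nlinarith only [hm3, hm2, hXδ]
  have hp5 : 1 ≤ p := by nlinarith only [hp3, hp0]
  have hp6 : p ≤ 1 + 14 * (X * δ) := by nlinarith only [hp5, hp4]
  have hp7 : p ≤ 2 := by linarith
  have e : p ^ 3 - 1 = (p - 1) * (p ^ 2 + p + 1) := by ring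
  rw [abs_of_nonneg (by rw [e]; exact mul_nonneg (by linarith) (by positivity)), e]
  calc (p - 1) * (p ^ 2 + p + 1) ≤ (14 * (X * δ)) * 7 := mul_le_mul (by linarith) (by linarith) (by positivity) (by positivity)
    _ ≤ _ := by linarith

end Est
end SPB

namespace SPB
section Pt

lemma pt_alg {E p ea z η : ℝ} (hE0 : 0 ≤ E) (hE1 : E ≤ 1) {e1 e2 : ℝ} (h1 : |E - ea| ≤ e1) (h2 : |p - 1| ≤ e2) (hz : |z| ≤ η) :
    p * E * z ≤ ea * z + (e1 + e2) * η := by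
  have h3 : |p * E - ea| ≤ e1 + e2 := by
    have : p * E - ea = (E - ea) + (p - 1) * E := by ring
    rw [this]
    refine (abs_add_le _ _).trans (add_le_add h1 ?_)
    rw [abs_mul, abs_of_nonneg hE0]
    calc |p - 1| * E ≤ |p - 1| * 1 := mul_le_mul_of_nonneg_left hE1 (abs_nonneg _)
      _ ≤ e2 := by linarith
  have h4 : |(p * E - ea) * z| ≤ (e1 + e2) * η := by
    rw [abs_mul]
    exact mul_le_mul h3 hz (abs_nonneg _) ((abs_nonneg _).trans h3)
  have h5 := (abs_le.1 h4).2
  linarith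

set_option maxHeartbeats 1000000 in
lemma pt_in {n : ℕ} {c δ X Q C τ a q u ξ s ε ε0 K fv : ℝ} (hn3 : 3 ≤ n) (hδ : 0 < δ) (hnδ : n * δ = 1) (hX : 12 ≤ X) (hs : 1000 * X ^ 4 * δ ≤ 1)
    (hc0 : 0 < c) (hc1 : c < 1)
    (hC0 : 0 ≤ C) (hC1 : C ≤ 1 / 2) (hQ2 : 2 ≤ Q) (hQ5 : Q ≤ 5) (hQ : Q * (1 - C) = 2 * (1 + c * δ) ^ 2)
    (hτ1 : 1 ≤ τ) (hτ2 : τ ≤ 1 + c * δ)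
    (ha0 : 0 ≤ a) (haX : a ≤ X) (hq : q = Q * (1 - a * δ)) (hu : |u| ≤ Q * a * δ) (huξ : u = 2 * τ * ξ)
    (hsC : C ≤ s) (hsC2 : s ≤ C + 2 * δ) (hε : 0 < ε) (hε1 : ε ≤ 1) (hε0 : 6 * X * ε0 = ε / 4) (hδε : 5000 * X ^ 5 * δ ≤ ε / 4) (hK : 0 < K)
    (hF : |fv * √(1 - ((q - 2 * τ ^ 2) / √(q ^ 2 - u ^ 2)) ^ 2) ^ n - K * ((q - 2 * τ ^ 2) / √(q ^ 2 - u ^ 2) - s)| ≤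
      ε0 * (K * |(q - 2 * τ ^ 2) / √(q ^ 2 - u ^ 2) - s|)) :
    √(q - (τ ^ 2 + ξ ^ 2)) ^ (n - 3) * fv ≤
      ((Q / (2 * τ)) ^ n / √(Q - 1) ^ 3 * (K * δ) * (1 - C)) * (exp (-a) * (2 * c - a) + ε) := by
  obtain ⟨hq1, hq5, hu2, hg1, hg2, hg3, hXd1, hXd, hgpos⟩ := est_g hδ hX hs hQ2 hQ5 ha0 haX hq hu
  obtain ⟨hT1, hT2⟩ := est_T hδ hX hs hc0 hc1 hC0 hC1 hQ2 hQ5 hQ hτ1 hτ2 ha0 haX hq hu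
  obtain ⟨hE1, hE2⟩ := est_E hδ hnδ hX hs hQ2 hQ5 ha0 haX hq hu
  obtain ⟨hy1, hy2⟩ := est_y hδ hX hs hc0 hc1 hQ2 hQ5 hτ1 hτ2 ha0 haX hq hu
  have hX0 : (0:ℝ) < X := by linarith
  have hτ0 : 0 < τ := by linarith
  have hyy : q - τ ^ 2 - u ^ 2 / (4 * τ ^ 2) = q - (τ ^ 2 + ξ ^ 2) := by
    rw [huξ]; field_simp; ring
  rw [hyy] at hy1 hy2
  set m := q - (τ ^ 2 + ξ ^ 2) with hm
  set y := √m with hy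
  have hy0 : 0 < y := Real.sqrt_pos.2 (by linarith)
  have hgsq : √(q ^ 2 - u ^ 2) ^ 2 = q ^ 2 - u ^ 2 := Real.sq_sqrt hgpos.le
  set g := √(q ^ 2 - u ^ 2) with hg
  have hg0 : 0 < g := by linarith
  set T := (q - 2 * τ ^ 2) / g with hT
  have hid : g ^ 2 * (1 - T ^ 2) = 4 * τ ^ 2 * m := by
    have : T * g = q - 2 * τ ^ 2 := by rw [hT]; field_simp
    calc g ^ 2 * (1 - T ^ 2) = g ^ 2 - (T * g) ^ 2 := by ring
      _ = 4 * τ ^ 2 * m := by rw [this, hgsq, huξ, hm]; ring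
  have hyg : y = g / (2 * τ) * √(1 - T ^ 2) := by
    have h1T : 0 ≤ 1 - T ^ 2 := by
      have : 0 ≤ g ^ 2 * (1 - T ^ 2) := by rw [hid]; exact mul_nonneg (by positivity) (by linarith)
      exact nonneg_of_mul_nonneg_right this (by positivity)
    rw [hy, Real.sqrt_eq_iff_mul_self_eq (by linarith) (by positivity), ← pow_two, mul_pow, Real.sq_sqrt h1T, div_pow]
    rw [div_mul_eq_mul_div, hid]; field_simp; ring
  set F := fv * √(1 - T ^ 2) ^ n with hFdef
  have hQ0 : 0 < Q := by linarith
  have hQ1 : 0 < √(Q - 1) := Real.sqrt_pos.2 (by linarith)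
  have hJ : y ^ (n - 3) * fv = (Q / (2 * τ)) ^ n / √(Q - 1) ^ 3 * ((√(Q - 1) / y) ^ 3 * (g / Q) ^ n * F) := by
    have e1 : y ^ (n - 3) = y ^ n / y ^ 3 := by
      rw [eq_div_iff (by positivity), ← pow_add]; congr 1; omega
    have e2 : y ^ n = (g / (2 * τ)) ^ n * √(1 - T ^ 2) ^ n := by
      conv_lhs => rw [hyg]
      rw [mul_pow]
    have e3 : (g / (2 * τ)) ^ n = (Q / (2 * τ)) ^ n * (g / Q) ^ n := by
      rw [← mul_pow]; congr 1; field_simp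
    rw [e1, e2, e3, hFdef]
    field_simp
  have hTs : |T - s| ≤ 6 * X * δ := by
    have : T - s = (T - C) - (s - C) := by ring
    rw [this]
    refine (abs_sub _ _).trans ?_
    rw [abs_of_nonneg (by linarith : 0 ≤ s - C)]
    have : 12 * δ ≤ X * δ := mul_le_mul_of_nonneg_right hX hδ.le
    linarith
  set z := (1 - C) * (2 * c - a) + 300 * X ^ 2 * δ + 6 * X * ε0 with hz
  have hFz : F ≤ K * δ * z := by
    have h1 := (abs_le.1 hF).2
    have he0 : 0 ≤ ε0 := by
      by_contra h
      push Not at h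
      have := mul_neg_of_pos_of_neg (by positivity : 0 < 6 * X) h
      linarith
    have h2 : ε0 * (K * |T - s|) ≤ ε0 * (K * (6 * X * δ)) := by gcongr
    have h3 : K * (T - s) ≤ K * (((1 - C) * (2 * c - a) + 300 * X ^ 2 * δ) * δ) := by
      apply mul_le_mul_of_nonneg_left _ hK.le
      linarith
    calc F ≤ K * (((1 - C) * (2 * c - a) + 300 * X ^ 2 * δ) * δ) + ε0 * (K * (6 * X * δ)) := by linarith
      _ = _ := by rw [hz]; ring
  have h1C : 0 < 1 - C := by linarith
  have hX5 : 300 * X ^ 2 * δ + (1000 * X ^ 4 * δ + 200 * X * δ) * (2 * X) ≤ 5000 * X ^ 5 * δ := by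
    have h1 : X ^ 2 ≤ X ^ 5 := pow_le_pow_right₀ (by linarith) (by norm_num)
    have : 300 * X ^ 2 + (1000 * X ^ 4 + 200 * X) * (2 * X) ≤ 5000 * X ^ 5 := by
      have h5 : 0 < X ^ 5 := by positivity
      calc 300 * X ^ 2 + (1000 * X ^ 4 + 200 * X) * (2 * X) = 700 * X ^ 2 + 2000 * X ^ 5 := by ring
        _ ≤ _ := by linarith
    calc _ = (300 * X ^ 2 + (1000 * X ^ 4 + 200 * X) * (2 * X)) * δ := by ring
      _ ≤ _ := mul_le_mul_of_nonneg_right this hδ.le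
  have hzb : |z| ≤ 2 * X := by
    have b1 : (1 - C) * (2 * c - a) ≤ 2 := by
      have := mul_nonneg h1C.le ha0
      have h9 : (1 - C) * (2 * c) ≤ 1 * 2 := mul_le_mul (by linarith) (by linarith) (by linarith) zero_le_one
      linarith
    have b2 : -X ≤ (1 - C) * (2 * c - a) := by
      have h9 : (1 - C) * a ≤ 1 * X := mul_le_mul (by linarith) haX ha0 zero_le_one
      have h10 : 0 ≤ (1 - C) * (2 * c) := by positivity
      linarith
    have b3 : 0 ≤ 300 * X ^ 2 * δ := by positivity
    have b4 : 300 * X ^ 2 * δ ≤ 1 := by linarith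
    rw [abs_le, hz, hε0]
    constructor <;> linarith
  have hW0 : 0 ≤ (Q / (2 * τ)) ^ n / √(Q - 1) ^ 3 := by positivity
  have hpE : 0 ≤ (√(Q - 1) / y) ^ 3 * (g / Q) ^ n := by positivity
  have hmain : (√(Q - 1) / y) ^ 3 * (g / Q) ^ n * z ≤ (1 - C) * (exp (-a) * (2 * c - a) + ε) := by
    refine (pt_alg (by positivity) hE2 hE1 hy2 hzb).trans ?_
    have hea : exp (-a) ≤ 1 := Real.exp_le_one_iff.2 (by linarith)
    have h1 : exp (-a) * (300 * X ^ 2 * δ + 6 * X * ε0) ≤ 1 * (300 * X ^ 2 * δ + 6 * X * ε0) :=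
      mul_le_mul_of_nonneg_right hea (by rw [hε0]; positivity)
    have h2 : exp (-a) * z = (1 - C) * (exp (-a) * (2 * c - a)) + exp (-a) * (300 * X ^ 2 * δ + 6 * X * ε0) := by rw [hz]; ring
    have h3 : ε / 2 ≤ (1 - C) * ε := by
      have := mul_le_mul_of_nonneg_right (by linarith : (1:ℝ) / 2 ≤ 1 - C) hε.le
      linarith
    rw [h2]
    linarith
  rw [hJ]
  calc _ ≤ (Q / (2 * τ)) ^ n / √(Q - 1) ^ 3 * ((√(Q - 1) / y) ^ 3 * (g / Q) ^ n * (K * δ * z)) := by gcongr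
    _ = (Q / (2 * τ)) ^ n / √(Q - 1) ^ 3 * (K * δ) * ((√(Q - 1) / y) ^ 3 * (g / Q) ^ n * z) := by ring
    _ ≤ (Q / (2 * τ)) ^ n / √(Q - 1) ^ 3 * (K * δ) * ((1 - C) * (exp (-a) * (2 * c - a) + ε)) :=
        mul_le_mul_of_nonneg_left hmain (by positivity)
    _ = _ := by ring

/-- geometric monotonicity -/
lemma geo {R r1 r2 r' κ : ℝ} (h1 : 3 / 4 * R ≤ r1) (h1' : r1 ≤ R) (h2 : 3 / 4 * R ≤ r2) (h2' : r2 ≤ r') (h3 : r' ≤ R) (hκ0 : 0 ≤ κ) (hκ : κ ≤ 3 / 4)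
    (hR : 0 < R) : r1 ^ 2 + r2 ^ 2 - 2 * κ * r1 * r2 ≤ R ^ 2 + r' ^ 2 - 2 * κ * R * r' := by
  have k1 : κ * r2 ≤ 3 / 4 * R := mul_le_mul hκ (h2'.trans h3) (by linarith) (by norm_num)
  have k2 : κ * R ≤ 3 / 4 * R := mul_le_mul_of_nonneg_right hκ hR.le
  have a1 : 0 ≤ (R - r1) * (R + r1 - 2 * (κ * r2)) := mul_nonneg (by linarith) (by linarith)
  have a2 : 0 ≤ (r' - r2) * (r' + r2 - 2 * (κ * R)) := mul_nonneg (by linarith) (by linarith)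
  linarith

lemma f_nonpos {e : ℕ} {s t : ℝ} {f Y q : Polynomial ℝ} (hY : (Polynomial.X - Polynomial.C s) * q = Y)
    (hf : f = (1 + Polynomial.X) ^ e * Y * q) (ht1 : -1 ≤ t) (ht : t ≤ s) : f.eval t ≤ 0 := by
  rw [hf, ← hY]
  simp only [Polynomial.eval_mul, Polynomial.eval_pow, Polynomial.eval_add, Polynomial.eval_one, Polynomial.eval_X, Polynomial.eval_sub, Polynomial.eval_C]
  have h1 : 0 ≤ (1 + t) ^ e := pow_nonneg (by linarith) e
  have h2 : 0 ≤ (s - t) * (q.eval t) ^ 2 := mul_nonneg (by linarith) (sq_nonneg _)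
  nlinarith [mul_nonneg h1 h2]

/-- far region -/
lemma T_far {c δ X Q C τ A B : ℝ} (hδ : 0 < δ) (hX : 12 ≤ X) (hs : X * δ ≤ 1) (hc0 : 0 < c) (hc1 : c < 1)
    (hC0 : 0 ≤ C) (hC1 : C ≤ 1 / 2) (hQ2 : 2 ≤ Q) (hQ : Q * (1 - C) = 2 * (1 + c * δ) ^ 2)
    (hτ1 : 1 ≤ τ) (hA1 : 9 / 16 * Q ≤ A) (hA2 : A ≤ Q) (hB1 : 9 / 16 * Q ≤ B) (hBA : B ≤ A) (hfar : A + B ≤ 2 * Q * (1 - X * δ)) :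
    (A + B - 4 * τ ^ 2) / (2 * √(A * B)) ≤ C := by
  have hQ0 : 0 < Q := by linarith
  have hA0 : 0 < A := by linarith
  have hB0 : 0 < B := by linarith
  have hR : 0 < √Q := Real.sqrt_pos.2 hQ0
  have sA : √A ^ 2 = A := Real.sq_sqrt hA0.le
  have sB : √B ^ 2 = B := Real.sq_sqrt hB0.le
  have sQ : √Q ^ 2 = Q := Real.sq_sqrt hQ0.le
  have l34 : ∀ Z, 9 / 16 * Q ≤ Z → 3 / 4 * √Q ≤ √Z := fun Z hZ => by
    apply Real.le_sqrt_of_sq_le; rw [mul_pow, sQ]; linarith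
  set x := X * δ with hx
  have hx0 : 0 < x := by positivity
  have hr' : √B ≤ √Q * (1 - x / 2) := by
    apply Real.sqrt_le_iff.2 ⟨mul_nonneg hR.le (by linarith), ?_⟩
    rw [mul_pow, sQ]
    have : B ≤ Q * (1 - x) := by linarith
    have h2 : Q * (1 - x) ≤ Q * (1 - x / 2) ^ 2 := mul_le_mul_of_nonneg_left (by nlinarith [sq_nonneg x]) hQ0.le
    linarith
  have hg := geo (l34 A hA1) (Real.sqrt_le_sqrt hA2) (l34 B hB1) hr' (by
    have : √Q * (1 - x / 2) ≤ √Q * 1 := mul_le_mul_of_nonneg_left (by linarith) hR.le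
    linarith) hC0 (by linarith) hR
  rw [sA, sB, sQ, mul_pow, sQ] at hg
  have e1 : Q + Q * (1 - x / 2) ^ 2 - 2 * C * √Q * (√Q * (1 - x / 2)) = 2 * (Q * (1 - C)) * (1 - x / 2) + Q * x ^ 2 / 4 := by
    have : 2 * C * √Q * (√Q * (1 - x / 2)) = 2 * C * Q * (1 - x / 2) := by rw [← sQ]; simp only [Real.sqrt_sq hR.le]; ring
    rw [this]; ring
  rw [e1, hQ] at hg
  set k := (1 + c * δ) ^ 2 with hk
  have hcd : c * δ ≤ δ := mul_le_of_le_one_left hδ.le hc1.le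
  have hcd0 : 0 < c * δ := by positivity
  have hδ1 : δ ≤ 1 := by nlinarith only [hX, hs, hδ]
  have hk1 : k ≤ 1 + 3 * δ := by rw [hk]; nlinarith only [hcd, hcd0, hδ1]
  have hk0 : 0 < k := by positivity
  have hQk : Q ≤ 4 * k := by nlinarith only [hQ, hC1, hQ0]
  have hfin : 4 * k * (1 - x / 2) + Q * x ^ 2 / 4 ≤ 4 := by
    have i1 : Q * x ^ 2 / 4 ≤ k * x := by
      have : Q * x ^ 2 ≤ 4 * k * x := by
        calc Q * x ^ 2 ≤ (4 * k) * x ^ 2 := mul_le_mul_of_nonneg_right hQk (by positivity)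
          _ ≤ (4 * k) * x := mul_le_mul_of_nonneg_left (by nlinarith) (by positivity)
      linarith
    have i2 : k * (4 - x) ≤ (1 + 3 * δ) * (4 - x) := mul_le_mul_of_nonneg_right hk1 (by linarith)
    have i3 : 12 * δ ≤ x := mul_le_mul_of_nonneg_right hX hδ.le
    have i4 : 0 ≤ δ * x := by positivity
    linarith
  have hsq : √(A * B) = √A * √B := Real.sqrt_mul hA0.le B
  have hpos : 0 < √A * √B := mul_pos (Real.sqrt_pos.2 hA0) (Real.sqrt_pos.2 hB0)
  rw [hsq, div_le_iff₀ (by positivity)]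
  have : 1 ≤ τ ^ 2 := one_le_pow₀ hτ1
  linarith

/-- near bound -/
lemma T_near {Q κ τ A B : ℝ} (hQ0 : 0 < Q) (hκ0 : 0 ≤ κ) (hκ1 : κ ≤ 3 / 4) (hA1 : 9 / 16 * Q ≤ A) (hA2 : A ≤ Q) (hB1 : 9 / 16 * Q ≤ B) (hB2 : B ≤ Q)
    (hτ : Q * (1 - κ) ≤ 2 * τ ^ 2) :
    (A + B - 4 * τ ^ 2) / (2 * √(A * B)) ≤ κ := by
  have hA0 : 0 < A := by linarith
  have hB0 : 0 < B := by linarith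
  have hR : 0 < √Q := Real.sqrt_pos.2 hQ0
  have sA : √A ^ 2 = A := Real.sq_sqrt hA0.le
  have sB : √B ^ 2 = B := Real.sq_sqrt hB0.le
  have sQ : √Q ^ 2 = Q := Real.sq_sqrt hQ0.le
  have l34 : ∀ Z, 9 / 16 * Q ≤ Z → 3 / 4 * √Q ≤ √Z := fun Z hZ => by
    apply Real.le_sqrt_of_sq_le; rw [mul_pow, sQ]; linarith
  have hg := geo (l34 A hA1) (Real.sqrt_le_sqrt hA2) (l34 B hB1) (Real.sqrt_le_sqrt hB2) le_rfl hκ0 hκ1 hR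
  have e1 : 2 * κ * √Q * √Q = 2 * κ * Q := by
    rw [mul_assoc, ← pow_two, sQ]
  rw [sA, sB, sQ, e1] at hg
  have hsq : √(A * B) = √A * √B := Real.sqrt_mul hA0.le B
  have hpos : 0 < √A * √B := mul_pos (Real.sqrt_pos.2 hA0) (Real.sqrt_pos.2 hB0)
  rw [hsq, div_le_iff₀ (by positivity)]
  linarith
end Pt
end SPB

namespace SPB
section Int2

/-- comparison region -/
def DD (Q w τ : ℝ) : Set (ℝ × ℝ) := {p | |2 * τ * p.1| ≤ Q - p.2 ∧ Q - p.2 ≤ w}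

/-- comparison function -/
def HH (κ Q w δ c ε τ : ℝ) : ℝ × ℝ → ℝ :=
  (DD Q w τ).indicator (fun p => κ * (exp (-((Q - p.2) / (Q * δ))) * (2 * c - (Q - p.2) / (Q * δ)) + ε))

/-- support region of the kernel -/
def DJ (Q τ : ℝ) : Set (ℝ × ℝ) :=
  {p | 9 / 16 * Q ≤ p.2 + 2 * τ * p.1 ∧ p.2 + 2 * τ * p.1 ≤ Q ∧ 9 / 16 * Q ≤ p.2 - 2 * τ * p.1 ∧ p.2 - 2 * τ * p.1 ≤ Q}

open Classical in
/-- kernel in terms of squared lengths -/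
def Ph (f : Polynomial ℝ) (Q τ A B : ℝ) : ℝ :=
  if 9 / 16 * Q ≤ A ∧ A ≤ Q ∧ 9 / 16 * Q ≤ B ∧ B ≤ Q then f.eval ((A + B - 4 * τ ^ 2) / (2 * √(A * B))) else 0

/-- two dimensional integrand -/
def JJ (f : Polynomial ℝ) (Q τ : ℝ) (k : ℕ) (p : ℝ × ℝ) : ℝ :=
  √(p.2 - (τ ^ 2 + p.1 ^ 2)) ^ k * Ph f Q τ (p.2 + 2 * τ * p.1) (p.2 - 2 * τ * p.1)

lemma DD_compact {Q w τ : ℝ} (hτ : 1 ≤ τ) : IsCompact (DD Q w τ) := by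
  have hc : IsClosed (DD Q w τ) := by
    have h1 : IsClosed {p : ℝ × ℝ | |2 * τ * p.1| ≤ Q - p.2} := isClosed_le (by fun_prop) (by fun_prop)
    have h2 : IsClosed {p : ℝ × ℝ | Q - p.2 ≤ w} := isClosed_le (by fun_prop) (by fun_prop)
    exact h1.inter h2
  have : DD Q w τ ⊆ Set.Icc (-|w|) |w| ×ˢ Set.Icc (Q - |w|) Q := by
    rintro ⟨ξ, q⟩ ⟨h1, h2⟩
    simp only at h1 h2
    have h3 := abs_nonneg (2 * τ * ξ)
    have h4 := le_abs_self w
    have h5 : |ξ| ≤ |2 * τ * ξ| := by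
      rw [abs_mul, abs_of_nonneg (by linarith : 0 ≤ 2 * τ)]
      have : 1 * |ξ| ≤ (2 * τ) * |ξ| := mul_le_mul_of_nonneg_right (by linarith) (abs_nonneg _)
      linarith
    have h6 := abs_le.1 (h5.trans (h1.trans (h2.trans h4)))
    refine ⟨⟨h6.1, h6.2⟩, ⟨?_, ?_⟩⟩ <;> simp only <;> linarith
  exact (isCompact_Icc.prod isCompact_Icc).of_isClosed_subset hc this

lemma DJ_compact {Q τ : ℝ} (hτ : 1 ≤ τ) : IsCompact (DJ Q τ) := by
  have hc : IsClosed (DJ Q τ) := by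
    have h1 : IsClosed {p : ℝ × ℝ | 9 / 16 * Q ≤ p.2 + 2 * τ * p.1} := isClosed_le (by fun_prop) (by fun_prop)
    have h2 : IsClosed {p : ℝ × ℝ | p.2 + 2 * τ * p.1 ≤ Q} := isClosed_le (by fun_prop) (by fun_prop)
    have h3 : IsClosed {p : ℝ × ℝ | 9 / 16 * Q ≤ p.2 - 2 * τ * p.1} := isClosed_le (by fun_prop) (by fun_prop)
    have h4 : IsClosed {p : ℝ × ℝ | p.2 - 2 * τ * p.1 ≤ Q} := isClosed_le (by fun_prop) (by fun_prop)
    exact h1.inter (h2.inter (h3.inter h4))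
  have : DJ Q τ ⊆ Set.Icc (-|Q|) |Q| ×ˢ Set.Icc (-|Q|) |Q| := by
    rintro ⟨ξ, q⟩ ⟨h1, h2, h3, h4⟩
    simp only at h1 h2 h3 h4
    have hQ0 : 0 ≤ Q := by linarith
    rw [abs_of_nonneg hQ0]
    have h5 : |ξ| ≤ |2 * τ * ξ| := by
      rw [abs_mul, abs_of_nonneg (by linarith : 0 ≤ 2 * τ)]
      have : 1 * |ξ| ≤ (2 * τ) * |ξ| := mul_le_mul_of_nonneg_right (by linarith) (abs_nonneg _)
      linarith
    have h7 : |2 * τ * ξ| ≤ Q := abs_le.2 ⟨by linarith, by linarith⟩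
    have h6 := abs_le.1 (h5.trans h7)
    refine ⟨⟨h6.1, h6.2⟩, ⟨?_, ?_⟩⟩ <;> simp only <;> linarith
  exact (isCompact_Icc.prod isCompact_Icc).of_isClosed_subset hc this

lemma HH_integrable {κ Q w δ c ε τ : ℝ} (hτ : 1 ≤ τ) : Integrable (HH κ Q w δ c ε τ) := by
  unfold HH
  rw [integrable_indicator_iff (DD_compact hτ).measurableSet]
  apply ContinuousOn.integrableOn_compact (DD_compact hτ)
  apply Continuous.continuousOn
  fun_prop

lemma JJ_eq (f : Polynomial ℝ) (Q τ : ℝ) (k : ℕ) : JJ f Q τ k = (DJ Q τ).indicator (fun p => √(p.2 - (τ ^ 2 + p.1 ^ 2)) ^ k *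
    f.eval (((p.2 + 2 * τ * p.1) + (p.2 - 2 * τ * p.1) - 4 * τ ^ 2) / (2 * √((p.2 + 2 * τ * p.1) * (p.2 - 2 * τ * p.1))))) := by
  ext p
  by_cases hp : p ∈ DJ Q τ
  · rw [Set.indicator_of_mem hp, JJ, Ph, if_pos (by exact hp)]
  · rw [Set.indicator_of_notMem hp, JJ, Ph, if_neg (by exact hp), mul_zero]

lemma JJ_integrable (f : Polynomial ℝ) {Q τ : ℝ} (k : ℕ) (hτ : 1 ≤ τ) (hQ : 0 < Q) : Integrable (JJ f Q τ k) := by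
  rw [JJ_eq, integrable_indicator_iff (DJ_compact hτ).measurableSet]
  apply ContinuousOn.integrableOn_compact (DJ_compact hτ)
  apply ContinuousOn.mul
  · apply Continuous.continuousOn; fun_prop
  · apply f.continuous.comp_continuousOn
    apply ContinuousOn.div
    · apply Continuous.continuousOn; fun_prop
    · apply Continuous.continuousOn; fun_prop
    · rintro p ⟨h1, h2, h3, h4⟩
      have h5 : 0 < p.2 + 2 * τ * p.1 := by linarith
      have h6 : 0 < p.2 - 2 * τ * p.1 := by linarith
      have := Real.sqrt_pos.2 (mul_pos h5 h6)
      positivity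

lemma FF_der (c ε a : ℝ) : HasDerivAt (fun a : ℝ => exp (-a) * (a ^ 2 + 2 * a + 2 - 2 * c * (1 + a)) + ε * a ^ 2 / 2)
    (a * (exp (-a) * (2 * c - a) + ε)) a := by
  have h1 : HasDerivAt (fun a : ℝ => exp (-a)) (exp (-a) * (-1)) a := (hasDerivAt_neg a).exp
  have h0 : HasDerivAt (fun a : ℝ => a ^ 2) (2 * a) a := by simpa using hasDerivAt_pow 2 a
  have hid := hasDerivAt_id a
  have h2 : HasDerivAt (fun a : ℝ => a ^ 2 + 2 * a + 2 - 2 * c * (1 + a)) (2 * a + 2 * 1 - 2 * c * 1) a :=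
    ((h0.add (hid.const_mul 2)).add_const 2).sub ((hid.const_add 1).const_mul (2 * c))
  have h3 : HasDerivAt (fun a : ℝ => ε * a ^ 2 / 2) (ε * (2 * a) / 2) a := (h0.const_mul ε).div_const 2
  refine ((h1.mul h2).add h3).congr_deriv ?_
  ring

lemma HH_integral {κ Q X δ c ε τ : ℝ} (hτ : 1 ≤ τ) (hQ : 0 < Q) (hδ : 0 < δ) (hX : 0 < X) :
    ∫ p, HH κ Q (X * Q * δ) δ c ε τ p = κ / τ * (Q * δ) ^ 2 *
      ((exp (-X) * (X ^ 2 + 2 * X + 2 - 2 * c * (1 + X)) + ε * X ^ 2 / 2) - (2 - 2 * c)) := by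
  have hτ0 : 0 < τ := by linarith
  set w := X * Q * δ with hw
  have hw0 : 0 < w := by positivity
  set ψ : ℝ → ℝ := fun q => κ * (exp (-((Q - q) / (Q * δ))) * (2 * c - (Q - q) / (Q * δ)) + ε) with hψ
  have hinner : ∀ q, ∫ ξ, HH κ Q w δ c ε τ (ξ, q) = (Set.Icc (Q - w) Q).indicator (fun q => ψ q * ((Q - q) / τ)) q := by
    intro q
    by_cases hq : q ∈ Set.Icc (Q - w) Q
    · rw [Set.indicator_of_mem hq]
      have h1 : (fun ξ => HH κ Q w δ c ε τ (ξ, q)) = (Set.Icc (-((Q - q) / (2 * τ))) ((Q - q) / (2 * τ))).indicator (fun _ => ψ q) := by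
        ext ξ
        have hiff : (ξ, q) ∈ DD Q w τ ↔ ξ ∈ Set.Icc (-((Q - q) / (2 * τ))) ((Q - q) / (2 * τ)) := by
          rw [Set.mem_Icc, ← abs_le, le_div_iff₀ (by positivity)]
          unfold DD
          simp only [Set.mem_ofPred_eq]
          rw [abs_mul, abs_of_pos (by positivity : 0 < 2 * τ), mul_comm]
          exact ⟨fun h => h.1, fun h => ⟨h, by linarith [hq.1]⟩⟩
        by_cases hξ : (ξ, q) ∈ DD Q w τ
        · rw [Set.indicator_of_mem (hiff.1 hξ), HH, Set.indicator_of_mem hξ]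
        · rw [Set.indicator_of_notMem (fun h => hξ (hiff.2 h)), HH, Set.indicator_of_notMem hξ]
      rw [h1, integral_indicator measurableSet_Icc, setIntegral_const, Real.volume_real_Icc]
      have : 0 ≤ (Q - q) / (2 * τ) - -((Q - q) / (2 * τ)) := by
        have : 0 ≤ (Q - q) / (2 * τ) := div_nonneg (by linarith [hq.2]) (by positivity)
        linarith
      rw [max_eq_left this, smul_eq_mul]
      field_simp; ring
    · rw [Set.indicator_of_notMem hq]
      rw [← integral_zero ℝ ℝ]
      congr 1
      ext ξ
      rw [HH, Set.indicator_of_notMem]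
      rintro ⟨h1, h2⟩
      simp only at h1 h2
      apply hq
      have := abs_nonneg (2 * τ * ξ)
      exact ⟨by linarith, by linarith⟩
  have hIntg : Integrable (HH κ Q w δ c ε τ) (volume.prod volume) := HH_integrable hτ
  rw [Measure.volume_eq_prod, integral_prod_symm _ hIntg]
  simp_rw [hinner]
  rw [integral_indicator measurableSet_Icc, integral_Icc_eq_integral_Ioc, ← intervalIntegral.integral_of_le (by linarith)]
  set G : ℝ → ℝ := fun q => -(κ / τ * (Q * δ) ^ 2) * (exp (-((Q - q) / (Q * δ))) * (((Q - q) / (Q * δ)) ^ 2 + 2 * ((Q - q) / (Q * δ)) + 2 - 2 * c * (1 + (Q - q) / (Q * δ)))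
    + ε * ((Q - q) / (Q * δ)) ^ 2 / 2) with hG
  have hder : ∀ q ∈ Set.uIcc (Q - w) Q, HasDerivAt G (ψ q * ((Q - q) / τ)) q := by
    intro q _
    have ha : HasDerivAt (fun q : ℝ => (Q - q) / (Q * δ)) (-1 / (Q * δ)) q := ((hasDerivAt_id q).const_sub Q).div_const _
    have h := ((FF_der c ε ((Q - q) / (Q * δ))).comp q ha).const_mul (-(κ / τ * (Q * δ) ^ 2))
    refine h.congr_deriv ?_
    simp only [hψ]
    have hQδ : Q * δ ≠ 0 := by positivity
    generalize exp (-((Q - q) / (Q * δ))) = E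
    field_simp
  rw [intervalIntegral.integral_eq_sub_of_hasDerivAt hder (by
    apply Continuous.intervalIntegrable
    rw [hψ]; fun_prop)]
  simp only [hG]
  have e1 : (Q - (Q - w)) / (Q * δ) = X := by rw [hw]; field_simp; ring
  rw [e1]
  simp
  ring

lemma JJ_le {f : Polynomial ℝ} {κ Q X δ c ε τ : ℝ} {k : ℕ} (hτ : 1 ≤ τ) (hQ : 0 < Q) (hδ : 0 < δ) (hX : 0 < X) (hκ : 0 ≤ κ)
    (hXc : exp (-X) * (X ^ 2 + 2 * X + 2 - 2 * c * (1 + X)) + ε * X ^ 2 / 2 ≤ 2 - 2 * c)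
    (hle : ∀ p, JJ f Q τ k p ≤ HH κ Q (X * Q * δ) δ c ε τ p) :
    ∫ ξ, ∫ q, JJ f Q τ k (ξ, q) ≤ 0 := by
  have hIntg : Integrable (JJ f Q τ k) (volume.prod volume) := JJ_integrable f k hτ hQ
  rw [← integral_prod _ hIntg, ← Measure.volume_eq_prod]
  refine (integral_mono (JJ_integrable f k hτ hQ) (HH_integrable hτ) hle).trans ?_
  rw [HH_integral hτ hQ hδ hX]
  exact mul_nonpos_of_nonneg_of_nonpos (by positivity) (by linarith)
end Int2
end SPB

namespace SPB
section Neg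

local notation "𝔼" n => EuclideanSpace ℝ (Fin n)

lemma inner_T {n : ℕ} (z w : 𝔼 n) {τ : ℝ} (hw : ‖w‖ = 2 * τ) :
    inner ℝ z (z - w) / (‖z‖ * ‖z - w‖) = (‖z‖ ^ 2 + ‖z - w‖ ^ 2 - 4 * τ ^ 2) / (2 * √(‖z‖ ^ 2 * ‖z - w‖ ^ 2)) := by
  have h1 := norm_sub_sq_real z (z - w)
  rw [sub_sub_cancel, hw] at h1
  have h2 : √(‖z‖ ^ 2 * ‖z - w‖ ^ 2) = ‖z‖ * ‖z - w‖ := by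
    rw [← mul_pow, Real.sqrt_sq (by positivity)]
  have h3 : ‖z‖ ^ 2 + ‖z - w‖ ^ 2 - 4 * τ ^ 2 = 2 * inner ℝ z (z - w) := by linarith
  rw [h2, h3, mul_div_mul_left _ _ two_ne_zero]

lemma Shl_iff {n : ℕ} (z : 𝔼 n) {R Q : ℝ} (hR : 0 < R) (hQ : R ^ 2 = Q) :
    z ∈ Shl n (3 / 4 * R) R ↔ 9 / 16 * Q ≤ ‖z‖ ^ 2 ∧ ‖z‖ ^ 2 ≤ Q := by
  have e : 9 / 16 * Q = (3 / 4 * R) ^ 2 := by rw [← hQ]; ring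
  rw [e, ← hQ, pow_le_pow_iff_left₀ (by positivity) (norm_nonneg _) two_ne_zero,
    pow_le_pow_iff_left₀ (norm_nonneg _) hR.le two_ne_zero]
  rfl

lemma kk_Ph {n : ℕ} (f : Polynomial ℝ) (z w : 𝔼 n) {τ R Q : ℝ} (hw : ‖w‖ = 2 * τ) (hR : 0 < R) (hQ : R ^ 2 = Q) :
    kk f (3 / 4 * R) R z (z - w) = Ph f Q τ (‖z‖ ^ 2) (‖z - w‖ ^ 2) := by
  by_cases h : z ∈ Shl n (3 / 4 * R) R ∧ z - w ∈ Shl n (3 / 4 * R) R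
  · have h' := h
    rw [Shl_iff z hR hQ, Shl_iff (z - w) hR hQ] at h'
    rw [kk, if_pos h, Ph, if_pos ⟨h'.1.1, h'.1.2, h'.2.1, h'.2.2⟩, inner_T z w hw]
  · have h' := h
    rw [Shl_iff z hR hQ, Shl_iff (z - w) hR hQ] at h'
    rw [kk, if_neg h, Ph, if_neg (fun h'' => h' ⟨⟨h''.1, h''.2.1⟩, ⟨h''.2.2.1, h''.2.2.2⟩⟩)]

lemma kk_nonpos {n : ℕ} (f : Polynomial ℝ) (w : 𝔼 n) {τ R Q s : ℝ} (hw : ‖w‖ = 2 * τ) (hR : 0 < R) (hQ : R ^ 2 = Q)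
    (hf : ∀ t, -1 ≤ t → t ≤ s → f.eval t ≤ 0)
    (hT : ∀ A B, 9 / 16 * Q ≤ A → A ≤ Q → 9 / 16 * Q ≤ B → B ≤ Q → (A + B - 4 * τ ^ 2) / (2 * √(A * B)) ≤ s) :
    ∫ z, kk f (3 / 4 * R) R z (z - w) ≤ 0 := by
  apply integral_nonpos
  intro z
  simp only [Pi.zero_apply]
  by_cases h : z ∈ Shl n (3 / 4 * R) R ∧ z - w ∈ Shl n (3 / 4 * R) R
  · have h' := h
    rw [Shl_iff z hR hQ, Shl_iff (z - w) hR hQ] at h'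
    rw [kk, if_pos h]
    apply hf
    · exact (abs_le.1 (abs_real_inner_div_norm_mul_norm_le_one z (z - w))).1
    · rw [inner_T z w hw]; exact hT _ _ h'.1.1 h'.1.2 h'.2.1 h'.2.2
  · rw [kk, if_neg h]

lemma JJ_far {f : Polynomial ℝ} {c δ X Q C τ s : ℝ} {k : ℕ} (hk : k ≠ 0) (hδ : 0 < δ) (hX : 12 ≤ X) (hs : X * δ ≤ 1) (hc0 : 0 < c) (hc1 : c < 1)
    (hC0 : 0 ≤ C) (hC1 : C ≤ 1 / 2) (hCs : C ≤ s) (hQ2 : 2 ≤ Q) (hQ : Q * (1 - C) = 2 * (1 + c * δ) ^ 2)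
    (hτ1 : 1 ≤ τ) (hf : ∀ t, -1 ≤ t → t ≤ s → f.eval t ≤ 0) (p : ℝ × ℝ) (hp : p ∈ DJ Q τ) (hfar : X * Q * δ < Q - p.2) :
    JJ f Q τ k p ≤ 0 := by
  obtain ⟨ξ, q⟩ := p
  rw [JJ_eq, Set.indicator_of_mem hp]
  simp only at hfar ⊢
  obtain ⟨h1, h2, h3, h4⟩ := hp
  simp only at h1 h2 h3 h4
  rcases le_or_gt (q - (τ ^ 2 + ξ ^ 2)) 0 with hm | hm
  · rw [Real.sqrt_eq_zero'.2 hm, zero_pow hk, zero_mul]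
  · apply mul_nonpos_of_nonneg_of_nonpos (by positivity)
    set A := q + 2 * τ * ξ with hA
    set B := q - 2 * τ * ξ with hB
    have hA0 : 0 < A := by linarith
    have hB0 : 0 < B := by linarith
    have hS : 0 < √(A * B) := Real.sqrt_pos.2 (mul_pos hA0 hB0)
    apply hf
    · have hsq : (A + B - 4 * τ ^ 2) ^ 2 ≤ 4 * (A * B) := by
        have e : 4 * (A * B) - (A + B - 4 * τ ^ 2) ^ 2 = 16 * τ ^ 2 * (q - (τ ^ 2 + ξ ^ 2)) := by rw [hA, hB]; ring
        have : 0 ≤ 16 * τ ^ 2 * (q - (τ ^ 2 + ξ ^ 2)) := by positivity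
        linarith
      have h5 := Real.abs_le_sqrt hsq
      have h6 : √(4 * (A * B)) = 2 * √(A * B) := by
        rw [Real.sqrt_mul (by norm_num), show (4:ℝ) = 2 ^ 2 by norm_num, Real.sqrt_sq (by norm_num)]
      rw [h6] at h5
      rw [le_div_iff₀ (by positivity)]
      linarith [(abs_le.1 h5).1]
    · refine le_trans ?_ hCs
      have hsum : A + B ≤ 2 * Q * (1 - X * δ) := by rw [hA, hB]; linarith
      rcases le_total B A with h | h
      · exact T_far hδ hX hs hc0 hc1 hC0 hC1 hQ2 hQ hτ1 h1 h2 h3 h hsum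
      · have := T_far hδ hX hs hc0 hc1 hC0 hC1 hQ2 hQ hτ1 h3 h4 h1 h (by linarith)
        rwa [add_comm, mul_comm A B]

lemma exists_X (c : ℝ) (hc : c < 1) : ∃ X : ℝ, 12 ≤ X ∧ exp (-X) * (X ^ 2 + 2 * X + 2) ≤ 1 - c := by
  have h2 := Real.tendsto_pow_mul_exp_neg_atTop_nhds_zero 2
  have h1 := (Real.tendsto_pow_mul_exp_neg_atTop_nhds_zero 1).const_mul 2
  have h0 := (Real.tendsto_pow_mul_exp_neg_atTop_nhds_zero 0).const_mul 2
  have h := (h2.add h1).add h0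
  simp only [mul_zero, add_zero] at h
  have h3 := (h.eventually (ge_mem_nhds (by linarith : (0:ℝ) < 1 - c))).and (eventually_ge_atTop 12)
  obtain ⟨X, hX, hX12⟩ := h3.exists
  refine ⟨X, hX12, le_trans (le_of_eq ?_) hX⟩
  ring

set_option maxHeartbeats 1000000 in
theorem h_neg (c : ℝ) (hc0 : 0 < c) (hc1 : c < 1) : ∃ n0 : ℕ, 1000 ≤ n0 ∧ ∀ n : ℕ, n0 ≤ n → ∀ (d e : ℕ) (C s R : ℝ), 1 ≤ d → e ≤ 1 → 0 ≤ C → C ≤ 1 / 2 →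
    C ≤ s → (∀ k < d, 0 < (Hp n k).eval s) → (Yp n d e).eval s = 0 → 0 < R → R ^ 2 * (1 - C) = 2 * (1 + c / n) ^ 2 →
    ∀ f q : Polynomial ℝ, (Polynomial.X - Polynomial.C s) * q = Yp n d e → 0 < q.eval s → f = (1 + Polynomial.X) ^ e * Yp n d e * q →
    ∀ w : 𝔼 n, 2 ≤ ‖w‖ → ∫ z, kk f (3 / 4 * R) R z (z - w) ≤ 0 := by
  obtain ⟨X, hX, hXc⟩ := exists_X c hc1
  have hX0 : 0 < X := by linarith
  set ε := (1 - c) / X ^ 2 with hε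
  have hε0 : 0 < ε := div_pos (by linarith) (by positivity)
  have hε1 : ε ≤ 1 := by
    rw [hε, div_le_one (by positivity)]; nlinarith
  obtain ⟨n1, hn1, hloc⟩ := local_f (ε / (24 * X)) (6 * X) (by positivity) (by positivity)
  obtain ⟨n2, hn2⟩ := exists_nat_ge (1000 * X ^ 4 + 20000 * X ^ 5 / ε)
  refine ⟨max n1 n2, hn1.trans (le_max_left _ _), ?_⟩
  intro n hn d e C s R hd he hC0 hC1 hCs hpos hY hR hRC f q hq hqs hf w hw
  have hnn1 : n1 ≤ n := (le_max_left _ _).trans hn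
  have hn1000 : 1000 ≤ n := hn1.trans hnn1
  have hnn2 : 1000 * X ^ 4 + 20000 * X ^ 5 / ε ≤ (n : ℝ) := hn2.trans (by exact_mod_cast (le_max_right _ _).trans hn)
  have hnR : (0 : ℝ) < n := by exact_mod_cast (by omega : 0 < n)
  set δ : ℝ := 1 / n with hδdef
  have hδ : 0 < δ := by positivity
  have hnδ : n * δ = 1 := by rw [hδdef]; field_simp
  have hcn : c / n = c * δ := by rw [hδdef]; ring
  have h2n : ∀ b : ℝ, b / n = b * δ := fun b => by rw [hδdef]; ring
  rw [hcn] at hRC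
  have hs1 : 1000 * X ^ 4 * δ ≤ 1 := by
    have : 1000 * X ^ 4 ≤ (n : ℝ) := by
      have : 0 ≤ 20000 * X ^ 5 / ε := by positivity
      linarith
    calc 1000 * X ^ 4 * δ ≤ n * δ := mul_le_mul_of_nonneg_right this hδ.le
      _ = 1 := hnδ
  have hs2 : 5000 * X ^ 5 * δ ≤ ε / 4 := by
    have : 20000 * X ^ 5 / ε ≤ (n : ℝ) := by
      have : 0 ≤ 1000 * X ^ 4 := by positivity
      linarith
    rw [div_le_iff₀ hε0] at this
    have h3 := mul_le_mul_of_nonneg_right this hδ.le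
    have h4 : n * ε * δ = ε := by linear_combination ε * hnδ
    linarith
  set Q := R ^ 2 with hQdef
  have hQ0 : 0 < Q := by positivity
  have hδ1 : δ ≤ 1 / 1000 := by
    rw [hδdef]
    exact one_div_le_one_div_of_le (by norm_num) (by exact_mod_cast hn1000)
  have hcd : c * δ ≤ δ := mul_le_of_le_one_left hδ.le hc1.le
  have hcd0 : 0 < c * δ := by positivity
  have hk1 : 1 ≤ (1 + c * δ) ^ 2 := one_le_pow₀ (by linarith)
  have hk2 : (1 + c * δ) ^ 2 ≤ (1 + δ) ^ 2 := pow_le_pow_left₀ (by linarith) (by linarith) 2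
  have hk3 : (1 + δ) ^ 2 ≤ (1 + 1 / 1000) ^ 2 := pow_le_pow_left₀ (by linarith) (by linarith) 2
  have hQ2k : 2 * (1 + c * δ) ^ 2 ≤ Q := by
    rw [← hRC]; nlinarith only [hQ0, hC0]
  have hQ2 : 2 ≤ Q := by linarith
  have hQ5 : Q ≤ 5 := by
    have : Q * (1 / 2) ≤ Q * (1 - C) := mul_le_mul_of_nonneg_left (by linarith) hQ0.le
    linarith
  have hXd1 : X * δ ≤ 1 / 1000 := by
    have : X ≤ X ^ 4 := le_self_pow₀ (by linarith) (by norm_num)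
    have := mul_le_mul_of_nonneg_right this hδ.le
    linarith
  have hfn : ∀ t, -1 ≤ t → t ≤ s → f.eval t ≤ 0 := fun t h1 h2 => f_nonpos hq hf h1 h2
  set τ := ‖w‖ / 2 with hτdef
  have hwτ : ‖w‖ = 2 * τ := by rw [hτdef]; ring
  have hτ1 : 1 ≤ τ := by linarith
  have hτ0 : 0 < τ := by linarith
  rcases lt_or_ge (C + 2 * δ) s with hsC | hsC
  · refine kk_nonpos f w hwτ hR hQdef.symm hfn fun A B hA1 hA2 hB1 hB2 => le_trans ?_ hsC.le
    refine T_near hQ0 (by positivity) (by linarith) hA1 hA2 hB1 hB2 ?_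
    have h1 : Q * (1 - (C + 2 * δ)) = 2 * (1 + c * δ) ^ 2 - 2 * δ * Q := by rw [← hRC]; ring
    have h2 : 2 * δ * (2 * (1 + c * δ) ^ 2) ≤ 2 * δ * Q := mul_le_mul_of_nonneg_left hQ2k (by positivity)
    have h3 : (1 + c * δ) ^ 2 * (1 - 2 * δ) ≤ (1 + δ) ^ 2 * (1 - 2 * δ) := mul_le_mul_of_nonneg_right hk2 (by linarith)
    have h4 : (1 + δ) ^ 2 * (1 - 2 * δ) = 1 - 3 * δ ^ 2 - 2 * δ ^ 3 := by ring
    have h5 : 0 < δ ^ 2 := by positivity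
    have h6 : 0 < δ ^ 3 := by positivity
    have h7 : 1 ≤ τ ^ 2 := one_le_pow₀ hτ1
    rw [h1]; linarith
  rcases le_or_gt (1 + c * δ) τ with hτ2 | hτ2
  · refine kk_nonpos f w hwτ hR hQdef.symm hfn fun A B hA1 hA2 hB1 hB2 => le_trans ?_ hCs
    refine T_near hQ0 hC0 (by linarith) hA1 hA2 hB1 hB2 ?_
    rw [hRC]
    have := pow_le_pow_left₀ (by linarith) hτ2 2
    linarith
  -- main case
  obtain ⟨K, hK, hKl⟩ := hloc n hnn1 d e C s hd he hC0 hC1 hCs (by rw [h2n]; exact hsC) hpos hY f q hq hqs hf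
  have hker : (fun z : 𝔼 n => kk f (3 / 4 * R) R z (z - w)) = fun z => Ph f Q τ (‖z‖ ^ 2) (‖z - w‖ ^ 2) := by
    ext z; exact kk_Ph f z w hwτ hR hQdef.symm
  have hIntg := kk_integrable f (3 / 4 * R) R w
  rw [hker] at hIntg ⊢
  obtain ⟨κ, hκ, heq⟩ := split_integral (E := 𝔼 n) (n - 3) (by omega) (by rw [finrank_euclideanSpace_fin]; omega) (Ph f Q τ) w τ hτ0 hwτ hIntg
  rw [heq]
  apply mul_nonpos_of_nonneg_of_nonpos hκ
  change ∫ ξ, ∫ q, JJ f Q τ (n - 3) (ξ, q) ≤ 0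
  set κ2 := (Q / (2 * τ)) ^ n / √(Q - 1) ^ 3 * (K * δ) * (1 - C) with hκ2
  have hκ20 : 0 ≤ κ2 := by
    have : 0 ≤ 1 - C := by linarith
    positivity
  refine JJ_le (κ := κ2) (X := X) (δ := δ) (c := c) (ε := ε) hτ1 hQ0 hδ hX0 hκ20 ?_ ?_
  · have h1 : ε * X ^ 2 = 1 - c := by rw [hε]; field_simp
    have h2 : 0 ≤ exp (-X) * (2 * c * (1 + X)) := by positivity
    linarith
  · intro p
    by_cases hp : p ∈ DJ Q τ
    · by_cases hfar : X * Q * δ < Q - p.2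
      · have : p ∉ DD Q (X * Q * δ) τ := fun h => absurd h.2 (not_le.2 hfar)
        rw [HH, Set.indicator_of_notMem this]
        exact JJ_far (by omega) hδ hX (by linarith) hc0 hc1 hC0 hC1 hCs hQ2 hRC hτ1 hfn p hp hfar
      · push Not at hfar
        obtain ⟨ξ, q'⟩ := p
        simp only at hfar
        obtain ⟨h1, h2, h3, h4⟩ := hp
        simp only at h1 h2 h3 h4
        have hu : |2 * τ * ξ| ≤ Q - q' := abs_le.2 ⟨by linarith, by linarith⟩
        have hD : (ξ, q') ∈ DD Q (X * Q * δ) τ := ⟨hu, hfar⟩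
        have hDJ : (ξ, q') ∈ DJ Q τ := ⟨h1, h2, h3, h4⟩
        rw [HH, Set.indicator_of_mem hD, JJ_eq, Set.indicator_of_mem hDJ]
        simp only
        set a := (Q - q') / (Q * δ) with ha
        have hQδ : 0 < Q * δ := by positivity
        have haQ : Q * a * δ = Q - q' := by rw [ha]; field_simp
        have ha0 : 0 ≤ a := div_nonneg (le_trans (abs_nonneg _) hu) hQδ.le
        have haX : a ≤ X := by rw [ha, div_le_iff₀ hQδ]; linarith
        have hqa : q' = Q * (1 - a * δ) := by linarith
        have huu : |2 * τ * ξ| ≤ Q * a * δ := by rw [haQ]; exact hu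
        have hTe : ((q' + 2 * τ * ξ) + (q' - 2 * τ * ξ) - 4 * τ ^ 2) / (2 * √((q' + 2 * τ * ξ) * (q' - 2 * τ * ξ))) =
            (q' - 2 * τ ^ 2) / √(q' ^ 2 - (2 * τ * ξ) ^ 2) := by
          have e1 : (q' + 2 * τ * ξ) + (q' - 2 * τ * ξ) - 4 * τ ^ 2 = 2 * (q' - 2 * τ ^ 2) := by ring
          have e2 : (q' + 2 * τ * ξ) * (q' - 2 * τ * ξ) = q' ^ 2 - (2 * τ * ξ) ^ 2 := by ring
          rw [e1, e2, mul_div_mul_left _ _ two_ne_zero]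
        rw [hTe]
        obtain ⟨hT1, hT2⟩ := est_T hδ hX hs1 hc0 hc1 hC0 hC1 hQ2 hQ5 hRC hτ1 hτ2.le ha0 haX hqa huu
        have hTs : |(q' - 2 * τ ^ 2) / √(q' ^ 2 - (2 * τ * ξ) ^ 2) - s| ≤ 6 * X / n := by
          rw [h2n]
          have e3 : (q' - 2 * τ ^ 2) / √(q' ^ 2 - (2 * τ * ξ) ^ 2) - s =
            ((q' - 2 * τ ^ 2) / √(q' ^ 2 - (2 * τ * ξ) ^ 2) - C) - (s - C) := by ring
          rw [e3]
          refine (abs_sub _ _).trans ?_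
          rw [abs_of_nonneg (by linarith : 0 ≤ s - C)]
          have : 12 * δ ≤ X * δ := mul_le_mul_of_nonneg_right hX hδ.le
          linarith
        exact pt_in (s := s) (ε0 := ε / (24 * X)) (K := K) (by omega) hδ hnδ hX hs1 hc0 hc1 hC0 hC1 hQ2 hQ5 hRC hτ1 hτ2.le ha0 haX hqa huu rfl
          hCs hsC hε0 hε1 (by field_simp; norm_num) hs2 hK (hKl _ hTs)
    · have hnot : p ∉ DD Q (X * Q * δ) τ := by
        rintro ⟨h1, h2⟩
        apply hp
        have h3 := abs_le.1 h1
        have h4 : X * Q * δ ≤ 1 / 1000 * Q := by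
          have := mul_le_mul_of_nonneg_right hXd1 hQ0.le
          linarith
        exact ⟨by linarith, by linarith, by linarith, by linarith⟩
      rw [HH, Set.indicator_of_notMem hnot, JJ_eq, Set.indicator_of_notMem hp]
end Neg
end SPB

namespace SPB

lemma MLev_pos {n : ℕ} (hn : 1 ≤ n) (θ : ℝ) : 0 < MLev n θ := by
  have h : 0 < (Nat.choose (levD n θ + n - 1) (n - 1) : ℝ) := by
    exact_mod_cast Nat.choose_pos (by omega)
  unfold MLev
  split_ifs <;> positivity

lemma ratio_bound (θ : ℝ) (hθ1 : π / 3 ≤ θ) (hθ2 : θ ≤ π / 2) (c : ℝ) (hc0 : 0 < c) (hc1 : c < 1) :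
    ∀ᶠ n : ℕ in atTop, 0 ≤ spherePackingConst n / deltaKL n θ ∧
      spherePackingConst n / deltaKL n θ ≤ ((1 + c / n) ^ n * (1 - (3 / 4 : ℝ) ^ n))⁻¹ := by
  obtain ⟨n0, hn0, H⟩ := h_neg c hc0 hc1
  filter_upwards [eventually_ge_atTop n0] with n hn
  have hn1 : 1000 ≤ n := by omega
  have hpi := Real.pi_pos
  have hC0 : 0 ≤ cos θ := cos_nonneg_of_neg_pi_div_two_le_of_le (by linarith) hθ2
  have hC1 : cos θ ≤ 1 / 2 := by
    rw [← cos_pi_div_three]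
    exact cos_le_cos_of_nonneg_of_le_pi (by linarith) (by linarith) hθ1
  have hS : 0 < sin (θ / 2) := sin_pos_of_pos_of_lt_pi (by linarith) (by linarith)
  have hSC : 1 - cos θ = 2 * sin (θ / 2) ^ 2 := by
    have h1 := cos_sq' (θ / 2)
    have h2 := cos_sq (θ / 2)
    rw [mul_div_cancel₀ _ (two_ne_zero)] at h2
    linarith
  have hcn : 0 < 1 + c / (n : ℝ) := by positivity
  set S := sin (θ / 2) with hSdef
  set R := (1 + c / (n : ℝ)) / S with hRdef
  have hR : 0 < R := by positivity
  have hRC : R ^ 2 * (1 - cos θ) = 2 * (1 + c / n) ^ 2 := by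
    rw [hSC, hRdef]; field_simp
  obtain ⟨d, e, s, hd, he, hCs, hs1, hY, hpos, hM⟩ := lev_data hn1 θ hC1
  obtain ⟨f, q, hf, h0, h1, hq, hqs, hfe⟩ := lev_poly (by omega) hd he s hs1 hpos hY
  rw [← hM] at h1
  have hMp : 0 < MLev n θ := MLev_pos (by omega) θ
  have hneg := H n hn d e (cos θ) s R hd he hC0 hC1 hCs hpos hY hR hRC f q hq hqs hfe
  obtain ⟨hb0, hb1⟩ := density_bound (by omega) hf h0 (by rw [h1]; positivity) (3 / 4 * R) R (by positivity)
    (by linarith) hneg (MLev n θ) h1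
  have hK : 0 < deltaKL n θ := by
    unfold deltaKL; positivity
  refine ⟨by positivity, ?_⟩
  rw [div_le_iff₀ hK]
  refine hb1.trans (le_of_eq ?_)
  have h34 : (3 / 4 : ℝ) ^ n < 1 := pow_lt_one₀ (by norm_num) (by norm_num) (by omega)
  have h34' : 1 - (3 / 4 : ℝ) ^ n ≠ 0 := by linarith
  have hSn : S ^ n ≠ 0 := by positivity
  have hcn' : (1 + c / (n : ℝ)) ^ n ≠ 0 := by positivity
  have key : ∀ A B D M : ℝ, A ≠ 0 → B ≠ 0 → D ≠ 0 → M / (D * (A / B)) = (A * D)⁻¹ * (B * M) := by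
    intro A B D M hA hB hD
    field_simp
  have hRn : R ^ n = (1 + c / (n : ℝ)) ^ n / S ^ n := by rw [hRdef, div_pow]
  rw [mul_pow, ← one_sub_mul, hRn, deltaKL]
  exact key _ _ _ _ hcn' hSn h34'

lemma limsup_c (θ : ℝ) (hθ1 : π / 3 ≤ θ) (hθ2 : θ ≤ π / 2) (c : ℝ) (hc0 : 0 < c) (hc1 : c < 1) :
    limsup (fun n : ℕ => spherePackingConst n / deltaKL n θ) atTop ≤ Real.exp (-c) := by
  have hb := ratio_bound θ hθ1 hθ2 c hc0 hc1
  have ht : Tendsto (fun n : ℕ => ((1 + c / n) ^ n * (1 - (3 / 4 : ℝ) ^ n))⁻¹) atTop (nhds (Real.exp (-c))) := by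
    have h1 := Real.tendsto_one_add_div_pow_exp c
    have h2 : Tendsto (fun n : ℕ => 1 - (3 / 4 : ℝ) ^ n) atTop (nhds (1 - 0)) :=
      tendsto_const_nhds.sub (tendsto_pow_atTop_nhds_zero_of_lt_one (by norm_num) (by norm_num))
    have h3 := (h1.mul h2).inv₀ (by simp [Real.exp_ne_zero])
    rw [Real.exp_neg]
    simpa using h3
  rw [← ht.limsup_eq]
  refine limsup_le_limsup (hb.mono fun n h => h.2) ?_ ht.isBoundedUnder_le
  exact isCoboundedUnder_le_of_eventually_le atTop (hb.mono fun n h => h.1)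

end SPB

/-- For fixed `θ ∈ [π/3, π/2]`,
`δ_n ≤ (1+o(1))·e⁻¹·δ_n^{KL}(θ)`; equivalently
`limsup_{n→∞} δ_n / δ_n^{KL}(θ) ≤ 1/e`. -/
theorem sphere_packing_bound_improvement
    (θ : ℝ) (hθ1 : π / 3 ≤ θ) (hθ2 : θ ≤ π / 2) :
    limsup (fun n : ℕ => spherePackingConst n / deltaKL n θ) atTop ≤ 1 / Real.exp 1 := by
  rw [one_div, ← Real.exp_neg]
  have ht : Tendsto (fun c : ℝ => Real.exp (-c)) (nhdsWithin 1 (Set.Iio 1)) (nhds (Real.exp (-1))) :=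
    (Continuous.tendsto (by fun_prop) 1).mono_left nhdsWithin_le_nhds
  refine ge_of_tendsto ht ?_
  filter_upwards [Ioo_mem_nhdsLT (zero_lt_one (α := ℝ))] with c hc
  exact SPB.limsup_c θ hθ1 hθ2 c hc.1 hc.2
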